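/- arXiv:2602.08807 — 16 statements merged into one kernel-verified Lean document; each statement's English description precedes it below -/
import Mathlib

section
/- For every positive integer N, the set {n² : n ∈ ℕ, N ≤ n and (n : ℝ) < N + √(8N+8) + 2} is a Sidon set; that is, whenever x, y, z, t are positive integers with N ≤ x, y, z, t, each less than N + √(8N+8) + 2 (as reals), and x² + y² = z² + t², then {x, y} = {z, t}. -/
/-! Let `a ^ 2 + b ^ 2 = c ^ 2 + d ^ 2` with `a < c` and `a < d`. The pair `c, d` is less spread
out than `a, b`, so `a + b < c + d`; both sums have the same parity, so `a + b + 2 ≤ c + d`.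
Substituting this in `(a + b) ^ 2 + (b - a) ^ 2 = (c + d) ^ 2 + (c - d) ^ 2` gives
`8 * a + 8 ≤ (b - a - 2) ^ 2`, so `b` is at least `a + √(8 * a + 8) + 2`. In an interval shorter
than this, pairs with equal sums of squares therefore have equal minima, and so coincide. -/

section OrderedRing

variable {R : Type*} [CommRing R] [LinearOrder R] [IsStrictOrderedRing R] {a b c d : R}

lemma add_lt_add_of_sq_add_sq_eq (hac : a < c) (had : a < d) (hcd : 0 ≤ c + d)
    (h : a ^ 2 + b ^ 2 = c ^ 2 + d ^ 2) : a + b < c + d := by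
  by_contra! hle
  have hspread : (c - d) ^ 2 < (b - a) ^ 2 := sq_lt_sq' (by linarith) (by linarith)
  have hsum : (a + b) ^ 2 < (c + d) ^ 2 := by linarith
  exact hle.not_gt (lt_of_pow_lt_pow_left₀ 2 hcd hsum)

lemma eight_mul_add_eight_le_sq_of_add_add_two_le (hab : 0 ≤ a + b + 2)
    (hsum : a + b + 2 ≤ c + d) (h : a ^ 2 + b ^ 2 = c ^ 2 + d ^ 2) :
    8 * a + 8 ≤ (b - a - 2) ^ 2 := by
  have hsq : (a + b + 2) ^ 2 ≤ (c + d) ^ 2 := pow_le_pow_left₀ hab hsum 2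
  linarith [sq_nonneg (c - d)]

end OrderedRing

lemma even_add_iff_even_add_of_sq_add_sq_eq {a b c d : ℤ} (h : a ^ 2 + b ^ 2 = c ^ 2 + d ^ 2) :
    Even (a + b) ↔ Even (c + d) := by
  simpa [Int.even_add, Int.even_pow] using congrArg Even h

lemma add_add_two_le_of_sq_add_sq_eq {a b c d : ℤ} (hac : a < c) (had : a < d)
    (hcd : 0 ≤ c + d) (h : a ^ 2 + b ^ 2 = c ^ 2 + d ^ 2) : a + b + 2 ≤ c + d := by
  have hlt : a + b < c + d := add_lt_add_of_sq_add_sq_eq hac had hcd h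
  have hparity : Even (a + b) ↔ Even (c + d) := even_add_iff_even_add_of_sq_add_sq_eq h
  grind

lemma add_sqrt_add_two_le_of_sq_add_sq_eq {a b c d : ℕ} (hac : a < c) (had : a < d)
    (h : a ^ 2 + b ^ 2 = c ^ 2 + d ^ 2) : (a : ℝ) + √(8 * a + 8) + 2 ≤ b := by
  have hsq_lt : a ^ 2 < d ^ 2 := Nat.pow_lt_pow_left had two_ne_zero
  have hcb : c < b := lt_of_pow_lt_pow_left₀ 2 b.zero_le (by lia)
  have hsum : a + b + 2 ≤ c + d := mod_cast
    add_add_two_le_of_sq_add_sq_eq (a := a) (b := b) (c := c) (d := d)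
      (mod_cast hac) (mod_cast had) (by positivity) (mod_cast h)
  have hgap : (8 * a + 8 : ℝ) ≤ (b - a - 2) ^ 2 :=
    eight_mul_add_eight_le_sq_of_add_add_two_le (c := (c : ℝ)) (d := d)
      (by positivity) (mod_cast hsum) (mod_cast h)
  have hab : (a : ℝ) + 2 ≤ b := mod_cast (show a + 2 ≤ b by lia)
  have hsqrt : √(8 * a + 8) ≤ (b : ℝ) - a - 2 := Real.sqrt_le_iff.2 ⟨by linarith, hgap⟩
  linarith

lemma min_le_min_of_lt_add_sqrt {N : ℝ} {x y z t : ℕ} (hxN : N ≤ x) (hyN : N ≤ y)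
    (hxU : (x : ℝ) < N + √(8 * N + 8) + 2) (hyU : (y : ℝ) < N + √(8 * N + 8) + 2)
    (h : x ^ 2 + y ^ 2 = z ^ 2 + t ^ 2) : min z t ≤ min x y := by
  by_contra! hlt
  obtain ⟨hz, ht⟩ := lt_min_iff.1 hlt
  have hN : N ≤ (min x y : ℕ) := by simp [hxN, hyN]
  have hU : ((max x y : ℕ) : ℝ) < N + √(8 * N + 8) + 2 := by simp [hxU, hyU]
  refine hU.not_ge ?_
  calc N + √(8 * N + 8) + 2 ≤ (min x y : ℕ) + √(8 * (min x y : ℕ) + 8) + 2 := by gcongr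
    _ ≤ (max x y : ℕ) :=
      add_sqrt_add_two_le_of_sq_add_sq_eq hz ht ((fn_min_add_fn_max (· ^ 2) x y).trans h)

lemma pair_eq_pair_of_min_eq_of_max_eq {α : Type*} [LinearOrder α] {x y z t : α}
    (hmin : min x y = min z t) (hmax : max x y = max z t) : ({x, y} : Finset α) = {z, t} := by
  grind

lemma max_eq_max_of_add_eq_add {α β : Type*} [LinearOrder α] [AddCommSemigroup β]
    [IsLeftCancelAdd β] {f : α → β} (hf : Function.Injective f) {x y z t : α}
    (hmin : min x y = min z t) (h : f x + f y = f z + f t) : max x y = max z t := by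
  rw [← fn_min_add_fn_max f x y, ← fn_min_add_fn_max f z t, hmin] at h
  exact hf (add_left_cancel h)

/-- For every positive integer `N`, the set `{n² : N ≤ n, (n : ℝ) < N + √(8N+8) + 2}`
is a Sidon set. -/
theorem squares_sidon_in_short_interval (N : ℕ) (hN : 0 < N)
    (x y z t : ℕ) (hx : 0 < x) (hy : 0 < y) (hz : 0 < z) (ht : 0 < t)
    (hxN : N ≤ x) (hyN : N ≤ y) (hzN : N ≤ z) (htN : N ≤ t)
    (hxU : (x : ℝ) < N + Real.sqrt (8 * N + 8) + 2)
    (hyU : (y : ℝ) < N + Real.sqrt (8 * N + 8) + 2)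
    (hzU : (z : ℝ) < N + Real.sqrt (8 * N + 8) + 2)
    (htU : (t : ℝ) < N + Real.sqrt (8 * N + 8) + 2)
    (heq : x ^ 2 + y ^ 2 = z ^ 2 + t ^ 2) :
    ({x, y} : Finset ℕ) = {z, t} := by
  have hmin : min x y = min z t := le_antisymm
    (min_le_min_of_lt_add_sqrt (mod_cast hzN) (mod_cast htN) hzU htU heq.symm)
    (min_le_min_of_lt_add_sqrt (mod_cast hxN) (mod_cast hyN) hxU hyU heq)
  have hmax : max x y = max z t :=
    max_eq_max_of_add_eq_add (Nat.pow_left_injective two_ne_zero) hmin heq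
  exact pair_eq_pair_of_min_eq_of_max_eq hmin hmax
end

section
/- There exist infinitely many positive integers N such that the set {n² : n ∈ ℕ, N ≤ n and (n : ℝ) ≤ N + √(8N+8) + 2} is not a Sidon set; that is, for infinitely many N there exist positive integers x, y, z, t with N ≤ x, y, z, t ≤ N + √(8N+8) + 2 (as reals), x² + y² = z² + t², and {x, y} ≠ {z, t}. -/
/-!
Rotating a Pythagorean triple `m ^ 2 + d ^ 2 = z ^ 2` by 45 degrees gives
`(m - d) ^ 2 + (m + d) ^ 2 = z ^ 2 + z ^ 2`. The spread `2 * d` is least for given `m` when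
`z = m + 1`, that is, `d ^ 2 = 2 * m + 1`. Writing `d = 2 * k + 1`, the smallest term is
`N = m - d = 2 * k ^ 2 - 1` and the largest is `N + 2 * d = N + 4 * k + 2`. Since
`8 * N + 8 = (4 * k) ^ 2`, the latter is exactly `N + √(8 * N + 8) + 2`.
-/

section Identities

variable {R : Type*} [CommSemiring R]

theorem sq_add_sq_eq_of_add_sq_add_sq_eq {x d z : R} (h : (x + d) ^ 2 + d ^ 2 = z ^ 2) :
    x ^ 2 + (x + 2 * d) ^ 2 = z ^ 2 + z ^ 2 :=
  calc
    x ^ 2 + (x + 2 * d) ^ 2 = ((x + d) ^ 2 + d ^ 2) + ((x + d) ^ 2 + d ^ 2) := by ring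
    _ = z ^ 2 + z ^ 2 := by rw [h]

theorem sq_add_sq_eq_add_one_sq {m d : R} (h : d ^ 2 = 2 * m + 1) :
    m ^ 2 + d ^ 2 = (m + 1) ^ 2 := by
  rw [h]
  ring

theorem two_mul_add_one_sq_eq {N k : R} (h : N + 1 = 2 * k ^ 2) :
    (2 * k + 1) ^ 2 = 2 * (N + (2 * k + 1)) + 1 :=
  calc
    (2 * k + 1) ^ 2 = 2 * (2 * k ^ 2) + 4 * k + 1 := by ring
    _ = 2 * (N + 1) + 4 * k + 1 := by rw [h]
    _ = 2 * (N + (2 * k + 1)) + 1 := by ring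

end Identities

theorem sqrt_eight_mul_add_eight {N k : ℝ} (hk : 0 ≤ k) (h : N + 1 = 2 * k ^ 2) :
    √(8 * N + 8) = 4 * k := by
  have h_sq : 8 * N + 8 = (4 * k) ^ 2 := by linear_combination 8 * h
  rw [h_sq, Real.sqrt_sq (by positivity)]

theorem pair_ne_pair_self {α : Type*} [DecidableEq α] {a b : α} (hab : a ≠ b) (c : α) :
    ({a, b} : Finset α) ≠ {c, c} := by
  intro h
  have h_card : ({a, b} : Finset α).card = ({c, c} : Finset α).card := congrArg Finset.card h
  rw [Finset.card_pair hab, Finset.pair_eq_singleton, Finset.card_singleton] at h_card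
  lia

/-- There are infinitely many positive integers `N` such that the set
`{n² : N ≤ n, (n : ℝ) ≤ N + √(8N+8) + 2}` is not a Sidon set. -/
theorem squares_not_sidon_closed_interval_infinitely_often :
    ∀ N₀ : ℕ, ∃ N : ℕ, N₀ < N ∧ 0 < N ∧
      ∃ x y z t : ℕ, 0 < x ∧ 0 < y ∧ 0 < z ∧ 0 < t ∧
        N ≤ x ∧ N ≤ y ∧ N ≤ z ∧ N ≤ t ∧
        (x : ℝ) ≤ N + Real.sqrt (8 * N + 8) + 2 ∧
        (y : ℝ) ≤ N + Real.sqrt (8 * N + 8) + 2 ∧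
        (z : ℝ) ≤ N + Real.sqrt (8 * N + 8) + 2 ∧
        (t : ℝ) ≤ N + Real.sqrt (8 * N + 8) + 2 ∧
        x ^ 2 + y ^ 2 = z ^ 2 + t ^ 2 ∧
        ({x, y} : Finset ℕ) ≠ {z, t} := by
  intro N₀
  obtain ⟨k, N, hN, h⟩ : ∃ k N : ℕ, N₀ < N ∧ N + 1 = 2 * k ^ 2 :=
    ⟨N₀ + 1, 2 * N₀ ^ 2 + 4 * N₀ + 1, by nlinarith, by ring⟩
  let d := 2 * k + 1
  have h_sqrt : √(8 * (N : ℝ) + 8) = 4 * k :=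
    sqrt_eight_mul_add_eight k.cast_nonneg (by exact_mod_cast h)
  have h_endpoint : N + √(8 * (N : ℝ) + 8) + 2 = (N + 2 * d : ℕ) := by
    rw [h_sqrt]
    push_cast [d]
    ring
  have h_sum : N ^ 2 + (N + 2 * d) ^ 2 = (N + d + 1) ^ 2 + (N + d + 1) ^ 2 :=
    sq_add_sq_eq_of_add_sq_add_sq_eq (sq_add_sq_eq_add_one_sq (two_mul_add_one_sq_eq h))
  have h_ne : ({N, N + 2 * d} : Finset ℕ) ≠ {N + d + 1, N + d + 1} :=
    pair_ne_pair_self (by lia) _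
  refine ⟨N, hN, by lia, N, N + 2 * d, N + d + 1, N + d + 1, ?_⟩
  simp only [h_endpoint, Nat.cast_le]
  lia
end

section
/- For every positive integer N, the set {n² : n ∈ ℕ, N ≤ n and (n : ℝ) < N + √(8N) + 2} is a Sidon set. -/
/-! The parity of `x ^ 2 + y ^ 2` is that of `x + y`, so `x ^ 2 + y ^ 2 = z ^ 2 + t ^ 2` and
`x + y < z + t` force `x + y + 2 ≤ z + t`. Together with
`(x + y) ^ 2 + (x - y) ^ 2 = (z + t) ^ 2 + (z - t) ^ 2`, this gives `4 * (x + y + 1) ≤ (x - y) ^ 2`;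
for `y ≤ x`, this solves to `y + √(8 * (y + 1)) + 2 ≤ x`. Hence two pairs from an interval too short
for such a gap have equal sums as well as equal sums of squares, and so coincide. -/

lemma even_sq_add_sq_iff (x y : ℤ) : Even (x ^ 2 + y ^ 2) ↔ Even (x + y) := by
  simp [Int.even_add, Int.even_pow]

lemma add_add_two_le_of_sq_add_sq_eq_s2 {x y z t : ℤ} (heq : x ^ 2 + y ^ 2 = z ^ 2 + t ^ 2)
    (hlt : x + y < z + t) : x + y + 2 ≤ z + t := by
  have hparity : Even (x + y) ↔ Even (z + t) := by
    rw [← even_sq_add_sq_iff, heq, even_sq_add_sq_iff]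
  rw [Int.even_iff, Int.even_iff] at hparity
  omega

lemma four_mul_add_add_one_le_sub_sq {x y z t : ℤ} (heq : x ^ 2 + y ^ 2 = z ^ 2 + t ^ 2)
    (hlt : x + y < z + t) : 4 * (x + y + 1) ≤ (x - y) ^ 2 := by
  rcases lt_or_ge (x + y) 0 with hneg | hnonneg
  · nlinarith only [hneg, sq_nonneg (x - y)]
  · have hgap : (x + y + 2) ^ 2 ≤ (z + t) ^ 2 :=
      pow_le_pow_left₀ (by linarith) (add_add_two_le_of_sq_add_sq_eq_s2 heq hlt) 2
    calc
      4 * (x + y + 1) = (x + y + 2) ^ 2 - (x + y) ^ 2 := by ring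
      _ ≤ (z + t) ^ 2 - (x + y) ^ 2 := by gcongr
      _ = (x - y) ^ 2 - (z - t) ^ 2 := by linear_combination -2 * heq
      _ ≤ (x - y) ^ 2 := sub_le_self _ (sq_nonneg _)

lemma add_sqrt_add_two_le_of_four_mul_le_sub_sq {x y : ℝ} (hy : 0 ≤ y) (hyx : y ≤ x)
    (h : 4 * (x + y + 1) ≤ (x - y) ^ 2) : y + √(8 * (y + 1)) + 2 ≤ x := by
  have htwo : 2 ≤ x - y := by nlinarith only [hy, hyx, h]
  have hsqrt : √(8 * (y + 1)) ≤ x - y - 2 :=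
    Real.sqrt_le_iff.mpr ⟨by linarith, by linarith⟩
  linarith

lemma add_le_add_of_sq_add_sq_eq {N x y z t : ℕ} (hxN : N ≤ x) (hyN : N ≤ y)
    (hxU : (x : ℝ) < N + √(8 * (N + 1)) + 2) (hyU : (y : ℝ) < N + √(8 * (N + 1)) + 2)
    (heq : x ^ 2 + y ^ 2 = z ^ 2 + t ^ 2) : z + t ≤ x + y := by
  wlog hyx : y ≤ x generalizing x y
  · rw [add_comm x y]
    exact this hyN hxN hyU hxU (by rwa [add_comm]) (le_of_not_ge hyx)
  by_contra! hlt
  have hgap : (4 * (x + y + 1) : ℝ) ≤ (x - y) ^ 2 := by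
    exact_mod_cast four_mul_add_add_one_le_sub_sq (x := x) (y := y) (z := z) (t := t)
      (mod_cast heq) (mod_cast hlt)
  refine hxU.not_ge ?_
  calc
    (N : ℝ) + √(8 * (N + 1)) + 2 ≤ y + √(8 * (y + 1)) + 2 := by gcongr
    _ ≤ x := add_sqrt_add_two_le_of_four_mul_le_sub_sq y.cast_nonneg (mod_cast hyx) hgap

lemma eq_and_eq_or_eq_and_eq_of_add_eq_of_sq_add_sq_eq {R : Type*} [CommRing R] [NoZeroDivisors R]
    [NeZero (2 : R)] {x y z t : R} (hadd : x + y = z + t)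
    (heq : x ^ 2 + y ^ 2 = z ^ 2 + t ^ 2) : x = z ∧ y = t ∨ x = t ∧ y = z := by
  have hprod : 2 * ((x - z) * (x - t)) = 0 := by
    linear_combination heq + (x - y - z - t) * hadd
  rcases mul_eq_zero.mp ((mul_eq_zero.mp hprod).resolve_left two_ne_zero) with h | h
  · exact .inl ⟨sub_eq_zero.mp h, by linear_combination hadd - h⟩
  · exact .inr ⟨sub_eq_zero.mp h, by linear_combination hadd - h⟩

theorem squares_sidon_sqrt8N_general {N x y z t : ℕ}
    (hxN : N ≤ x) (hyN : N ≤ y) (hzN : N ≤ z) (htN : N ≤ t)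
    (hxU : (x : ℝ) < N + √(8 * (N + 1)) + 2) (hyU : (y : ℝ) < N + √(8 * (N + 1)) + 2)
    (hzU : (z : ℝ) < N + √(8 * (N + 1)) + 2) (htU : (t : ℝ) < N + √(8 * (N + 1)) + 2)
    (heq : x ^ 2 + y ^ 2 = z ^ 2 + t ^ 2) :
    ({x, y} : Finset ℕ) = {z, t} := by
  have hadd : x + y = z + t :=
    le_antisymm (add_le_add_of_sq_add_sq_eq hzN htN hzU htU heq.symm)
      (add_le_add_of_sq_add_sq_eq hxN hyN hxU hyU heq)
  have hpair : x = z ∧ y = t ∨ x = t ∧ y = z := by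
    zify at hadd heq ⊢
    exact eq_and_eq_or_eq_and_eq_of_add_eq_of_sq_add_sq_eq hadd heq
  rcases hpair with ⟨rfl, rfl⟩ | ⟨rfl, rfl⟩
  · rfl
  · exact Finset.pair_comm _ _

/-- For every positive integer `N`, the set `{n² : N ≤ n, (n : ℝ) < N + √(8N) + 2}`
is a Sidon set. -/
theorem squares_sidon_sqrt8N (N : ℕ) (hN : 0 < N)
    (x y z t : ℕ) (hx : 0 < x) (hy : 0 < y) (hz : 0 < z) (ht : 0 < t)
    (hxN : N ≤ x) (hyN : N ≤ y) (hzN : N ≤ z) (htN : N ≤ t)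
    (hxU : (x : ℝ) < N + Real.sqrt (8 * N) + 2)
    (hyU : (y : ℝ) < N + Real.sqrt (8 * N) + 2)
    (hzU : (z : ℝ) < N + Real.sqrt (8 * N) + 2)
    (htU : (t : ℝ) < N + Real.sqrt (8 * N) + 2)
    (heq : x ^ 2 + y ^ 2 = z ^ 2 + t ^ 2) :
    ({x, y} : Finset ℕ) = {z, t} := by
  have hbound : (N : ℝ) + √(8 * N) + 2 ≤ N + √(8 * (N + 1)) + 2 := by
    gcongr
    exact le_add_of_nonneg_right zero_le_one
  exact squares_sidon_sqrt8N_general hxN hyN hzN htN (hxU.trans_le hbound) (hyU.trans_le hbound)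
    (hzU.trans_le hbound) (htU.trans_le hbound) heq
end

section
/- For every real ε > 0 there exist infinitely many positive integers N such that the set {n² : n ∈ ℕ, N ≤ n and (n : ℝ) < N + √(8N) + 2 + ε} is not a Sidon set; in other words, the constants √8 and 2 in the previous statement are sharp. -/
/-!
The solutions come from three squares in arithmetic progression, `N² + (N + 2d)² = 2(N + d + 1)²`,
which holds exactly when `d² = 2(N + d) + 1`, that is, `N = 2m² - 1` for `d = 2m + 1`. Then
`√(8N) = √((4m)² - 8)` differs from `4m` by a quantity tending to `0`, so the largest term
`N + 2d = N + 4m + 2` eventually drops below `N + √(8N) + 2 + ε`.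
-/

open Filter Topology

theorem sq_add_sq_eq_sq_add_sq_of_sq_eq {R : Type*} [CommSemiring R] {N d : R}
    (h : d ^ 2 = 2 * (N + d) + 1) :
    N ^ 2 + (N + 2 * d) ^ 2 = (N + d + 1) ^ 2 + (N + d + 1) ^ 2 := by
  calc N ^ 2 + (N + 2 * d) ^ 2 = 2 * (N + d) ^ 2 + 2 * d ^ 2 := by ring
    _ = 2 * (N + d) ^ 2 + 2 * (2 * (N + d) + 1) := by rw [h]
    _ = (N + d + 1) ^ 2 + (N + d + 1) ^ 2 := by ring

theorem sub_sqrt_sq_sub_eq_div {x c : ℝ} (hx : 0 < x) (hc : c ≤ x ^ 2) :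
    x - √(x ^ 2 - c) = c / (x + √(x ^ 2 - c)) := by
  rw [eq_div_iff (by positivity)]
  linear_combination -Real.sq_sqrt (sub_nonneg.mpr hc)

theorem tendsto_sub_sqrt_sq_sub_atTop (c : ℝ) :
    Tendsto (fun x : ℝ ↦ x - √(x ^ 2 - c)) atTop (𝓝 0) := by
  have h_denom : Tendsto (fun x : ℝ ↦ x + √(x ^ 2 - c)) atTop atTop :=
    tendsto_id.atTop_add_nonneg fun _ ↦ Real.sqrt_nonneg _
  refine (h_denom.const_div_atTop c).congr' ?_
  filter_upwards [eventually_gt_atTop 0,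
    (tendsto_pow_atTop two_ne_zero).eventually_ge_atTop c] with x hx hc
  exact (sub_sqrt_sq_sub_eq_div hx hc).symm

theorem eventually_four_mul_lt_sqrt_eight_mul_add {ε : ℝ} (hε : 0 < ε) :
    ∀ᶠ m : ℝ in atTop, 4 * m < √(8 * (2 * m ^ 2 - 1)) + ε := by
  have h_lim : Tendsto (fun m : ℝ ↦ 4 * m) atTop atTop := tendsto_id.const_mul_atTop four_pos
  filter_upwards [h_lim.eventually
    ((tendsto_sub_sqrt_sq_sub_atTop 8).eventually_lt_const hε)] with m hm
  rw [show 8 * (2 * m ^ 2 - 1) = (4 * m) ^ 2 - 8 by ring]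
  linarith

/-- For every `ε > 0` there are infinitely many positive integers `N` such that
`{n² : N ≤ n, (n : ℝ) < N + √(8N) + 2 + ε}` is not a Sidon set. -/
theorem squares_sharpness (ε : ℝ) (hε : 0 < ε) :
    ∀ N₀ : ℕ, ∃ N : ℕ, N₀ < N ∧ 0 < N ∧
      ∃ x y z t : ℕ, 0 < x ∧ 0 < y ∧ 0 < z ∧ 0 < t ∧
        N ≤ x ∧ N ≤ y ∧ N ≤ z ∧ N ≤ t ∧
        (x : ℝ) < N + Real.sqrt (8 * N) + 2 + ε ∧
        (y : ℝ) < N + Real.sqrt (8 * N) + 2 + ε ∧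
        (z : ℝ) < N + Real.sqrt (8 * N) + 2 + ε ∧
        (t : ℝ) < N + Real.sqrt (8 * N) + 2 + ε ∧
        x ^ 2 + y ^ 2 = z ^ 2 + t ^ 2 ∧
        ({x, y} : Finset ℕ) ≠ {z, t} := by
  intro N₀
  obtain ⟨m, h_sqrt, hm⟩ := ((tendsto_natCast_atTop_atTop.eventually
    (eventually_four_mul_lt_sqrt_eight_mul_add hε)).and (eventually_gt_atTop N₀)).exists
  obtain ⟨N, hN⟩ : ∃ N, 2 * m ^ 2 = N + 1 := by
    have hm₀ : m ≠ 0 := by lia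
    exact Nat.exists_eq_succ_of_ne_zero (by positivity)
  have hmN : m ≤ N := by nlinarith
  have hd : (2 * m + 1) ^ 2 = 2 * (N + (2 * m + 1)) + 1 := by linarith
  have hN_real : 2 * (m : ℝ) ^ 2 - 1 = N := sub_eq_of_eq_add (mod_cast hN)
  rw [hN_real] at h_sqrt
  have h_lt {k : ℕ} (hk : k ≤ N + 2 * (2 * m + 1)) : (k : ℝ) < N + √(8 * N) + 2 + ε := by
    have hk' : (k : ℝ) ≤ N + 2 * (2 * m + 1) := mod_cast hk
    linarith
  refine ⟨N, by lia, by lia, N, N + 2 * (2 * m + 1), N + (2 * m + 1) + 1, N + (2 * m + 1) + 1,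
    by lia, by lia, by lia, by lia, by lia, by lia, by lia, by lia,
    h_lt (by lia), h_lt le_rfl, h_lt (by lia), h_lt (by lia),
    sq_add_sq_eq_sq_add_sq_of_sq_eq hd, ne_of_mem_of_not_mem' (a := N) (by simp) ?_⟩
  simp only [Finset.mem_insert, Finset.mem_singleton]
  lia
end

section
/- For every real ε > 0 there exists N₀ = N₀(ε) such that for every integer N > N₀ the set {n² : n ∈ ℕ, N ≤ n and (n : ℝ) ≤ N + √((8+ε)N)} is not a Sidon set; that is, there exist positive integers x, y, z, t with N ≤ x, y, z, t ≤ N + √((8+ε)N) (as reals), x² + y² = z² + t², and {x, y} ≠ {z, t}. -/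
/-! If `2ab > N`, then `(2ab - 1)² + (2(a+1)(b+1) - 1)² = (2a(b+1) + 1)² + (2(a+1)b + 1)²` is a
nontrivial coincidence between numbers at least `N`, the largest of which is `2ab + 2(a + b) + 1`.
So one wants `2ab` barely above `N` and `a + b` close to its minimum `2√(ab) ≈ √(2N)`. Take
`a = s - k` and `b = s + k`, where `s²` is the first square above `N / 2` and `k` is the largest
integer keeping `ab = s² - k²` above `N / 2`. As `s² - N / 2 = O(√N)`, both `k` and the excess
`2ab - N` are `O(N^(1/4))`, so the largest number is `N + √(8N) + O(N^(1/4))`. -/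

open Filter Asymptotics

/-- The squares of the positive integers in `[N, B]` do not form a Sidon set. The two pairs of
squares are compared through their roots, since squaring is injective on the positive integers; `B`
is real because the intervals of interest need not end at integers. -/
def HasSquareCollision (N : ℕ) (B : ℝ) : Prop :=
  ∃ x y z t : ℕ, 0 < x ∧ 0 < y ∧ 0 < z ∧ 0 < t ∧
    N ≤ x ∧ N ≤ y ∧ N ≤ z ∧ N ≤ t ∧
    (x : ℝ) ≤ B ∧ (y : ℝ) ≤ B ∧ (z : ℝ) ≤ B ∧ (t : ℝ) ≤ B ∧
    x ^ 2 + y ^ 2 = z ^ 2 + t ^ 2 ∧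
    ({x, y} : Finset ℕ) ≠ {z, t}

theorem HasSquareCollision.mono {N : ℕ} {B C : ℝ} (h : HasSquareCollision N B) (hBC : B ≤ C) :
    HasSquareCollision N C := by
  obtain ⟨x, y, z, t, hx, hy, hz, ht, hNx, hNy, hNz, hNt, hxB, hyB, hzB, htB, hsq, hne⟩ := h
  exact ⟨x, y, z, t, hx, hy, hz, ht, hNx, hNy, hNz, hNt, hxB.trans hBC, hyB.trans hBC,
    hzB.trans hBC, htB.trans hBC, hsq, hne⟩

theorem two_mul_mul_sub_one_sq_add_sq {R : Type*} [CommRing R] (a b : R) :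
    (2 * a * b - 1) ^ 2 + (2 * (a + 1) * (b + 1) - 1) ^ 2 =
      (2 * a * (b + 1) + 1) ^ 2 + (2 * (a + 1) * b + 1) ^ 2 := by
  ring

theorem hasSquareCollision_of_lt_two_mul_mul {N a b : ℕ} (h : N < 2 * a * b) :
    HasSquareCollision N (2 * (a + 1) * (b + 1) - 1) := by
  obtain ⟨p, hp⟩ : ∃ p, 2 * a * b = p + 1 := Nat.exists_eq_add_one.2 (by lia)
  have hp_pos : 0 < p := by lia
  have le_upper (n : ℕ) (hn : n ≤ p + 2 * a + 2 * b + 2) :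
      (n : ℝ) ≤ 2 * (a + 1) * (b + 1) - 1 := by
    rify at hn hp
    linarith
  refine ⟨p, p + 2 * a + 2 * b + 2, p + 2 * a + 2, p + 2 * b + 2, hp_pos, by lia, by lia, by lia,
    by lia, by lia, by lia, by lia, le_upper _ (by lia), le_upper _ (by lia),
    le_upper _ (by lia), le_upper _ (by lia), ?_, ?_⟩
  · zify at hp ⊢
    rw [eq_sub_of_add_eq hp.symm]
    linear_combination two_mul_mul_sub_one_sq_add_sq (a : ℤ) b
  · intro heq
    have hp_mem : p ∈ ({p + 2 * a + 2, p + 2 * b + 2} : Finset ℕ) := heq ▸ by simp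
    simp only [Finset.mem_insert, Finset.mem_singleton] at hp_mem
    lia

theorem exists_add_eq_and_lt_mul_le (n : ℕ) :
    ∃ a b : ℕ, a + b = 2 * (n.sqrt + 1) ∧ n < a * b ∧
      a * b ≤ n + 1 + 2 * (2 * n.sqrt).sqrt := by
  set v := n.sqrt
  have hv_le : v ^ 2 ≤ n := n.sqrt_le'
  have hv_lt : n < (v + 1) ^ 2 := n.lt_succ_sqrt'
  obtain ⟨d, hd⟩ : ∃ d, (v + 1) ^ 2 = n + 1 + d := Nat.exists_eq_add_of_le hv_lt
  have hd_le : d ≤ 2 * v := by nlinarith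
  set k := d.sqrt
  have hk_le : k ^ 2 ≤ d := d.sqrt_le'
  have hk_lt : d < (k + 1) ^ 2 := d.lt_succ_sqrt'
  have hkv : k ≤ v + 1 := by nlinarith
  obtain ⟨a, ha⟩ := Nat.exists_eq_add_of_le hkv
  have hab : a * (v + 1 + k) + k ^ 2 = (v + 1) ^ 2 := by rw [ha]; ring
  have hk_sqrt : k ≤ (2 * v).sqrt := Nat.sqrt_le_sqrt hd_le
  exact ⟨a, v + 1 + k, by lia, by lia, by nlinarith⟩

theorem squares_not_sidon_eps_general (N : ℕ) :
    HasSquareCollision N (N + √(8 * N) + 4 * √√(2 * N) + 7) := by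
  obtain ⟨n, hnN, hNn⟩ : ∃ n, 2 * n ≤ N ∧ N < 2 * (n + 1) := ⟨N / 2, by lia, by lia⟩
  obtain ⟨a, b, hadd, hlt, hle⟩ := exists_add_eq_and_lt_mul_le n
  refine (hasSquareCollision_of_lt_two_mul_mul (a := a) (b := b) (by lia)).mono ?_
  have hn_sq : (n.sqrt : ℝ) ^ 2 ≤ n := mod_cast n.sqrt_le'
  rify at hadd hle hnN
  have hsqrt : 2 * (n.sqrt : ℝ) ≤ √(2 * N) := Real.le_sqrt_of_sq_le (by linarith)
  have hsqrt_sqrt : ((2 * n.sqrt).sqrt : ℝ) ≤ √√(2 * N) :=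
    Real.nat_sqrt_le_real_sqrt.trans (Real.sqrt_le_sqrt (by exact_mod_cast hsqrt))
  have h8 : √(8 * N) = 2 * √(2 * N) := by
    rw [show (8 * N : ℝ) = 2 ^ 2 * (2 * N) by ring, Real.sqrt_mul (by positivity),
      Real.sqrt_sq zero_le_two]
  linarith

theorem isLittleO_sqrt_id_atTop : Real.sqrt =o[atTop] (id : ℝ → ℝ) := by
  refine ((isLittleO_pow_pow_atTop_of_lt one_lt_two).comp_tendsto
    Real.tendsto_sqrt_atTop).congr' (.of_forall fun x ↦ pow_one _) ?_
  filter_upwards [eventually_ge_atTop 0] with x hx using Real.sq_sqrt hx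

theorem eventually_sqrt_mul_add_sqrt_sqrt_add_le {c d : ℝ} (hc : 0 ≤ c) (hcd : c < d) (A B : ℝ) :
    ∀ᶠ x : ℝ in atTop, √(c * x) + A * √√x + B ≤ √(d * x) := by
  have hδ : 0 < √d - √c := sub_pos.2 (Real.sqrt_lt_sqrt hc hcd)
  have herror : (fun u : ℝ ↦ A * √u + B) =o[atTop] (id : ℝ → ℝ) :=
    (isLittleO_sqrt_id_atTop.const_mul_left A).add (isLittleO_const_id_atTop B)
  filter_upwards [Real.tendsto_sqrt_atTop.eventually (herror.bound hδ)] with x hx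
  have hle : A * √√x + B ≤ (√d - √c) * √x := by
    simpa [abs_of_nonneg (Real.sqrt_nonneg x)] using (le_abs_self _).trans hx
  rw [Real.sqrt_mul hc, Real.sqrt_mul (hc.trans hcd.le)]
  linarith

/-- For every `ε > 0` there is `N₀` such that for every integer `N > N₀` the set
`{n² : N ≤ n, (n : ℝ) ≤ N + √((8+ε)N)}` is not a Sidon set. -/
theorem squares_not_sidon_eps (ε : ℝ) (hε : 0 < ε) :
    ∃ N₀ : ℕ, ∀ N : ℕ, N₀ < N →
      ∃ x y z t : ℕ, 0 < x ∧ 0 < y ∧ 0 < z ∧ 0 < t ∧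
        N ≤ x ∧ N ≤ y ∧ N ≤ z ∧ N ≤ t ∧
        (x : ℝ) ≤ N + Real.sqrt ((8 + ε) * N) ∧
        (y : ℝ) ≤ N + Real.sqrt ((8 + ε) * N) ∧
        (z : ℝ) ≤ N + Real.sqrt ((8 + ε) * N) ∧
        (t : ℝ) ≤ N + Real.sqrt ((8 + ε) * N) ∧
        x ^ 2 + y ^ 2 = z ^ 2 + t ^ 2 ∧
        ({x, y} : Finset ℕ) ≠ {z, t} := by
  have herror : ∀ᶠ N : ℕ in atTop, √(8 * N) + 4 * √√(2 * N) + 7 ≤ √((8 + ε) * N) := by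
    filter_upwards [tendsto_natCast_atTop_atTop.eventually
      (eventually_sqrt_mul_add_sqrt_sqrt_add_le (by norm_num) (lt_add_of_pos_right 8 hε)
        (4 * √√2) 7)] with N hN
    simpa only [Real.sqrt_mul zero_le_two, Real.sqrt_mul (Real.sqrt_nonneg 2), ← mul_assoc] using hN
  obtain ⟨N₀, hN₀⟩ := eventually_atTop.1 herror
  exact ⟨N₀, fun N hN ↦ (squares_not_sidon_eps_general N).mono (by linarith [hN₀ N hN.le])⟩
end

section
/- For every positive integer N, the set {n³ : n ∈ ℕ, N ≤ n and (n : ℝ) < N + √((38/3)·N + 1297/36) + 19/6} is a Sidon set; that is, whenever x, y, z, t are positive integers with N ≤ x, y, z, t, each less than N + √((38/3)·N + 1297/36) + 19/6 (as reals), and x³ + y³ = z³ + t³, then {x, y} = {z, t}. -/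
/-!
For a pair with sum `s` and difference `d`, `4 (x³ + y³) = s (s² + 3 d²)`, so a positive sum and the
sum of cubes determine the pair. If `x³ + y³ = z³ + t³` with `x + y < z + t`, then `z + t = s + 6 m`
with `m ≥ 1`, because `n³ ≡ n` modulo `6`. Writing `e = t - z` and
`k = d² - e² - 6 m s - 36 m²`, the equation becomes `s k = 6 m (e² + 12 m²)`, so `k ≥ 1`. The case
`m = k = 1` is impossible modulo `4`, and all the others satisfy `19 s + 78 ≤ 3 d²`, with equality
exactly for `m = 1`, `k = 2`, as in `42³ + 69³ = 56³ + 61³`. The interval is chosen so that its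
pairs violate this inequality.
-/

theorem pow_three_modEq_self_six (n : ℤ) : n ^ 3 ≡ n [ZMOD 6] := by
  have pow_three_eq_self : ∀ a : ZMod 6, a ^ 3 = a := by decide
  refine (ZMod.intCast_eq_intCast_iff _ _ 6).mp ?_
  rw [Int.cast_pow, pow_three_eq_self]

theorem add_modEq_add_six_of_pow_three_add_eq {x y z t : ℤ} (h : x ^ 3 + y ^ 3 = z ^ 3 + t ^ 3) :
    x + y ≡ z + t [ZMOD 6] :=
  calc
    x + y ≡ x ^ 3 + y ^ 3 [ZMOD 6] :=
      ((pow_three_modEq_self_six x).add (pow_three_modEq_self_six y)).symm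
    _ = z ^ 3 + t ^ 3 := h
    _ ≡ z + t [ZMOD 6] := (pow_three_modEq_self_six z).add (pow_three_modEq_self_six t)

theorem three_mul_add_mul_eq_of_pow_three_add_eq {R : Type*} [CommRing R] {x y z t h : R}
    (hcubes : x ^ 3 + y ^ 3 = z ^ 3 + t ^ 3) (hsum : z + t = x + y + h) :
    3 * ((x + y) * ((y - x) ^ 2 - (t - z) ^ 2 - h * (x + y) - h ^ 2)) =
      h * (h ^ 2 + 3 * (t - z) ^ 2) := by
  obtain rfl : h = z + t - (x + y) := by linear_combination -hsum
  linear_combination 4 * hcubes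

theorem eq_and_eq_or_eq_and_eq_of_add_eq_of_pow_three_add_eq {R : Type*} [CommRing R]
    [NoZeroDivisors R] {x y z t : R} (h3 : (3 : R) ≠ 0) (hs : x + y ≠ 0) (hsum : x + y = z + t)
    (hcubes : x ^ 3 + y ^ 3 = z ^ 3 + t ^ 3) : x = z ∧ y = t ∨ x = t ∧ y = z := by
  obtain rfl : y = z + t - x := by linear_combination hsum
  have hprod : (3 * (x + (z + t - x))) * ((x - z) * (x - t)) = 0 := by
    linear_combination hcubes
  rcases mul_eq_zero.mp ((mul_eq_zero.mp hprod).resolve_left (mul_ne_zero h3 hs)) with h | h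
  · exact .inl ⟨sub_eq_zero.mp h, by linear_combination -h⟩
  · exact .inr ⟨sub_eq_zero.mp h, by linear_combination -h⟩

theorem sq_ne_thirtySeven_mul_sq_add_of_even {d e : ℤ} (hd : Even d) (he : Even e) :
    d ^ 2 ≠ 37 * e ^ 2 + 469 := by
  obtain ⟨a, rfl⟩ := hd.two_dvd
  obtain ⟨b, rfl⟩ := he.two_dvd
  intro h
  ring_nf at h
  omega

theorem nineteen_mul_add_le_of_pow_three_add_eq {x y z t : ℤ}
    (hcubes : x ^ 3 + y ^ 3 = z ^ 3 + t ^ 3) (hpos : 0 < x + y) (hlt : x + y < z + t) :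
    19 * (x + y) + 78 ≤ 3 * (y - x) ^ 2 := by
  obtain ⟨m, hm⟩ := (add_modEq_add_six_of_pow_three_add_eq hcubes).dvd
  have hsum : z + t = x + y + 6 * m := by linarith
  obtain ⟨k, hk⟩ : ∃ k, k = (y - x) ^ 2 - (t - z) ^ 2 - 6 * m * (x + y) - (6 * m) ^ 2 := ⟨_, rfl⟩
  have hm_pos : 1 ≤ m := by omega
  have hfactor : (x + y) * k = 6 * m * ((t - z) ^ 2 + 12 * m ^ 2) := by
    have hdiff := three_mul_add_mul_eq_of_pow_three_add_eq hcubes hsum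
    rw [← hk] at hdiff
    linarith
  have hk_pos : 1 ≤ k := pos_of_mul_pos_right (hfactor ▸ by positivity) hpos.le
  rcases hm_pos.eq_or_lt with rfl | hm_two
  · have hgap : 2 * (3 * (y - x) ^ 2 - (19 * (x + y) + 78)) = (x + y + 6) * (k - 2) := by
      linear_combination -6 * hk - hfactor
    have hk_ne_one : k ≠ 1 := by
      rintro rfl
      have hxy_even : Even (x + y) := ⟨3 * (t - z) ^ 2 + 36, by linarith only [hfactor]⟩
      have hzt_even : Even (z + t) := hsum ▸ hxy_even.add (by decide)
      have hd_even : Even (y - x) := by rwa [Int.even_sub, ← Int.even_add, add_comm]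
      have he_even : Even (t - z) := by rwa [Int.even_sub, ← Int.even_add, add_comm]
      exact sq_ne_thirtySeven_mul_sq_add_of_even hd_even he_even
        (by linear_combination 6 * hfactor - hk)
    have hgap_nonneg : 0 ≤ (x + y + 6) * (k - 2) := mul_nonneg (by omega) (by omega)
    linarith only [hgap, hgap_nonneg]
  · have hmul : 2 * (x + y) ≤ m * (x + y) := mul_le_mul_of_nonneg_right hm_two hpos.le
    have hsq : 2 ^ 2 ≤ m ^ 2 := pow_le_pow_left₀ zero_le_two hm_two 2
    linarith only [hk, hk_pos, hmul, hsq, hpos, sq_nonneg (t - z)]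

theorem eq_and_eq_or_eq_and_eq_of_pow_three_add_eq {x y z t : ℤ}
    (hxy_pos : 0 < x + y) (hzt_pos : 0 < z + t)
    (hxy : 3 * (y - x) ^ 2 < 19 * (x + y) + 78) (hzt : 3 * (t - z) ^ 2 < 19 * (z + t) + 78)
    (hcubes : x ^ 3 + y ^ 3 = z ^ 3 + t ^ 3) : x = z ∧ y = t ∨ x = t ∧ y = z := by
  rcases lt_trichotomy (x + y) (z + t) with hlt | hsum | hlt
  · exact absurd (nineteen_mul_add_le_of_pow_three_add_eq hcubes hxy_pos hlt) hxy.not_ge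
  · exact eq_and_eq_or_eq_and_eq_of_add_eq_of_pow_three_add_eq three_ne_zero hxy_pos.ne' hsum hcubes
  · exact absurd (nineteen_mul_add_le_of_pow_three_add_eq hcubes.symm hzt_pos hlt) hzt.not_ge

theorem three_mul_sub_sq_lt_of_lt_add_sqrt {N x y : ℝ} (hN : 0 ≤ N) (hxN : N ≤ x) (hyN : N ≤ y)
    (hxU : x < N + √((38 / 3) * N + 1297 / 36) + 19 / 6)
    (hyU : y < N + √((38 / 3) * N + 1297 / 36) + 19 / 6) :
    3 * (y - x) ^ 2 < 19 * (x + y) + 78 := by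
  wlog hxy : x ≤ y generalizing x y
  · linarith [this hyN hxN hyU hxU (le_of_not_ge hxy), sub_sq_comm x y]
  have hsq : (y - x - 19 / 6) ^ 2 < 38 / 3 * N + 1297 / 36 := by
    have : 19 / 6 < √(38 / 3 * N + 1297 / 36) := Real.lt_sqrt_of_sq_lt (by linarith)
    exact Real.sq_lt.mpr ⟨by linarith, by linarith⟩
  linarith

/-- For every positive integer `N`, the set
`{n³ : N ≤ n, (n : ℝ) < N + √((38/3)N + 1297/36) + 19/6}` is a Sidon set. -/
theorem cubes_sidon_in_short_interval (N : ℕ) (hN : 0 < N)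
    (x y z t : ℕ) (hx : 0 < x) (hy : 0 < y) (hz : 0 < z) (ht : 0 < t)
    (hxN : N ≤ x) (hyN : N ≤ y) (hzN : N ≤ z) (htN : N ≤ t)
    (hxU : (x : ℝ) < N + Real.sqrt ((38 / 3) * N + 1297 / 36) + 19 / 6)
    (hyU : (y : ℝ) < N + Real.sqrt ((38 / 3) * N + 1297 / 36) + 19 / 6)
    (hzU : (z : ℝ) < N + Real.sqrt ((38 / 3) * N + 1297 / 36) + 19 / 6)
    (htU : (t : ℝ) < N + Real.sqrt ((38 / 3) * N + 1297 / 36) + 19 / 6)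
    (heq : x ^ 3 + y ^ 3 = z ^ 3 + t ^ 3) :
    ({x, y} : Finset ℕ) = {z, t} := by
  have hxy : 3 * ((y : ℤ) - x) ^ 2 < 19 * (x + y) + 78 := by
    exact_mod_cast three_mul_sub_sq_lt_of_lt_add_sqrt N.cast_nonneg (Nat.cast_le.mpr hxN)
      (Nat.cast_le.mpr hyN) hxU hyU
  have hzt : 3 * ((t : ℤ) - z) ^ 2 < 19 * (z + t) + 78 := by
    exact_mod_cast three_mul_sub_sq_lt_of_lt_add_sqrt N.cast_nonneg (Nat.cast_le.mpr hzN)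
      (Nat.cast_le.mpr htN) hzU htU
  have hcubes : (x : ℤ) ^ 3 + (y : ℤ) ^ 3 = (z : ℤ) ^ 3 + (t : ℤ) ^ 3 := mod_cast heq
  have hpairs : x = z ∧ y = t ∨ x = t ∧ y = z := by
    exact_mod_cast eq_and_eq_or_eq_and_eq_of_pow_three_add_eq (by positivity) (by positivity)
      hxy hzt hcubes
  rcases hpairs with ⟨rfl, rfl⟩ | ⟨rfl, rfl⟩
  · rfl
  · exact Finset.pair_comm x y
end

section
/- There exist infinitely many positive integers N such that the set {n³ : n ∈ ℕ, N ≤ n and (n : ℝ) ≤ N + √((38/3)·N + 1297/36) + 19/6} is not a Sidon set; that is, for infinitely many N there exist positive integers x, y, z, t with N ≤ x, y, z, t ≤ N + √((38/3)·N + 1297/36) + 19/6 (as reals), x³ + y³ = z³ + t³, and {x, y} ≠ {z, t}. -/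
/-!
Since `4 (x³ + y³) = (x + y) ((x + y)² + 3 (y - x)²)`, an equality between two sums of two cubes
is a relation between the sums and the differences of the two pairs. If the sums are `s` and
`s + 3m` and the differences are `k` and `e`, the choice `s = 3e² + 9m²` reduces
`x³ + y³ = z³ + t³` to the Pell-type equation `k² = (9m + 1) e² + (27m³ + 9m² + m)`. Eliminating
`e` leaves a quadratic equation for `k = y - x` in terms of `x`, whose larger root is the length of
the interval. For `m = 2` the Pell-type equation is `k² = 19e² + 254`. It has the solution
`27² = 19 · 5² + 254`, hence infinitely many, and `k` and `e` are necessarily odd, which makes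
`x, y, z, t` integers.
-/

theorem exists_lt_and_sq_eq_mul_sq_add {d n k₀ e₀ : ℤ} (hd : 0 < d) (hsq : ¬IsSquare d)
    (hk₀ : k₀ ≠ 0) (h₀ : k₀ ^ 2 = d * e₀ ^ 2 + n) (B : ℤ) :
    ∃ k e : ℤ, 0 < k ∧ B < e ∧ k ^ 2 = d * e ^ 2 + n := by
  obtain ⟨u, hux, huy⟩ := Pell.Solution₁.exists_pos_of_not_isSquare hd hsq
  have unbounded (j : ℕ) : ∃ k e : ℤ, 0 < k ∧ (j : ℤ) ≤ e ∧ k ^ 2 = d * e ^ 2 + n := by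
    induction j with
    | zero => exact ⟨|k₀|, |e₀|, abs_pos.mpr hk₀, by simp, by simpa only [sq_abs] using h₀⟩
    | succ j ih =>
      obtain ⟨k, e, hk, he, h⟩ := ih
      have he₀ : 0 ≤ e := j.cast_nonneg.trans he
      -- multiplication of `k + e √d` by the unit `u.x + u.y √d`
      refine ⟨u.x * k + d * u.y * e, u.x * e + u.y * k, by positivity, ?_, ?_⟩
      · push_cast
        nlinarith
      · linear_combination h + (k ^ 2 - d * e ^ 2) * u.prop
  obtain ⟨k, e, hk, he, h⟩ := unbounded (B.toNat + 1)
  exact ⟨k, e, hk, by omega, h⟩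

theorem odd_and_odd_of_sq_eq_mul_sq_add {d n k e : ℤ} (hd : d ≡ 3 [ZMOD 4]) (hn : n ≡ 2 [ZMOD 4])
    (h : k ^ 2 = d * e ^ 2 + n) : Odd k ∧ Odd e := by
  have hmod : k ^ 2 % 4 = (3 * e ^ 2 + 2) % 4 := h ▸ (hd.mul_right _).add hn
  have even_sq {a : ℤ} (ha : Even a) : a ^ 2 % 4 = 0 :=
    Int.emod_eq_zero_of_dvd (by simpa using pow_dvd_pow_of_dvd ha.two_dvd 2)
  have odd_sq {a : ℤ} (ha : Odd a) : a ^ 2 % 4 = 1 := Int.sq_mod_four_eq_one_of_odd ha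
  rcases k.even_or_odd with hk | hk <;> rcases e.even_or_odd with he | he
  · have := even_sq hk
    have := even_sq he
    omega
  · have := even_sq hk
    have := odd_sq he
    omega
  · have := odd_sq hk
    have := even_sq he
    omega
  · exact ⟨hk, he⟩

/-- The pairs `(x, y)` and `(z, t)` have sums `3 (z - t)² + 9m²` and `3m` more than that, and their
differences satisfy the Pell-type equation which then makes `x³ + y³ = z³ + t³`. -/
structure IsPellCubeQuadruple {R : Type*} [CommRing R] (m x y z t : R) : Prop where
  sum_left : x + y = 3 * (z - t) ^ 2 + 9 * m ^ 2
  sum_right : z + t = x + y + 3 * m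
  sq_sub : (y - x) ^ 2 = (9 * m + 1) * (z - t) ^ 2 + (27 * m ^ 3 + 9 * m ^ 2 + m)

namespace IsPellCubeQuadruple

theorem map {R S : Type*} [CommRing R] [CommRing S] (f : R →+* S) {m x y z t : R}
    (h : IsPellCubeQuadruple m x y z t) :
    IsPellCubeQuadruple (f m) (f x) (f y) (f z) (f t) where
  sum_left := by simpa [map_ofNat] using congrArg f h.sum_left
  sum_right := by simpa [map_ofNat] using congrArg f h.sum_right
  sq_sub := by simpa [map_ofNat] using congrArg f h.sq_sub

theorem cube_add_cube_eq {R : Type*} [CommRing R] [NoZeroDivisors R] [NeZero (2 : R)]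
    {m x y z t : R} (h : IsPellCubeQuadruple m x y z t) : x ^ 3 + y ^ 3 = z ^ 3 + t ^ 3 := by
  have four_mul_cubes (a b : R) :
      4 * (a ^ 3 + b ^ 3) = (a + b) * ((a + b) ^ 2 + 3 * (a - b) ^ 2) := by ring
  have four_ne_zero' : (4 : R) ≠ 0 := by
    rw [show (4 : R) = 2 * 2 by norm_num]
    exact mul_ne_zero two_ne_zero two_ne_zero
  refine mul_left_cancel₀ four_ne_zero' ?_
  rw [four_mul_cubes, four_mul_cubes, ← neg_sub y x, neg_sq, h.sq_sub, h.sum_right, h.sum_left]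
  ring

theorem le_add_sqrt {m x y z t : ℝ} (h : IsPellCubeQuadruple m x y z t) :
    y ≤ x + √(2 * (9 * m + 1) / 3 * x + ((9 * m + 1) ^ 2 / 36 + 6 * m ^ 2 + m)) +
      (9 * m + 1) / 6 := by
  have complete_square : (y - x - (9 * m + 1) / 6) ^ 2 =
      2 * (9 * m + 1) / 3 * x + ((9 * m + 1) ^ 2 / 36 + 6 * m ^ 2 + m) := by
    linear_combination h.sq_sub - (9 * m + 1) / 3 * h.sum_left
  linarith [Real.le_sqrt_of_sq_le complete_square.le]

theorem exists_of_sq_eq {k e : ℤ} (h : k ^ 2 = 19 * e ^ 2 + 254) :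
    ∃ x y z t : ℤ, y - x = k ∧ z - t = e ∧ IsPellCubeQuadruple 2 x y z t := by
  obtain ⟨⟨b, rfl⟩, ⟨a, rfl⟩⟩ :=
    odd_and_odd_of_sq_eq_mul_sq_add (d := 19) (n := 254) (by decide) (by decide) h
  let c := 6 * a ^ 2 + 6 * a + 19
  exact ⟨c - b, c + b + 1, c + a + 4, c - a + 3, by ring, by ring, by ring, by ring,
    by linear_combination h⟩

theorem exists_lt (B : ℤ) : ∃ x y z t : ℤ,
    B < x ∧ x < t ∧ t < z ∧ z ≤ y ∧ IsPellCubeQuadruple 2 x y z t := by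
  obtain ⟨k, e, hk, he, hpell⟩ := exists_lt_and_sq_eq_mul_sq_add (d := 19) (n := 254)
    (k₀ := 27) (e₀ := 5) (by norm_num) (by norm_num) (by norm_num) (by norm_num) (max B 6)
  obtain ⟨heB, he6⟩ := max_lt_iff.mp he
  have hek : e + 6 ≤ k := by nlinarith
  have hke : k ≤ 5 * e := by nlinarith
  obtain ⟨x, y, z, t, rfl, rfl, h⟩ := exists_of_sq_eq hpell
  have hsum := h.sum_left
  have hx : z - t ≤ x := by nlinarith
  exact ⟨x, y, z, t, by linarith, by linarith [h.sum_right], by linarith,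
    by linarith [h.sum_right], h⟩

end IsPellCubeQuadruple

/-- There are infinitely many positive integers `N` such that
`{n³ : N ≤ n, (n : ℝ) ≤ N + √((38/3)N + 1297/36) + 19/6}` is not a Sidon set. -/
theorem cubes_not_sidon_closed_interval_infinitely_often :
    ∀ N₀ : ℕ, ∃ N : ℕ, N₀ < N ∧ 0 < N ∧
      ∃ x y z t : ℕ, 0 < x ∧ 0 < y ∧ 0 < z ∧ 0 < t ∧
        N ≤ x ∧ N ≤ y ∧ N ≤ z ∧ N ≤ t ∧
        (x : ℝ) ≤ N + Real.sqrt ((38 / 3) * N + 1297 / 36) + 19 / 6 ∧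
        (y : ℝ) ≤ N + Real.sqrt ((38 / 3) * N + 1297 / 36) + 19 / 6 ∧
        (z : ℝ) ≤ N + Real.sqrt ((38 / 3) * N + 1297 / 36) + 19 / 6 ∧
        (t : ℝ) ≤ N + Real.sqrt ((38 / 3) * N + 1297 / 36) + 19 / 6 ∧
        x ^ 3 + y ^ 3 = z ^ 3 + t ^ 3 ∧
        ({x, y} : Finset ℕ) ≠ {z, t} := by
  intro N₀
  obtain ⟨x, y, z, t, hN₀, hxt, htz, hzy, h⟩ := IsPellCubeQuadruple.exists_lt N₀
  lift x to ℕ using by omega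
  lift y to ℕ using by omega
  lift z to ℕ using by omega
  lift t to ℕ using by omega
  have hcubes := h.cube_add_cube_eq
  have hy : (y : ℝ) ≤ x + √(38 / 3 * x + 1297 / 36) + 19 / 6 := by
    have hreal : IsPellCubeQuadruple (2 : ℝ) x y z t := by simpa using h.map (Int.castRingHom ℝ)
    convert hreal.le_add_sqrt using 4 <;> norm_num
  have in_interval {w : ℕ} (hw : w ≤ y) : (w : ℝ) ≤ x + √(38 / 3 * x + 1297 / 36) + 19 / 6 :=
    (Nat.cast_le.mpr hw).trans hy
  norm_cast at hN₀ hxt htz hzy hcubes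
  refine ⟨x, hN₀, by omega, x, y, z, t, by omega, by omega, by omega, by omega,
    le_rfl, by omega, by omega, by omega, in_interval (by omega), in_interval le_rfl,
    in_interval hzy, in_interval (by omega), hcubes, fun heq => ?_⟩
  have hx : x ∈ ({z, t} : Finset ℕ) := heq ▸ Finset.mem_insert_self x {y}
  simp only [Finset.mem_insert, Finset.mem_singleton] at hx
  omega
end

section
/- For every positive integer N, the set {n³ : n ∈ ℕ, N ≤ n and (n : ℝ) ≤ N + √((38/3)·N) + 19/6} is a Sidon set. -/
/-!
Suppose `x³ + y³ = z³ + t³`, and write `s = z + t`, `d = t - z`, `e = x - y` and `k = x + y - s`.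
Multiplying by four turns the equation into `3 * s * q = k * (k² + 3 * e²)`, where
`q = d² - e² - k * (s + k)`. Eliminating `e` gives
`3 * k * d² = k * (3 * k * s + 2 * k² + 3 * q) + 3 * s * q`. If `k > 0`, then `6 ∣ k` because
`6 ∣ n³ - n`, so `q` is even as well as positive. Thus `k ≥ 6` and `q ≥ 2`, and the smallest case
`k = 6`, `q = 2` gives `3 * d² ≥ 19 * s + 78`. Numbers in the given interval are too close together
for that, so `k ≤ 0`, and `k ≥ 0` by symmetry. Finally, two numbers with a given nonzero sum are
determined up to order by their sum of cubes.
-/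

section CommRing

variable {R : Type*} [CommRing R]

/-- The quantity `q = d² - e² - k * (s + k)` attached to an equation `x³ + y³ = z³ + t³`, where
`s = z + t`, `d = t - z`, `e = x - y` and `k = x + y - s`. It is the cofactor of `3 * s` in
`k * (k² + 3 * e²)`. -/
def cubeCofactor (x y z t : R) : R :=
  (t - z) ^ 2 - (x - y) ^ 2 - (x + y - (z + t)) * (x + y)

lemma three_mul_add_mul_cubeCofactor {x y z t : R} (heq : x ^ 3 + y ^ 3 = z ^ 3 + t ^ 3) :
    3 * (z + t) * cubeCofactor x y z t =
      (x + y - (z + t)) * ((x + y - (z + t)) ^ 2 + 3 * (x - y) ^ 2) := by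
  unfold cubeCofactor
  linear_combination -4 * heq

lemma sub_mul_three_mul_sq_sub {x y z t : R} (heq : x ^ 3 + y ^ 3 = z ^ 3 + t ^ 3) :
    (x + y - (z + t)) * (3 * (t - z) ^ 2) =
      (x + y - (z + t)) * (3 * (x + y - (z + t)) * (z + t) + 2 * (x + y - (z + t)) ^ 2
        + 3 * cubeCofactor x y z t) + 3 * (z + t) * cubeCofactor x y z t := by
  rw [three_mul_add_mul_cubeCofactor heq]
  unfold cubeCofactor
  ring

lemma even_cubeCofactor {x y z t : R} (hk : Even (x + y - (z + t))) :
    Even (cubeCofactor x y z t) := by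
  have hq : cubeCofactor x y z t =
      2 * (2 * (x * y - z * t)) - (x + y - (z + t)) * (2 * (x + y) + (z + t)) := by
    unfold cubeCofactor
    ring
  rw [hq]
  exact (even_two_mul _).sub (hk.mul_right _)

lemma eq_and_eq_or_eq_and_eq_of_cube_add_cube_eq [NoZeroDivisors R] {x y z t : R}
    (h3 : (3 : R) ≠ 0) (hs : z + t ≠ 0) (hadd : x + y = z + t)
    (heq : x ^ 3 + y ^ 3 = z ^ 3 + t ^ 3) :
    x = z ∧ y = t ∨ x = t ∧ y = z := by
  obtain rfl : y = z + t - x := eq_sub_of_add_eq' hadd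
  have hfactor : 3 * (z + t) * ((x - z) * (x - t)) = 0 := by
    linear_combination heq
  have hroots : (x - z) * (x - t) = 0 :=
    (mul_eq_zero.1 hfactor).resolve_left (mul_ne_zero h3 hs)
  rcases mul_eq_zero.1 hroots with h | h
  · obtain rfl := sub_eq_zero.1 h
    exact .inl ⟨rfl, by ring⟩
  · obtain rfl := sub_eq_zero.1 h
    exact .inr ⟨rfl, by ring⟩

end CommRing

lemma mul_nineteen_mul_add_le {R : Type*} [CommRing R] [LinearOrder R] [IsStrictOrderedRing R]
    {s k q : R} (hs : 0 ≤ s) (hk : 6 ≤ k) (hq : 2 ≤ q) :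
    k * (19 * s + 78) ≤ k * (3 * k * s + 2 * k ^ 2 + 3 * q) + 3 * s * q := by
  have hk₀ : 0 ≤ k := by linarith
  have hk₆ : 0 ≤ k - 6 := sub_nonneg.2 hk
  have hk₁ : 0 ≤ 3 * k - 1 := by linarith
  have hgap : 0 ≤ (k - 6) * (s * (3 * k - 1) + 2 * k * (k + 6)) := by positivity
  calc k * (19 * s + 78)
      ≤ k * (3 * k * s + 2 * k ^ 2 + 3 * 2) + 3 * s * 2 := by linarith
    _ ≤ k * (3 * k * s + 2 * k ^ 2 + 3 * q) + 3 * s * q := by gcongr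

lemma six_dvd_cube_sub_self (a : ℤ) : 6 ∣ a ^ 3 - a := by
  have hmod : ∀ b : ZMod 6, b ^ 3 - b = 0 := by decide
  exact (ZMod.intCast_zmod_eq_zero_iff_dvd _ 6).1 (mod_cast hmod a)

section Int

variable {x y z t : ℤ}

lemma six_dvd_add_sub_add_of_cube_add_cube_eq (heq : x ^ 3 + y ^ 3 = z ^ 3 + t ^ 3) :
    6 ∣ x + y - (z + t) := by
  have hx := six_dvd_cube_sub_self x
  have hy := six_dvd_cube_sub_self y
  have hz := six_dvd_cube_sub_self z
  have ht := six_dvd_cube_sub_self t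
  lia

lemma two_le_cubeCofactor (heq : x ^ 3 + y ^ 3 = z ^ 3 + t ^ 3) (hs : 0 ≤ z + t)
    (hlt : z + t < x + y) : 2 ≤ cubeCofactor x y z t := by
  have hk : 0 < x + y - (z + t) := sub_pos.2 hlt
  have hpos : 0 < cubeCofactor x y z t := by
    have hprod : 0 < 3 * (z + t) * cubeCofactor x y z t := by
      rw [three_mul_add_mul_cubeCofactor heq]
      positivity
    exact pos_of_mul_pos_right hprod (by positivity)
  have heven : Even (x + y - (z + t)) :=
    even_iff_two_dvd.2 <| (by norm_num : (2 : ℤ) ∣ 6).trans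
      (six_dvd_add_sub_add_of_cube_add_cube_eq heq)
  exact Int.le_of_dvd hpos (even_cubeCofactor heven).two_dvd

/-- The bound is sharp: equality holds for `61³ + 56³ = 42³ + 69³`. -/
lemma nineteen_mul_add_le_three_mul_sq_sub (heq : x ^ 3 + y ^ 3 = z ^ 3 + t ^ 3)
    (hs : 0 ≤ z + t) (hlt : z + t < x + y) :
    19 * (z + t) + 78 ≤ 3 * (t - z) ^ 2 := by
  have hq := two_le_cubeCofactor heq hs hlt
  have hk : 6 ≤ x + y - (z + t) :=
    Int.le_of_dvd (sub_pos.2 hlt) (six_dvd_add_sub_add_of_cube_add_cube_eq heq)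
  refine le_of_mul_le_mul_left ?_ (sub_pos.2 hlt)
  rw [sub_mul_three_mul_sq_sub heq]
  exact mul_nineteen_mul_add_le hs hk hq

end Int

lemma sq_sub_le_mul_add_of_mem_Icc {c N a b : ℝ} (hc : 0 ≤ c) (hN : 0 ≤ N)
    (ha : a ∈ Set.Icc N (N + √(2 * c * N) + c / 2))
    (hb : b ∈ Set.Icc N (N + √(2 * c * N) + c / 2)) :
    (b - a) ^ 2 ≤ c * (a + b) := by
  wlog hab : a ≤ b generalizing a b
  · rw [sub_sq_comm, add_comm]
    exact this hb ha (le_of_not_ge hab)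
  have hd : 0 ≤ b - a := sub_nonneg.2 hab
  have hcN : 0 ≤ c * N := mul_nonneg hc hN
  have hca : c * N ≤ c * a := mul_le_mul_of_nonneg_left ha.1 hc
  rcases le_total (b - a) c with hle | hge
  · calc (b - a) ^ 2 = (b - a) * (b - a) := sq _
      _ ≤ c * (b - a) := mul_le_mul_of_nonneg_right hle hd
      _ ≤ c * (a + b) := by linarith
  · have hsqrt : b - a - c / 2 ≤ √(2 * c * N) := by linarith [ha.1, hb.2]
    have hsq : (b - a - c / 2) ^ 2 ≤ 2 * c * N :=
      (Real.le_sqrt (by linarith) (by linarith)).1 hsqrt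
    calc (b - a) ^ 2 = (b - a - c / 2) ^ 2 + c * (b - a) - (c / 2) ^ 2 := by ring
      _ ≤ 2 * c * N + c * (b - a) := by linarith [sq_nonneg (c / 2)]
      _ ≤ c * (a + b) := by linarith

lemma add_le_add_of_cube_add_cube_eq {N : ℝ} {x y z t : ℕ} (hN : 0 ≤ N)
    (hz : (z : ℝ) ∈ Set.Icc N (N + √(38 / 3 * N) + 19 / 6))
    (ht : (t : ℝ) ∈ Set.Icc N (N + √(38 / 3 * N) + 19 / 6))
    (heq : x ^ 3 + y ^ 3 = z ^ 3 + t ^ 3) : x + y ≤ z + t := by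
  by_contra! hlt
  have hfar : 19 * ((z : ℤ) + t) + 78 ≤ 3 * ((t : ℤ) - z) ^ 2 :=
    nineteen_mul_add_le_three_mul_sq_sub (x := x) (y := y) (mod_cast heq) (by positivity)
      (mod_cast hlt)
  have hfar' : 19 * ((z : ℝ) + t) + 78 ≤ 3 * ((t : ℝ) - z) ^ 2 := mod_cast hfar
  have hend : N + √(38 / 3 * N) + 19 / 6 = N + √(2 * (19 / 3) * N) + 19 / 3 / 2 := by ring_nf
  rw [hend] at hz ht
  have hnear : ((t : ℝ) - z) ^ 2 ≤ 19 / 3 * (z + t) :=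
    sq_sub_le_mul_add_of_mem_Icc (by norm_num) hN hz ht
  linarith

theorem cubes_sidon_38_3_general {N : ℝ} (hN : 0 ≤ N) {x y z t : ℕ}
    (hx : (x : ℝ) ∈ Set.Icc N (N + √(38 / 3 * N) + 19 / 6))
    (hy : (y : ℝ) ∈ Set.Icc N (N + √(38 / 3 * N) + 19 / 6))
    (hz : (z : ℝ) ∈ Set.Icc N (N + √(38 / 3 * N) + 19 / 6))
    (ht : (t : ℝ) ∈ Set.Icc N (N + √(38 / 3 * N) + 19 / 6))
    (heq : x ^ 3 + y ^ 3 = z ^ 3 + t ^ 3) :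
    ({x, y} : Finset ℕ) = {z, t} := by
  have hadd : x + y = z + t :=
    (add_le_add_of_cube_add_cube_eq hN hz ht heq).antisymm
      (add_le_add_of_cube_add_cube_eq hN hx hy heq.symm)
  have hcases : x = z ∧ y = t ∨ x = t ∧ y = z := by
    rcases Nat.eq_zero_or_pos (z + t) with hs | hs
    · lia
    · exact_mod_cast eq_and_eq_or_eq_and_eq_of_cube_add_cube_eq (x := (x : ℤ)) (y := y) (z := z)
        (t := t) (by norm_num) (mod_cast hs.ne') (mod_cast hadd) (mod_cast heq)
  rcases hcases with ⟨rfl, rfl⟩ | ⟨rfl, rfl⟩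
  · rfl
  · exact Finset.pair_comm x y

/-- For every positive integer `N`, the set
`{n³ : N ≤ n, (n : ℝ) ≤ N + √((38/3)N) + 19/6}` is a Sidon set. -/
theorem cubes_sidon_38_3 (N : ℕ) (hN : 0 < N)
    (x y z t : ℕ) (hx : 0 < x) (hy : 0 < y) (hz : 0 < z) (ht : 0 < t)
    (hxN : N ≤ x) (hyN : N ≤ y) (hzN : N ≤ z) (htN : N ≤ t)
    (hxU : (x : ℝ) ≤ N + Real.sqrt ((38 / 3) * N) + 19 / 6)
    (hyU : (y : ℝ) ≤ N + Real.sqrt ((38 / 3) * N) + 19 / 6)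
    (hzU : (z : ℝ) ≤ N + Real.sqrt ((38 / 3) * N) + 19 / 6)
    (htU : (t : ℝ) ≤ N + Real.sqrt ((38 / 3) * N) + 19 / 6)
    (heq : x ^ 3 + y ^ 3 = z ^ 3 + t ^ 3) :
    ({x, y} : Finset ℕ) = {z, t} :=
  cubes_sidon_38_3_general N.cast_nonneg ⟨mod_cast hxN, hxU⟩ ⟨mod_cast hyN, hyU⟩
    ⟨mod_cast hzN, hzU⟩ ⟨mod_cast htN, htU⟩ heq
end

section
/- For every real ε > 0 there exist infinitely many positive integers N such that the set {n³ : n ∈ ℕ, N ≤ n and (n : ℝ) ≤ N + √((38/3)·N) + 19/6 + ε} is not a Sidon set; in other words, the constants 38/3 and 19/6 in the previous statement are sharp. -/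
/-!
Since `n³ ≡ n (mod 6)`, two pairs with equal sums of cubes have sums congruent modulo `6`; we look
for collisions where these sums are `S` and `S + 6`. If the differences in the two pairs are `D`
and `E`, equality of the sums of cubes reads `S(S² + 3D²) = (S + 6)((S + 6)² + 3E²)`. Choosing
`S = 3E² + 36` makes `S` divide both sides and reduces this to the Pell-type equation
`D² = 19E² + 254`, which has infinitely many solutions in odd integers. The smallest of the four
numbers is `N = (S - D)/2` and the largest is `N + D`, and eliminating `S` and `E` gives
`(D - 19/6)² = (38/3)N + 1297/36`, so that `D = √((38/3)N) + 19/6 + o(1)`.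
-/

open Filter

/-- The Pell-type equation `D² = 19E² + 254` for the odd numbers `D = 2a + 1` and `E = 2b + 1`,
written in terms of `a` and `b`; its solutions parametrise the collisions of sums of two cubes. -/
def PellPair (a b : ℕ) : Prop :=
  a ^ 2 + a = 19 * b ^ 2 + 19 * b + 68

namespace PellPair

variable {a b : ℕ}

/- Multiplication of `D + E√19` by the unit `170 + 39√19`. -/
theorem next (h : PellPair a b) :
    PellPair (170 * a + 741 * b + 455) (39 * a + 170 * b + 104) := by
  unfold PellPair at *
  linear_combination h

theorem exists_ge (M : ℕ) : ∃ a b, M ≤ b ∧ PellPair a b := by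
  induction M with
  | zero => exact ⟨13, 2, Nat.zero_le 2, by norm_num [PellPair]⟩
  | succ M ih =>
    obtain ⟨a, b, hMb, h⟩ := ih
    exact ⟨_, _, by omega, h.next⟩

theorem add_three_le (h : PellPair a b) : b + 3 ≤ a := by
  unfold PellPair at h
  by_contra! hlt
  nlinarith

theorem le_five_mul_add_eight (h : PellPair a b) : a ≤ 5 * b + 8 := by
  unfold PellPair at h
  by_contra! hlt
  nlinarith

end PellPair

theorem cube_sub_add_cube_add_add_one {R : Type*} [CommRing R] (c a : R) :
    (c - a) ^ 3 + (c + a + 1) ^ 3 = (2 * c + 1) * (c ^ 2 + c + 1 + 3 * (a ^ 2 + a)) := by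
  ring

theorem cube_add_cube_eq_of_sq_add_self_eq {R : Type*} [CommRing R] {a b c : R}
    (hab : a ^ 2 + a = 19 * b ^ 2 + 19 * b + 68) (hc : c = 6 * b ^ 2 + 6 * b + 19) :
    (c - a) ^ 3 + (c + a + 1) ^ 3 = (c + 3 - b) ^ 3 + (c + 3 + b + 1) ^ 3 := by
  rw [cube_sub_add_cube_add_add_one, cube_sub_add_cube_add_add_one, hab, hc]
  ring

theorem PellPair.cube_add_cube_eq {a b N : ℕ} (h : PellPair a b)
    (hN : N + a = 6 * b ^ 2 + 6 * b + 19) :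
    N ^ 3 + (N + (2 * a + 1)) ^ 3 = (N + a + 3 - b) ^ 3 + (N + a + 3 + b + 1) ^ 3 := by
  have hb : b ≤ N + a + 3 := by have := h.add_three_le; omega
  unfold PellPair at h
  zify [hb] at h hN ⊢
  convert cube_add_cube_eq_of_sq_add_self_eq h hN using 3 <;> ring

theorem PellPair.sq_sub_eq {a b N : ℕ} (h : PellPair a b)
    (hN : N + a = 6 * b ^ 2 + 6 * b + 19) :
    (((2 * a + 1 : ℕ) : ℝ) - 19 / 6) ^ 2 = 38 / 3 * N + 1297 / 36 := by
  have hR : (a : ℝ) ^ 2 + a = 19 * b ^ 2 + 19 * b + 68 := by exact_mod_cast h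
  have hNR : (N : ℝ) + a = 6 * b ^ 2 + 6 * b + 19 := by exact_mod_cast hN
  push_cast
  linear_combination 4 * hR - 38 / 3 * hNR

theorem exists_gt_cube_add_cube_eq (M : ℕ) :
    ∃ N > M, ∃ d z t : ℕ, z ∈ Set.Ioc N (N + d) ∧ t ∈ Set.Ioc N (N + d) ∧
      N ^ 3 + (N + d) ^ 3 = z ^ 3 + t ^ 3 ∧ ((d : ℝ) - 19 / 6) ^ 2 = 38 / 3 * N + 1297 / 36 := by
  obtain ⟨a, b, hMb, h⟩ := PellPair.exists_ge M
  have hba := h.add_three_le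
  have hab := h.le_five_mul_add_eight
  obtain ⟨N, hN⟩ : ∃ N, N + a = 6 * b ^ 2 + 6 * b + 19 :=
    ⟨_, Nat.sub_add_cancel (by omega)⟩
  exact ⟨N, by omega, 2 * a + 1, N + a + 3 - b, N + a + 3 + b + 1, ⟨by omega, by omega⟩,
    ⟨by omega, by omega⟩, h.cube_add_cube_eq hN, h.sq_sub_eq hN⟩

theorem eventually_sqrt_add_le_sqrt_add (K : ℝ) {ε : ℝ} (hε : 0 < ε) :
    ∀ᶠ x in atTop, √(x + K) ≤ √x + ε := by
  filter_upwards [eventually_ge_atTop 0, Real.tendsto_sqrt_atTop.eventually_ge_atTop (K / (2 * ε))]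
    with x hx hK
  rw [div_le_iff₀ (by positivity)] at hK
  refine Real.sqrt_le_iff.mpr ⟨by positivity, ?_⟩
  calc x + K ≤ √x ^ 2 + √x * (2 * ε) + ε ^ 2 := by
        rw [Real.sq_sqrt hx]; linarith [sq_nonneg ε]
    _ = (√x + ε) ^ 2 := by ring

/-- For every `ε > 0` there are infinitely many positive integers `N` such that
`{n³ : N ≤ n, (n : ℝ) ≤ N + √((38/3)N) + 19/6 + ε}` is not a Sidon set. -/
theorem cubes_sharpness (ε : ℝ) (hε : 0 < ε) :
    ∀ N₀ : ℕ, ∃ N : ℕ, N₀ < N ∧ 0 < N ∧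
      ∃ x y z t : ℕ, 0 < x ∧ 0 < y ∧ 0 < z ∧ 0 < t ∧
        N ≤ x ∧ N ≤ y ∧ N ≤ z ∧ N ≤ t ∧
        (x : ℝ) ≤ N + Real.sqrt ((38 / 3) * N) + 19 / 6 + ε ∧
        (y : ℝ) ≤ N + Real.sqrt ((38 / 3) * N) + 19 / 6 + ε ∧
        (z : ℝ) ≤ N + Real.sqrt ((38 / 3) * N) + 19 / 6 + ε ∧
        (t : ℝ) ≤ N + Real.sqrt ((38 / 3) * N) + 19 / 6 + ε ∧
        x ^ 3 + y ^ 3 = z ^ 3 + t ^ 3 ∧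
        ({x, y} : Finset ℕ) ≠ {z, t} := by
  intro N₀
  have hlim : Tendsto (fun N : ℕ ↦ (38 / 3 : ℝ) * N) atTop atTop :=
    tendsto_natCast_atTop_atTop.const_mul_atTop (by norm_num)
  obtain ⟨M, hM⟩ := eventually_atTop.mp
    (hlim.eventually (eventually_sqrt_add_le_sqrt_add (1297 / 36) hε))
  obtain ⟨N, hN, d, z, t, ⟨hNz, hzd⟩, ⟨hNt, htd⟩, hcubes, hd⟩ :=
    exists_gt_cube_add_cube_eq (max N₀ M)
  have hd_le : (d : ℝ) - 19 / 6 ≤ √(38 / 3 * N) + ε :=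
    (Real.le_sqrt_of_sq_le hd.le).trans (hM N (by omega))
  have hbound (n : ℕ) (hn : n ≤ N + d) : (n : ℝ) ≤ N + √(38 / 3 * N) + 19 / 6 + ε := by
    have : (n : ℝ) ≤ N + d := by exact_mod_cast hn
    linarith
  have hne : ({N, N + d} : Finset ℕ) ≠ {z, t} := fun h ↦ by
    have hmem : N ∈ ({z, t} : Finset ℕ) := h ▸ Finset.mem_insert_self N _
    rw [Finset.mem_insert, Finset.mem_singleton] at hmem
    omega
  exact ⟨N, by omega, by omega, N, N + d, z, t, by omega, by omega, by omega, by omega, le_rfl,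
    by omega, hNz.le, hNt.le, hbound N (by omega), hbound _ le_rfl, hbound z hzd, hbound t htd,
    hcubes, hne⟩
end

section
/- There is an absolute constant c > 0 such that for every positive integer N the set {n³ : n ∈ ℕ, N ≤ n and (n : ℝ) ≤ N + c·N^{2/3}} is not a Sidon set; equivalently, the equation x³ + y³ = z³ + t³ has a nontrivial solution in positive integers (one with {x, y} ≠ {z, t}) satisfying N ≤ x, y, z, t ≤ N + c·N^{2/3} (as reals). -/
/-!
Since `(s + d)³ + (s - d)³ = 2s(s² + 3d²)`, two pairs `s ± d` and `s + h ± d'` have equal sums of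
cubes when, to leading order, `d² - d'² = s * h`. With `s = e³` and `h = 3e` this reads
`d² - d'² = 3e⁴`, which suggests `d ≈ 2e²` and `d' ≈ e²`; correcting `d` to `2e² + 3` makes the
equality exact. All four numbers lie within `O(e²)` of `e³`, and consecutive cubes near `N` are only
`O(N^(2/3))` apart, so some `e = N^(1/3) + O(1)` places the solution just above `N`.
-/

section Family

variable {R : Type*} [CommRing R]

theorem cube_add_cube_eq_cube_add_cube (e : R) :
    (e ^ 3 + (2 * e ^ 2 + 3)) ^ 3 + (e ^ 3 - (2 * e ^ 2 + 3)) ^ 3 =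
      (e ^ 3 + 3 * e + e ^ 2) ^ 3 + (e ^ 3 + 3 * e - e ^ 2) ^ 3 := by
  ring

variable [LinearOrder R] [IsStrictOrderedRing R]

theorem cube_sub_lt_cube_add_sub_sq (e : R) :
    e ^ 3 - (2 * e ^ 2 + 3) < e ^ 3 + 3 * e - e ^ 2 := by
  nlinarith [sq_nonneg (2 * e + 3)]

theorem cube_add_add_sq_lt_cube_add (e : R) :
    e ^ 3 + 3 * e + e ^ 2 < e ^ 3 + (2 * e ^ 2 + 3) := by
  nlinarith [sq_nonneg (2 * e - 3)]

theorem cube_le_cube_sub {r e : R} (hr : 1 ≤ r) (hre : r + 2 ≤ e) :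
    r ^ 3 ≤ e ^ 3 - (2 * e ^ 2 + 3) := by
  have he : 3 ≤ e := by linarith
  calc
    r ^ 3 ≤ (e - 2) ^ 3 := by gcongr; linarith
    _ ≤ e ^ 3 - (2 * e ^ 2 + 3) := by
      nlinarith [mul_nonneg (zero_le_three.trans he) (sub_nonneg.mpr he)]

theorem cube_add_le_cube_add_sq {r e : R} (hr : 1 ≤ r) (he : 0 ≤ e) (her : e ≤ r + 3) :
    e ^ 3 + (2 * e ^ 2 + 3) ≤ r ^ 3 + 98 * r ^ 2 :=
  calc
    e ^ 3 + (2 * e ^ 2 + 3) ≤ (r + 3) ^ 3 + (2 * (r + 3) ^ 2 + 3) := by gcongr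
    _ = r ^ 3 + (11 * r ^ 2 + 39 * r + 48) := by ring
    _ ≤ r ^ 3 + 98 * r ^ 2 := by nlinarith

end Family

theorem exists_nontrivial_add_cubes_eq {e : ℤ} (he : 3 ≤ e) :
    ∃ x y z t : ℕ, y < t ∧ t ≤ z ∧ z < x ∧ x ^ 3 + y ^ 3 = z ^ 3 + t ^ 3 ∧
      (y : ℤ) = e ^ 3 - (2 * e ^ 2 + 3) ∧ (x : ℤ) = e ^ 3 + (2 * e ^ 2 + 3) := by
  have hyt := cube_sub_lt_cube_add_sub_sq e
  have htz : e ^ 3 + 3 * e - e ^ 2 ≤ e ^ 3 + 3 * e + e ^ 2 := by linarith [sq_nonneg e]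
  have hzx := cube_add_add_sq_lt_cube_add e
  have hy : 0 ≤ e ^ 3 - (2 * e ^ 2 + 3) := by
    linarith [cube_le_cube_sub le_rfl he]
  have hsum := cube_add_cube_eq_cube_add_cube e
  obtain ⟨y, hy'⟩ := Int.eq_ofNat_of_zero_le hy
  obtain ⟨t, ht'⟩ := Int.eq_ofNat_of_zero_le (hy.trans hyt.le)
  obtain ⟨z, hz'⟩ := Int.eq_ofNat_of_zero_le ((hy.trans hyt.le).trans htz)
  obtain ⟨x, hx'⟩ := Int.eq_ofNat_of_zero_le (((hy.trans hyt.le).trans htz).trans hzx.le)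
  rw [hy', ht'] at hyt
  rw [ht', hz'] at htz
  rw [hz', hx'] at hzx
  rw [hx', hy', hz', ht'] at hsum
  exact ⟨x, y, z, t, mod_cast hyt, mod_cast htz, mod_cast hzx, mod_cast hsum, hy'.symm, hx'.symm⟩

theorem exists_nontrivial_add_cubes_eq_between {r : ℝ} (hr : 1 ≤ r) :
    ∃ x y z t : ℕ, y < t ∧ t ≤ z ∧ z < x ∧ x ^ 3 + y ^ 3 = z ^ 3 + t ^ 3 ∧
      r ^ 3 ≤ y ∧ (x : ℝ) ≤ r ^ 3 + 98 * r ^ 2 := by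
  obtain ⟨e, hre, her⟩ : ∃ e : ℤ, r + 2 ≤ e ∧ (e : ℝ) ≤ r + 3 :=
    ⟨⌈r + 2⌉, Int.le_ceil _, by linarith [Int.ceil_lt_add_one (r + 2)]⟩
  have he : (3 : ℝ) ≤ e := by linarith
  obtain ⟨x, y, z, t, hyt, htz, hzx, hsum, hy, hx⟩ := exists_nontrivial_add_cubes_eq (mod_cast he)
  have hy' : (y : ℝ) = e ^ 3 - (2 * e ^ 2 + 3) := mod_cast hy
  have hx' : (x : ℝ) = e ^ 3 + (2 * e ^ 2 + 3) := mod_cast hx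
  exact ⟨x, y, z, t, hyt, htz, hzx, hsum, hy' ▸ cube_le_cube_sub hr hre,
    hx' ▸ cube_add_le_cube_add_sq hr (by linarith) her⟩

theorem exists_cube_eq_and_sq_eq_rpow {a : ℝ} (ha : 1 ≤ a) :
    ∃ r : ℝ, 1 ≤ r ∧ r ^ 3 = a ∧ r ^ 2 = a ^ ((2 : ℝ) / 3) := by
  have ha₀ : 0 ≤ a := by linarith
  refine ⟨a ^ ((1 : ℝ) / 3), Real.one_le_rpow ha (by norm_num), ?_, ?_⟩ <;>
    rw [← Real.rpow_mul_natCast ha₀] <;> norm_num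

theorem pair_ne_pair_of_lt {α : Type*} [Preorder α] [DecidableEq α] {x y z t : α}
    (hz : z < x) (ht : t < x) : ({x, y} : Finset α) ≠ {z, t} := by
  intro h
  have hx : x ∈ ({z, t} : Finset α) := h ▸ Finset.mem_insert_self x {y}
  rcases Finset.mem_insert.mp hx with hxz | hxt
  · exact hz.ne' hxz
  · exact ht.ne' (Finset.mem_singleton.mp hxt)

/-- There is an absolute constant `c > 0` such that for every positive integer `N`
the equation `x³ + y³ = z³ + t³` has a nontrivial solution with
`N ≤ x, y, z, t ≤ N + c·N^(2/3)`. -/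
theorem cubes_not_sidon_N_two_thirds :
    ∃ c : ℝ, 0 < c ∧ ∀ N : ℕ, 0 < N →
      ∃ x y z t : ℕ, 0 < x ∧ 0 < y ∧ 0 < z ∧ 0 < t ∧
        N ≤ x ∧ N ≤ y ∧ N ≤ z ∧ N ≤ t ∧
        (x : ℝ) ≤ N + c * (N : ℝ) ^ ((2 : ℝ) / 3) ∧
        (y : ℝ) ≤ N + c * (N : ℝ) ^ ((2 : ℝ) / 3) ∧
        (z : ℝ) ≤ N + c * (N : ℝ) ^ ((2 : ℝ) / 3) ∧
        (t : ℝ) ≤ N + c * (N : ℝ) ^ ((2 : ℝ) / 3) ∧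
        x ^ 3 + y ^ 3 = z ^ 3 + t ^ 3 ∧
        ({x, y} : Finset ℕ) ≠ {z, t} := by
  refine ⟨98, by norm_num, fun N hN => ?_⟩
  obtain ⟨r, hr, hr3, hr2⟩ := exists_cube_eq_and_sq_eq_rpow (a := N) (mod_cast hN)
  obtain ⟨x, y, z, t, hyt, htz, hzx, hsum, hNy, hxN⟩ := exists_nontrivial_add_cubes_eq_between hr
  rw [hr3] at hNy hxN
  rw [hr2] at hxN
  have hNy' : N ≤ y := mod_cast hNy
  have le_bound {n : ℕ} (hn : n ≤ x) : (n : ℝ) ≤ N + 98 * (N : ℝ) ^ ((2 : ℝ) / 3) :=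
    (Nat.cast_le.mpr hn).trans hxN
  exact ⟨x, y, z, t, by omega, by omega, by omega, by omega, by omega, hNy', by omega, by omega,
    le_bound le_rfl, le_bound (by omega), le_bound hzx.le, le_bound (by omega), hsum,
    pair_ne_pair_of_lt hzx (htz.trans_lt hzx)⟩
end

section
/- For every real ε > 0 there exist infinitely many positive integers N such that the set {n³ : n ∈ ℕ, N ≤ n and (n : ℝ) ≤ N + N^{4/7 − ε}} is a Sidon set; that is, for infinitely many N, every solution of x³ + y³ = z³ + t³ in positive integers with N ≤ x, y, z, t ≤ N + N^{4/7 − ε} (as reals) satisfies {x, y} = {z, t}. -/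
/-!
Suppose `x³ + y³ = z³ + t³` nontrivially with all four numbers in `[N, N + h]`, say
`x + y < z + t`. Then `z + t = x + y + 3j`, and with `a = |x - y|`, `b = |z - t|` and
`m = a² - b² - 3j(x + y) - 9j²` one finds `j ≪ h²/N`, `m ≪ h⁴/N²` and the Pell-type equation
`m a² = (m + 9j²) b² + C`, where `C = 27j⁴ + 9mj² + m²`. Fix `j` and `m`, and suppose `C` is
coprime to `m` and to `m + 9j²`; the general case reduces to this one by cancelling common primes.
Sort the solutions by `gcd(a, b)`, whose square divides `C`, and the primitive ones by
`gcd(C, r - r₀)`, where the slope `r ≡ a/b` modulo `C` is a square root of `(m + 9j²)/m` and `r₀` is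
a reference slope. Within a class the slopes agree up to a factor `2`, and then solutions of
comparable size coincide, so there are at most `d(C)² = N^{o(1)}` of them. Each solution spoils at
most `h + 1` values of `N`. Hence if every `N ∈ [8L, 9L)` were spoilt, then
`L ≤ (h²/L) (h⁴/L²) h L^{o(1)}`, that is, `h ≥ L^{4/7 - o(1)}`.
-/

section SquareRoots

variable {C v r₀ r₁ r₂ : ℤ}

theorem dvd_of_dvd_mul_of_eq_mul_gcd {s t : ℤ} (hC : C ≠ 0) (hv : C = v * Int.gcd C s)
    (h : C ∣ s * t) : v ∣ t := by
  have hgcd : (Int.gcd C s : ℤ) ≠ 0 := fun h₀ => hC (by rw [hv, h₀, mul_zero])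
  have hdvd : C ∣ Int.gcd C s * |t| := by
    have := Int.dvd_coe_gcd (dvd_mul_right C t) h
    rwa [Int.gcd_mul_right, Nat.cast_mul, Int.natCast_natAbs] at this
  rw [← dvd_abs, ← mul_dvd_mul_iff_right hgcd, ← hv, mul_comm]
  exact hdvd

/-- With `u = gcd(C, r₁ - r₀) = gcd(C, r₂ - r₀)` and `C = vu`, both `u` and `v` divide `r₁ - r₂`,
and `gcd(u, v) ∣ 2r₀`. -/
theorem dvd_two_mul_sub_of_gcd_sub_eq (hC : C ≠ 0) (hr₀ : IsCoprime r₀ C)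
    (h₁ : C ∣ r₁ ^ 2 - r₀ ^ 2) (h₂ : C ∣ r₂ ^ 2 - r₀ ^ 2)
    (hgcd : Int.gcd C (r₁ - r₀) = Int.gcd C (r₂ - r₀)) : C ∣ 2 * (r₁ - r₂) := by
  set u : ℤ := ↑(Int.gcd C (r₁ - r₀)) with hu
  obtain ⟨v, hv⟩ : u ∣ C := Int.gcd_dvd_left ..
  rw [mul_comm] at hv
  have hu₁ : u ∣ r₁ - r₀ := Int.gcd_dvd_right ..
  have hu₂ : u ∣ r₂ - r₀ := by rw [hu, hgcd]; exact Int.gcd_dvd_right ..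
  have hv₁ : v ∣ r₁ + r₀ :=
    dvd_of_dvd_mul_of_eq_mul_gcd hC hv (by rwa [mul_comm, ← sq_sub_sq])
  have hv₂ : v ∣ r₂ + r₀ :=
    dvd_of_dvd_mul_of_eq_mul_gcd hC (by rwa [← hgcd]) (by rwa [mul_comm, ← sq_sub_sq])
  have hlcm : lcm u v ∣ r₁ - r₂ :=
    lcm_dvd (by simpa using dvd_sub hu₁ hu₂) (by simpa using dvd_sub hv₁ hv₂)
  have hgcd_two : gcd u v ∣ 2 := by
    have hdvd : gcd u v ∣ 2 * r₀ := by
      have := dvd_sub ((gcd_dvd_right u v).trans hv₁) ((gcd_dvd_left u v).trans hu₁)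
      rwa [add_sub_sub_cancel, ← two_mul] at this
    have hdvdC : gcd u v ∣ C := (gcd_dvd_left u v).trans ⟨v, by rw [hv, mul_comm]⟩
    exact (hr₀.symm.of_isCoprime_of_dvd_left hdvdC).dvd_of_dvd_mul_right hdvd
  rw [hv, mul_comm, ← (gcd_mul_lcm u v).dvd_iff_dvd_left]
  exact mul_dvd_mul hgcd_two hlcm

end SquareRoots

section Pell

/-- If `x₁ < x₂`, the identities `A w E = C (y₂² - y₁²)` and `B w E = C (x₂² - x₁²)` for
`w = x₁y₂ - x₂y₁ ≥ C / 2` and `E = x₁y₂ + x₂y₁` force `x₁ ≤ 2y₂` and `5y₂ ≤ 2x₁`. -/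
theorem pell_le_of_dvd {A B C x₁ y₁ x₂ y₂ : ℤ} (hA : 0 < A) (hB : 0 < B) (hC : 0 < C)
    (hx₁ : 0 ≤ x₁) (hy₁ : 0 ≤ y₁) (hy₂ : 0 ≤ y₂)
    (h₁ : A * x₁ ^ 2 = B * y₁ ^ 2 + C) (h₂ : A * x₂ ^ 2 = B * y₂ ^ 2 + C)
    (hclose : 5 * x₂ ^ 2 ≤ 6 * x₁ ^ 2) (hdvd : C ∣ 2 * (x₁ * y₂ - x₂ * y₁)) : x₂ ≤ x₁ := by
  by_contra! hlt
  set w := x₁ * y₂ - x₂ * y₁ with hw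
  set E := x₁ * y₂ + x₂ * y₁ with hE
  have hAwE : w * (A * E) = C * (y₂ ^ 2 - y₁ ^ 2) := by
    linear_combination y₂ ^ 2 * h₁ - y₁ ^ 2 * h₂
  have hBwE : w * (B * E) = C * (x₂ ^ 2 - x₁ ^ 2) := by
    linear_combination x₂ ^ 2 * h₁ - x₁ ^ 2 * h₂
  have hx₁_pos : 0 < x₁ := by
    refine hx₁.lt_of_ne' fun h => ?_
    rw [h] at h₁
    nlinarith [mul_nonneg hB.le (sq_nonneg y₁)]
  have hx₂ : 0 ≤ x₂ := hx₁.trans hlt.le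
  have hE_nonneg : 0 ≤ E := by positivity
  have hw_pos : 0 < w := by
    refine pos_of_mul_pos_left ?_ (mul_nonneg hB.le hE_nonneg)
    rw [hBwE]
    exact mul_pos hC (sub_pos.mpr (pow_lt_pow_left₀ hlt hx₁ two_ne_zero))
  have hCw : C ≤ 2 * w := Int.le_of_dvd (by positivity) hdvd
  have hy₂_pos : 0 < y₂ := by
    refine hy₂.lt_of_ne' fun h => ?_
    rw [hw, h] at hw_pos
    nlinarith [mul_nonneg hx₂ hy₁]
  have bound {F Q : ℤ} (hF : 0 ≤ F) (h : w * F = C * Q) : F ≤ 2 * Q :=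
    le_of_mul_le_mul_left (by nlinarith [mul_le_mul_of_nonneg_right hCw hF]) hC
  have hAE : A * E ≤ 2 * (y₂ ^ 2 - y₁ ^ 2) := bound (by positivity) hAwE
  have hBE : B * E ≤ 2 * (x₂ ^ 2 - x₁ ^ 2) := bound (by positivity) hBwE
  have hxy : x₁ * y₂ ≤ E := le_add_of_nonneg_right (mul_nonneg hx₂ hy₁)
  have hx_le : x₁ ≤ 2 * y₂ :=
    le_of_mul_le_mul_right (by nlinarith [sq_nonneg y₁]) hy₂_pos
  have hy_le : 5 * y₂ ≤ 2 * x₁ := le_of_mul_le_mul_left (by nlinarith) hx₁_pos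
  linarith

theorem pell_coprime_right {A B C x y : ℕ} (hAC : A.Coprime C) (hxy : x.Coprime y)
    (h : A * x ^ 2 = B * y ^ 2 + C) : y.Coprime C := by
  have hdvd : y.gcd C ∣ A * x ^ 2 := by
    rw [h]
    exact dvd_add (((Nat.gcd_dvd_left y C).pow two_ne_zero).mul_left B) (Nat.gcd_dvd_right y C)
  have hdvd_sq : y.gcd C ∣ x ^ 2 :=
    (hAC.symm.coprime_dvd_left (Nat.gcd_dvd_right y C)).dvd_of_dvd_mul_left hdvd
  exact Nat.eq_one_of_dvd_coprimes (hxy.pow_left 2) hdvd_sq (Nat.gcd_dvd_left y C)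

theorem pell_exists_slope {A B C x y : ℤ} (hyC : IsCoprime y C)
    (h : A * x ^ 2 = B * y ^ 2 + C) : ∃ r : ℤ, C ∣ x - r * y ∧ C ∣ A * r ^ 2 - B := by
  obtain ⟨α, β, hαβ⟩ := hyC
  refine ⟨α * x, ⟨x * β, by linear_combination (-x) * hαβ⟩,
    ⟨α ^ 2 - B * β * (α * y + 1), ?_⟩⟩
  linear_combination α ^ 2 * h + B * (α * y + 1) * hαβ

theorem pell_dvd_two_mul_cross {C x₁ y₁ x₂ y₂ r₁ r₂ : ℤ} (h₁ : C ∣ x₁ - r₁ * y₁)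
    (h₂ : C ∣ x₂ - r₂ * y₂) (hr : C ∣ 2 * (r₁ - r₂)) : C ∣ 2 * (x₁ * y₂ - x₂ * y₁) := by
  have heq : 2 * (x₁ * y₂ - x₂ * y₁) = (x₁ - r₁ * y₁) * (2 * y₂) - (x₂ - r₂ * y₂) * (2 * y₁)
      + 2 * (r₁ - r₂) * (y₁ * y₂) := by ring
  rw [heq]
  exact dvd_add (dvd_sub (h₁.mul_right _) (h₂.mul_right _)) (hr.mul_right _)

theorem gcd_sq_dvd_of_pell {A B C x y : ℕ} (h : A * x ^ 2 = B * y ^ 2 + C) :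
    x.gcd y ^ 2 ∣ C := by
  have hx : x.gcd y ^ 2 ∣ B * y ^ 2 + C := by
    rw [← h]
    exact (pow_dvd_pow_of_dvd (Nat.gcd_dvd_left x y) 2).mul_left A
  exact (Nat.dvd_add_right ((pow_dvd_pow_of_dvd (Nat.gcd_dvd_right x y) 2).mul_left B)).mp hx

/-- A finite family of solutions `(x, y)` of `A x² = B y² + C` in natural numbers whose first
coordinates are close together. The constant `6 / 5` only has to be small enough that each class
of solutions modulo `C` meets the family at most once. -/
structure IsPellCluster (A B C : ℕ) (S : Finset (ℕ × ℕ)) : Prop where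
  eqn : ∀ q ∈ S, A * q.1 ^ 2 = B * q.2 ^ 2 + C
  close : ∀ q ∈ S, ∀ r ∈ S, 5 * r.1 ^ 2 ≤ 6 * q.1 ^ 2

namespace IsPellCluster

variable {A B C : ℕ} {S : Finset (ℕ × ℕ)}

theorem subset {T : Finset (ℕ × ℕ)} (hS : IsPellCluster A B C S) (hTS : T ⊆ S) :
    IsPellCluster A B C T where
  eqn q hq := hS.eqn q (hTS hq)
  close q hq r hr := hS.close q (hTS hq) r (hTS hr)

theorem eq_of_dvd (hS : IsPellCluster A B C S) (hA : 0 < A) (hB : 0 < B) (hC : 0 < C)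
    {q r : ℕ × ℕ} (hq : q ∈ S) (hr : r ∈ S)
    (hdvd : (C : ℤ) ∣ 2 * ((q.1 : ℤ) * r.2 - r.1 * q.2)) : q = r := by
  have hle {q r : ℕ × ℕ} (hq : q ∈ S) (hr : r ∈ S)
      (hdvd : (C : ℤ) ∣ 2 * ((q.1 : ℤ) * r.2 - r.1 * q.2)) : r.1 ≤ q.1 := by
    exact_mod_cast pell_le_of_dvd (A := A) (B := B) (x₁ := q.1) (x₂ := r.1)
      (by exact_mod_cast hA) (by exact_mod_cast hB) (by exact_mod_cast hC)
      (by positivity) (by positivity) (by positivity) (by exact_mod_cast hS.eqn q hq)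
      (by exact_mod_cast hS.eqn r hr) (by exact_mod_cast hS.close q hq r hr) hdvd
  have hfst : q.1 = r.1 :=
    le_antisymm (hle hr hq (by rwa [← dvd_neg, ← mul_neg, neg_sub])) (hle hq hr hdvd)
  have hsq : B * q.2 ^ 2 = B * r.2 ^ 2 := by
    rw [← Nat.add_right_cancel_iff (n := C), ← hS.eqn q hq, ← hS.eqn r hr, hfst]
  exact Prod.ext hfst (Nat.pow_left_injective two_ne_zero (Nat.eq_of_mul_eq_mul_left hB hsq))

theorem card_le_of_primitive (hS : IsPellCluster A B C S) (hA : 0 < A) (hB : 0 < B) (hC : 0 < C)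
    (hAC : A.Coprime C) (hBC : B.Coprime C) (hprim : ∀ q ∈ S, q.1.Coprime q.2) :
    S.card ≤ C.divisors.card := by
  obtain rfl | ⟨q₀, hq₀⟩ := S.eq_empty_or_nonempty
  · simp
  have hA_coprime : IsCoprime (A : ℤ) C := Nat.isCoprime_iff_coprime.mpr hAC
  have hslope : ∀ q ∈ S, ∃ r : ℤ, (C : ℤ) ∣ q.1 - r * q.2 ∧ (C : ℤ) ∣ A * r ^ 2 - B :=
    fun q hq => pell_exists_slope
      (Nat.isCoprime_iff_coprime.mpr (pell_coprime_right hAC (hprim q hq) (hS.eqn q hq)))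
      (by exact_mod_cast hS.eqn q hq)
  choose! r hr_slope hr_sq using hslope
  have hr₀ : IsCoprime (r q₀) C := by
    obtain ⟨k, hk⟩ := hr_sq q₀ hq₀
    have hcop : IsCoprime ((B : ℤ) + C * k) C :=
      (Nat.isCoprime_iff_coprime.mpr hBC).add_mul_left_left k
    rw [← hk, add_sub_cancel] at hcop
    exact (IsCoprime.pow_left_iff two_pos).mp hcop.of_mul_left_right
  have hsq_sub (q) (hq : q ∈ S) : (C : ℤ) ∣ r q ^ 2 - r q₀ ^ 2 := by
    refine hA_coprime.symm.dvd_of_dvd_mul_left ?_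
    simpa only [mul_sub, sub_sub_sub_cancel_right] using dvd_sub (hr_sq q hq) (hr_sq q₀ hq₀)
  refine Finset.card_le_card_of_injOn (fun q => Int.gcd C (r q - r q₀)) (fun q _ => ?_) ?_
  · exact Nat.mem_divisors.mpr ⟨Int.ofNat_dvd.mp (Int.gcd_dvd_left ..), hC.ne'⟩
  · intro q hq q' hq' hgcd
    exact hS.eq_of_dvd hA hB hC hq hq' (pell_dvd_two_mul_cross (hr_slope q hq) (hr_slope q' hq')
      (dvd_two_mul_sub_of_gcd_sub_eq (by exact_mod_cast hC.ne') hr₀ (hsq_sub q hq)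
        (hsq_sub q' hq') hgcd))

theorem exists_rescale {A' B' C' r s : ℕ} (hS : IsPellCluster A B C S) (hr : 0 < r) (hs : 0 < s)
    (hdvd : ∀ q ∈ S, r ∣ q.1 ∧ s ∣ q.2)
    (heqn : ∀ x y, A * (r * x) ^ 2 = B * (s * y) ^ 2 + C → A' * x ^ 2 = B' * y ^ 2 + C') :
    ∃ T : Finset (ℕ × ℕ), IsPellCluster A' B' C' T ∧ T.card = S.card ∧
      ∀ q ∈ T, (r * q.1, s * q.2) ∈ S := by
  classical
  let scale : ℕ × ℕ → ℕ × ℕ := Prod.map (r * ·) (s * ·)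
  have hscale : Function.Injective scale :=
    (mul_right_injective₀ hr.ne').prodMap (mul_right_injective₀ hs.ne')
  have hmem {q : ℕ × ℕ} (hq : q ∈ S.preimage scale hscale.injOn) : (r * q.1, s * q.2) ∈ S :=
    Finset.mem_preimage (f := scale).mp hq
  refine ⟨S.preimage scale hscale.injOn, ⟨fun q hq => heqn _ _ (hS.eqn _ (hmem hq)), ?_⟩, ?_,
    fun q => hmem⟩
  · intro q hq q' hq'
    have hclose := hS.close _ (hmem hq) _ (hmem hq')
    simp only [mul_pow, mul_left_comm _ (r ^ 2)] at hclose
    exact Nat.le_of_mul_le_mul_left hclose (by positivity)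
  · rw [Finset.card_preimage, Finset.filter_true_of_mem]
    intro q hq
    obtain ⟨⟨x, hx⟩, ⟨y, hy⟩⟩ := hdvd q hq
    exact ⟨(x, y), Prod.ext hx.symm hy.symm⟩

theorem card_filter_gcd_eq_le (hS : IsPellCluster A B C S) (hA : 0 < A) (hB : 0 < B) (hC : 0 < C)
    (hAC : A.Coprime C) (hBC : B.Coprime C) (e : ℕ) :
    (S.filter fun q => q.1.gcd q.2 = e).card ≤ C.divisors.card := by
  obtain hempty | ⟨q₀, hq₀⟩ := (S.filter fun q => q.1.gcd q.2 = e).eq_empty_or_nonempty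
  · simp [hempty]
  obtain ⟨C', rfl⟩ : e ^ 2 ∣ C := by
    rw [Finset.mem_filter] at hq₀
    exact hq₀.2 ▸ gcd_sq_dvd_of_pell (hS.eqn q₀ hq₀.1)
  have he : 0 < e := Nat.pos_of_ne_zero fun h => by simp [h] at hC
  have hC'_dvd : C' ∣ e ^ 2 * C' := dvd_mul_left ..
  have hfilter := hS.subset (Finset.filter_subset (fun q => q.1.gcd q.2 = e) S)
  obtain ⟨T, hT, hcard, hmem⟩ := hfilter.exists_rescale (A' := A) (B' := B) (C' := C') he he
    (fun q hq => by
      obtain ⟨-, rfl⟩ := Finset.mem_filter.mp hq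
      exact ⟨Nat.gcd_dvd_left .., Nat.gcd_dvd_right ..⟩)
    (fun x y h => Nat.eq_of_mul_eq_mul_left (pow_pos he 2) (by linarith))
  rw [← hcard]
  refine (hT.card_le_of_primitive hA hB (Nat.pos_of_mul_pos_left hC)
    (hAC.coprime_dvd_right hC'_dvd) (hBC.coprime_dvd_right hC'_dvd) fun q hq => ?_).trans
    (Finset.card_le_card (Nat.divisors_subset_of_dvd hC.ne' hC'_dvd))
  have hgcd := (Finset.mem_filter.mp (hmem q hq)).2
  rwa [Nat.gcd_mul_left, Nat.mul_eq_left he.ne'] at hgcd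

theorem card_le_of_coprime (hS : IsPellCluster A B C S) (hA : 0 < A) (hB : 0 < B) (hC : 0 < C)
    (hAC : A.Coprime C) (hBC : B.Coprime C) : S.card ≤ C.divisors.card ^ 2 := by
  rw [sq]
  refine Finset.card_le_mul_card_image_of_maps_to (f := fun q => q.1.gcd q.2) (fun q hq => ?_) _
    fun e _ => hS.card_filter_gcd_eq_le hA hB hC hAC hBC e
  exact Nat.mem_divisors.mpr
    ⟨(dvd_pow_self _ two_ne_zero).trans (gcd_sq_dvd_of_pell (hS.eqn q hq)), hC.ne'⟩

end IsPellCluster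

/-- A prime `p` dividing `C` and one of `A`, `B` either divides all three coefficients or divides
`x` or `y` in every solution; in each case a factor `p` cancels. -/
theorem pell_exists_descent {A B C : ℕ} (hA : 0 < A) (hB : 0 < B) (hC : 0 < C)
    (h : ¬(A.Coprime C ∧ B.Coprime C)) :
    ∃ A' B' C' r s : ℕ, 0 < A' ∧ 0 < B' ∧ C' ∣ C ∧ C' < C ∧ 0 < r ∧ 0 < s ∧
      (∀ x y, A * x ^ 2 = B * y ^ 2 + C → r ∣ x ∧ s ∣ y) ∧
      ∀ x y, A * (r * x) ^ 2 = B * (s * y) ^ 2 + C → A' * x ^ 2 = B' * y ^ 2 + C' := by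
  obtain ⟨p, hp, hpAB, C', rfl⟩ : ∃ p : ℕ, p.Prime ∧ (p ∣ A ∨ p ∣ B) ∧ p ∣ C := by
    rw [not_and_or, Nat.Prime.not_coprime_iff_dvd, Nat.Prime.not_coprime_iff_dvd] at h
    obtain ⟨p, hp, hpA, hpC⟩ | ⟨p, hp, hpB, hpC⟩ := h
    exacts [⟨p, hp, .inl hpA, hpC⟩, ⟨p, hp, .inr hpB, hpC⟩]
  have hp_pos := hp.pos
  have hC'_dvd : C' ∣ p * C' := dvd_mul_left ..
  have hC'_lt : C' < p * C' := lt_mul_of_one_lt_left (Nat.pos_of_mul_pos_left hC) hp.one_lt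
  have cancel {k l : ℕ} (h : p * k = p * l) : k = l := Nat.eq_of_mul_eq_mul_left hp_pos h
  by_cases hpA : p ∣ A <;> by_cases hpB : p ∣ B
  · obtain ⟨A', rfl⟩ := hpA
    obtain ⟨B', rfl⟩ := hpB
    exact ⟨A', B', C', 1, 1, Nat.pos_of_mul_pos_left hA, Nat.pos_of_mul_pos_left hB, hC'_dvd,
      hC'_lt, one_pos, one_pos, fun x y _ => ⟨one_dvd x, one_dvd y⟩,
      fun x y h => cancel (by linarith)⟩
  · obtain ⟨A', rfl⟩ := hpA
    refine ⟨A', p * B, C', 1, p, Nat.pos_of_mul_pos_left hA, by positivity, hC'_dvd, hC'_lt,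
      one_pos, hp_pos, fun x y h => ⟨one_dvd x, ?_⟩, fun x y h => cancel (by linarith)⟩
    have hdvd : p ∣ B * y ^ 2 := (Nat.dvd_add_left (dvd_mul_right p C')).mp
      (h ▸ (dvd_mul_right p A').mul_right (x ^ 2))
    exact hp.dvd_of_dvd_pow ((hp.dvd_mul.mp hdvd).resolve_left hpB)
  · obtain ⟨B', rfl⟩ := hpB
    refine ⟨p * A, B', C', p, 1, by positivity, Nat.pos_of_mul_pos_left hB, hC'_dvd, hC'_lt,
      hp_pos, one_pos, fun x y h => ⟨?_, one_dvd y⟩, fun x y h => cancel (by linarith)⟩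
    have hdvd : p ∣ A * x ^ 2 :=
      h ▸ dvd_add ((dvd_mul_right p B').mul_right (y ^ 2)) (dvd_mul_right p C')
    exact hp.dvd_of_dvd_pow ((hp.dvd_mul.mp hdvd).resolve_left hpA)
  · exact absurd hpAB (not_or.mpr ⟨hpA, hpB⟩)

theorem IsPellCluster.card_le {A B C : ℕ} {S : Finset (ℕ × ℕ)} (hS : IsPellCluster A B C S)
    (hA : 0 < A) (hB : 0 < B) (hC : 0 < C) : S.card ≤ C.divisors.card ^ 2 := by
  induction C using Nat.strong_induction_on generalizing A B S with
  | _ C ih =>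
    by_cases hcop : A.Coprime C ∧ B.Coprime C
    · exact hS.card_le_of_coprime hA hB hC hcop.1 hcop.2
    obtain ⟨A', B', C', r, s, hA', hB', hdvd, hlt, hr, hs, hscale, heqn⟩ :=
      pell_exists_descent hA hB hC hcop
    obtain ⟨T, hT, hcard, -⟩ :=
      hS.exists_rescale hr hs (fun q hq => hscale _ _ (hS.eqn q hq)) heqn
    calc S.card = T.card := hcard.symm
      _ ≤ C'.divisors.card ^ 2 := ih C' hlt hT hA' hB' (Nat.pos_of_dvd_of_pos hdvd hC)
      _ ≤ C.divisors.card ^ 2 :=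
        Nat.pow_le_pow_left (Finset.card_le_card (Nat.divisors_subset_of_dvd hC.ne' hdvd)) 2

end Pell

section Collision

/-- A coincidence `x³ + y³ = z³ + t³` with `x + y < z + t`, in the coordinates `s = x + y`,
`s + 3j = z + t`, `a = |x - y|`, `b = |z - t|`. The parameter `m` is defined by `sq_eq`, and
`sum_mul` is then the equality of the two sums of cubes. -/
structure CubeCollision (j m s a b : ℕ) : Prop where
  j_pos : 0 < j
  sum_mul : s * m = 9 * j ^ 3 + 3 * j * b ^ 2
  sq_eq : a ^ 2 = b ^ 2 + 3 * s * j + 9 * j ^ 2 + m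

namespace CubeCollision

variable {j m s a b : ℕ}

theorem m_pos (H : CubeCollision j m s a b) : 0 < m := by
  have hj := H.j_pos
  exact Nat.pos_of_mul_pos_left (show 0 < s * m by rw [H.sum_mul]; positivity)

theorem pell (H : CubeCollision j m s a b) :
    m * a ^ 2 = (m + 9 * j ^ 2) * b ^ 2 + (27 * j ^ 4 + 9 * m * j ^ 2 + m ^ 2) := by
  linear_combination m * H.sq_eq + 3 * j * H.sum_mul

theorem three_mul_j_mul_sq (H : CubeCollision j m s a b) :
    3 * j * a ^ 2 = (m + 9 * j ^ 2) * s + (18 * j ^ 3 + 3 * m * j) := by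
  linarith [congrArg (3 * j * ·) H.sq_eq, H.sum_mul]

theorem three_mul_s_mul_j_le (H : CubeCollision j m s a b) : 3 * s * j ≤ a ^ 2 := by
  linarith [H.sq_eq, Nat.zero_le (b ^ 2), Nat.zero_le (9 * j ^ 2)]

theorem s_sq_mul_m_le (H : CubeCollision j m s a b) : s ^ 2 * m ≤ a ^ 4 := by
  have hsm : s * m ≤ 3 * j * a ^ 2 := by
    rw [H.three_mul_j_mul_sq]
    nlinarith
  calc s ^ 2 * m = s * (s * m) := by ring
    _ ≤ s * (3 * j * a ^ 2) := Nat.mul_le_mul_left s hsm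
    _ = 3 * s * j * a ^ 2 := by ring
    _ ≤ a ^ 2 * a ^ 2 := Nat.mul_le_mul_right _ H.three_mul_s_mul_j_le
    _ = a ^ 4 := by ring

theorem three_mul_mul_j_le {ℓ h : ℕ} (H : CubeCollision j m s a b) (hs : ℓ ≤ s) (ha : a ≤ h) :
    3 * ℓ * j ≤ h ^ 2 :=
  calc 3 * ℓ * j ≤ 3 * s * j := by gcongr
    _ ≤ a ^ 2 := H.three_mul_s_mul_j_le
    _ ≤ h ^ 2 := by gcongr

theorem sq_mul_m_le {ℓ h : ℕ} (H : CubeCollision j m s a b) (hs : ℓ ≤ s) (ha : a ≤ h) :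
    ℓ ^ 2 * m ≤ h ^ 4 :=
  calc ℓ ^ 2 * m ≤ s ^ 2 * m := by gcongr
    _ ≤ a ^ 4 := H.s_sq_mul_m_le
    _ ≤ h ^ 4 := by gcongr

theorem s_inj {s' : ℕ} (H : CubeCollision j m s a b) (H' : CubeCollision j m s' a b) : s = s' :=
  Nat.eq_of_mul_eq_mul_right H.m_pos (H.sum_mul.trans H'.sum_mul.symm)

theorem five_mul_sq_le {s' a' b' : ℕ} (H : CubeCollision j m s a b)
    (H' : CubeCollision j m s' a' b') (hs : 5 * s' ≤ 6 * s) : 5 * a' ^ 2 ≤ 6 * a ^ 2 := by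
  refine le_of_mul_le_mul_left (a := 3 * j) ?_ (mul_pos three_pos H.j_pos)
  have hmul : (m + 9 * j ^ 2) * (5 * s') ≤ (m + 9 * j ^ 2) * (6 * s) := Nat.mul_le_mul_left _ hs
  linarith [H.three_mul_j_mul_sq, H'.three_mul_j_mul_sq, Nat.zero_le (18 * j ^ 3 + 3 * m * j)]

end CubeCollision

theorem card_collision_sums_le {j m : ℕ} {T : Finset ℕ}
    (hT : ∀ s ∈ T, ∃ a b, CubeCollision j m s a b) (hclose : ∀ s ∈ T, ∀ s' ∈ T, 5 * s' ≤ 6 * s) :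
    T.card ≤ (27 * j ^ 4 + 9 * m * j ^ 2 + m ^ 2).divisors.card ^ 2 := by
  obtain rfl | ⟨s₀, hs₀⟩ := T.eq_empty_or_nonempty
  · simp
  choose! a b H using hT
  have hj := (H s₀ hs₀).j_pos
  have hm := (H s₀ hs₀).m_pos
  have hinj : Set.InjOn (fun s => (a s, b s)) T := by
    intro s hs s' hs' h
    obtain ⟨ha, hb⟩ := Prod.mk.inj h
    exact (H s hs).s_inj (ha ▸ hb ▸ H s' hs')
  have hcluster : IsPellCluster m (m + 9 * j ^ 2) (27 * j ^ 4 + 9 * m * j ^ 2 + m ^ 2)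
      (T.image fun s => (a s, b s)) := by
    constructor <;> simp only [Finset.forall_mem_image]
    · exact fun s hs => (H s hs).pell
    · exact fun s hs s' hs' => (H s hs).five_mul_sq_le (H s' hs') (hclose s hs s' hs')
  rw [← Finset.card_image_of_injOn hinj]
  exact hcluster.card_le hm (by positivity) (by positivity)

theorem exists_cubeCollision_of_add_lt {x y z t : ℕ} (h : x ^ 3 + y ^ 3 = z ^ 3 + t ^ 3)
    (hlt : x + y < z + t) :
    ∃ j m b : ℕ, CubeCollision j m (x + y) ((x : ℤ) - y).natAbs b := by
  have hZ : (x : ℤ) ^ 3 + (y : ℤ) ^ 3 = (z : ℤ) ^ 3 + (t : ℤ) ^ 3 := by exact_mod_cast h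
  set k : ℤ := z + t - (x + y) with hk
  set m : ℤ := (x - y) ^ 2 - (z - t) ^ 2 - (x + y) * k - k ^ 2 with hm
  have hsum : 3 * ((x + y) * m) = k ^ 3 + 3 * k * ((z : ℤ) - t) ^ 2 := by
    rw [hm, hk]
    linear_combination 4 * hZ
  obtain ⟨j, hj⟩ : (3 : ℤ) ∣ k :=
    Int.prime_three.dvd_of_dvd_pow (n := 3)
      ⟨(x + y) * m - k * ((z : ℤ) - t) ^ 2, by linear_combination -hsum⟩
  have hj_pos : 0 < j := by omega
  have hsum' : (x + y) * m = 9 * j ^ 3 + 3 * j * ((z : ℤ) - t) ^ 2 := by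
    rw [hj] at hsum
    linarith
  have hm_pos : 0 < m := by
    refine pos_of_mul_pos_right (a := (x + y : ℤ)) ?_ (by positivity)
    rw [hsum']
    positivity
  clear_value m
  lift j to ℕ using hj_pos.le
  lift m to ℕ using hm_pos.le
  refine ⟨j, m, ((z : ℤ) - t).natAbs, by exact_mod_cast hj_pos, ?_, ?_⟩
  · zify
    rw [sq_abs]
    exact hsum'
  · zify
    rw [sq_abs, sq_abs]
    rw [hj] at hm
    linear_combination -hm

end Collision

section Windows

/-- The cubes of the integers in the window `[N, N + h]` form a Sidon set. -/
def SidonCubes (N h : ℕ) : Prop :=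
  ∀ x ∈ Finset.Icc N (N + h), ∀ y ∈ Finset.Icc N (N + h), ∀ z ∈ Finset.Icc N (N + h),
    ∀ t ∈ Finset.Icc N (N + h), x ^ 3 + y ^ 3 = z ^ 3 + t ^ 3 → ({x, y} : Finset ℕ) = {z, t}

theorem pair_eq_of_add_eq_of_cube_add_eq {x y z t : ℕ} (hadd : x + y = z + t)
    (hcube : x ^ 3 + y ^ 3 = z ^ 3 + t ^ 3) : ({x, y} : Finset ℕ) = {z, t} := by
  have hcubeZ : (x : ℤ) ^ 3 + (y : ℤ) ^ 3 = (z : ℤ) ^ 3 + (t : ℤ) ^ 3 := by exact_mod_cast hcube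
  have ht : (t : ℤ) = x + y - z := by omega
  have hprod : 3 * ((x : ℤ) + y) * (((x : ℤ) - z) * (y - z)) = 0 := by
    rw [ht] at hcubeZ
    linear_combination -hcubeZ
  obtain hsum | hxz | hyz : 3 * ((x : ℤ) + y) = 0 ∨ (x : ℤ) - z = 0 ∨ (y : ℤ) - z = 0 := by
    simpa only [mul_eq_zero] using hprod
  · obtain ⟨rfl, rfl, rfl, rfl⟩ : x = 0 ∧ y = 0 ∧ z = 0 ∧ t = 0 := by omega
    rfl
  · obtain ⟨rfl, rfl⟩ : x = z ∧ y = t := by omega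
    rfl
  · obtain ⟨rfl, rfl⟩ : y = z ∧ x = t := by omega
    exact Finset.pair_comm x y

theorem exists_cubeCollision_of_not_sidonCubes {N h : ℕ} (hN : ¬SidonCubes N h) :
    ∃ j m s a b : ℕ, CubeCollision j m s a b ∧ s ∈ Finset.Icc (2 * N) (2 * (N + h)) ∧ a ≤ h := by
  simp only [SidonCubes, Finset.mem_Icc] at hN
  push Not at hN
  obtain ⟨x, hx, y, hy, z, hz, t, ht, hcube, hne⟩ := hN
  obtain hlt | heq | hlt := lt_trichotomy (x + y) (z + t)
  · obtain ⟨j, m, b, H⟩ := exists_cubeCollision_of_add_lt hcube hlt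
    exact ⟨j, m, _, _, b, H, by rw [Finset.mem_Icc]; omega, by omega⟩
  · exact absurd (pair_eq_of_add_eq_of_cube_add_eq heq hcube) hne
  · obtain ⟨j, m, b, H⟩ := exists_cubeCollision_of_add_lt hcube.symm hlt
    exact ⟨j, m, _, _, b, H, by rw [Finset.mem_Icc]; omega, by omega⟩

theorem card_windows_le {L h j m : ℕ} {F : Finset ℕ} (hF : F ⊆ Finset.Ico (8 * L) (9 * L))
    (hhL : 2 * h ≤ L)
    (hcoll : ∀ N ∈ F, ∃ s ∈ Finset.Icc (2 * N) (2 * (N + h)), ∃ a b, CubeCollision j m s a b) :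
    F.card ≤ (h + 1) * (27 * j ^ 4 + 9 * m * j ^ 2 + m ^ 2).divisors.card ^ 2 := by
  choose! s hs H using hcoll
  simp only [Finset.mem_Icc] at hs
  have hsums : (F.image s).card ≤ (27 * j ^ 4 + 9 * m * j ^ 2 + m ^ 2).divisors.card ^ 2 := by
    refine card_collision_sums_le (Finset.forall_mem_image.mpr H) ?_
    refine Finset.forall_mem_image.mpr fun N hN => Finset.forall_mem_image.mpr fun N' hN' => ?_
    have hNL := Finset.mem_Ico.mp (hF hN)
    have hNL' := Finset.mem_Ico.mp (hF hN')
    have hsN := hs N hN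
    have hsN' := hs N' hN'
    omega
  have hfibre (σ : ℕ) : (F.filter (s · = σ)).card ≤ h + 1 := by
    have hsub : F.filter (s · = σ) ⊆ Finset.Icc (σ / 2 - h) (σ / 2) := by
      intro N hN
      obtain ⟨hNF, rfl⟩ := Finset.mem_filter.mp hN
      have hsN := hs N hNF
      rw [Finset.mem_Icc]
      omega
    refine (Finset.card_le_card hsub).trans ?_
    rw [Nat.card_Icc]
    omega
  calc F.card ≤ (h + 1) * (F.image s).card :=
        Finset.card_le_mul_card_image _ _ fun σ _ => hfibre σ
    _ ≤ _ := Nat.mul_le_mul_left _ hsums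

theorem pell_const_le {L h j m : ℕ} (hL : 0 < L) (hhL : 2 * h ≤ L)
    (hj : 48 * L * j ≤ h ^ 2) (hm : 256 * L ^ 2 * m ≤ h ^ 4) :
    27 * j ^ 4 + 9 * m * j ^ 2 + m ^ 2 ≤ 37 * L ^ 4 := by
  have hh : h ≤ L := by omega
  have hjL : j ≤ L := by
    refine le_of_mul_le_mul_left (a := L) ?_ hL
    nlinarith [Nat.pow_le_pow_left hh 2]
  have hmL : m ≤ L ^ 2 := by
    refine le_of_mul_le_mul_left (a := L ^ 2) ?_ (by positivity)
    nlinarith [Nat.pow_le_pow_left hh 4]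
  calc 27 * j ^ 4 + 9 * m * j ^ 2 + m ^ 2 ≤ 27 * L ^ 4 + 9 * L ^ 2 * L ^ 2 + (L ^ 2) ^ 2 := by
        gcongr
    _ = 37 * L ^ 4 := by ring

theorem card_le_of_forall_not_sidonCubes {L h D : ℕ} (hL : 0 < L) (hhL : 2 * h ≤ L)
    (hD : ∀ n ≤ 37 * L ^ 4, n.divisors.card ≤ D)
    (hbad : ∀ N ∈ Finset.Ico (8 * L) (9 * L), ¬SidonCubes N h) :
    L ≤ (h + 1) * D ^ 2 * (h ^ 2 / (48 * L) * (h ^ 4 / (256 * L ^ 2))) := by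
  choose! j m s a b H hs ha using fun N hN => exists_cubeCollision_of_not_sidonCubes (hbad N hN)
  have hbounds (N) (hN : N ∈ Finset.Ico (8 * L) (9 * L)) :
      48 * L * j N ≤ h ^ 2 ∧ 256 * L ^ 2 * m N ≤ h ^ 4 := by
    have hLs : 16 * L ≤ s N := by
      linarith [(Finset.mem_Ico.mp hN).1, (Finset.mem_Icc.mp (hs N hN)).1]
    exact ⟨by linarith [(H N hN).three_mul_mul_j_le hLs (ha N hN)],
      by linarith [(H N hN).sq_mul_m_le hLs (ha N hN)]⟩
  let J := Finset.Icc 1 (h ^ 2 / (48 * L))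
  let M := Finset.Icc 1 (h ^ 4 / (256 * L ^ 2))
  have hmaps (N) (hN : N ∈ Finset.Ico (8 * L) (9 * L)) : (j N, m N) ∈ J ×ˢ M := by
    obtain ⟨hj, hm⟩ := hbounds N hN
    simp only [J, M, Finset.mem_product, Finset.mem_Icc,
      Nat.le_div_iff_mul_le (by positivity : 0 < 48 * L),
      Nat.le_div_iff_mul_le (by positivity : 0 < 256 * L ^ 2)]
    exact ⟨⟨(H N hN).j_pos, by linarith⟩, (H N hN).m_pos, by linarith⟩
  have hfibre (p : ℕ × ℕ) (hp : p ∈ J ×ˢ M) :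
      ((Finset.Ico (8 * L) (9 * L)).filter fun N => (j N, m N) = p).card ≤ (h + 1) * D ^ 2 := by
    obtain hempty | ⟨N₀, hN₀⟩ :=
      ((Finset.Ico (8 * L) (9 * L)).filter fun N => (j N, m N) = p).eq_empty_or_nonempty
    · simp only [hempty, Finset.card_empty, Nat.zero_le]
    obtain ⟨hN₀_mem, rfl⟩ := Finset.mem_filter.mp hN₀
    obtain ⟨hj₀, hm₀⟩ := hbounds N₀ hN₀_mem
    refine (card_windows_le (Finset.filter_subset _ _) hhL fun N hN => ?_).trans
      (Nat.mul_le_mul_left _ (Nat.pow_le_pow_left (hD _ (pell_const_le hL hhL hj₀ hm₀)) 2))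
    obtain ⟨hN, heq⟩ := Finset.mem_filter.mp hN
    obtain ⟨hj, hm⟩ := Prod.mk.inj heq
    exact ⟨s N, hs N hN, a N, b N, hj ▸ hm ▸ H N hN⟩
  calc L = (Finset.Ico (8 * L) (9 * L)).card := by rw [Nat.card_Ico]; omega
    _ ≤ (h + 1) * D ^ 2 * (J ×ˢ M).card :=
      Finset.card_le_mul_card_image_of_maps_to hmaps _ hfibre
    _ = _ := by simp only [J, M, Finset.card_product, Nat.card_Icc, Nat.add_sub_cancel]

theorem exists_sidonCubes {L h D : ℕ} (hL : 0 < L) (hhL : 2 * h ≤ L)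
    (hD : ∀ n ≤ 37 * L ^ 4, n.divisors.card ≤ D) (hlt : h ^ 7 * D ^ 2 < 6144 * L ^ 4) :
    ∃ N ∈ Finset.Ico (8 * L) (9 * L), SidonCubes N h := by
  by_contra! hbad
  have hpow : h ^ 6 * (h + 1) ≤ 2 * h ^ 7 := by
    obtain rfl | hh := h.eq_zero_or_pos
    · simp
    · rw [pow_succ h 6]
      nlinarith [pow_pos hh 6]
  set u := h ^ 2 / (48 * L)
  set v := h ^ 4 / (256 * L ^ 2)
  have hcount : L ≤ (h + 1) * D ^ 2 * (u * v) := card_le_of_forall_not_sidonCubes hL hhL hD hbad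
  have hle : 2 * (6144 * L ^ 4) ≤ 2 * (h ^ 7 * D ^ 2) :=
    calc 2 * (6144 * L ^ 4) = 48 * L * (256 * L ^ 2) * L := by ring
      _ ≤ 48 * L * (256 * L ^ 2) * ((h + 1) * D ^ 2 * (u * v)) := by gcongr
      _ = 48 * L * u * (256 * L ^ 2 * v) * ((h + 1) * D ^ 2) := by ring
      _ ≤ h ^ 2 * h ^ 4 * ((h + 1) * D ^ 2) := by gcongr <;> exact Nat.mul_div_le ..
      _ = h ^ 6 * (h + 1) * D ^ 2 := by ring
      _ ≤ 2 * h ^ 7 * D ^ 2 := by gcongr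
      _ = 2 * (h ^ 7 * D ^ 2) := by ring
  omega

end Windows

section DivisorBound

theorem add_one_le_mul_pow {b : ℝ} (hb : 1 < b) (a : ℕ) : (a : ℝ) + 1 ≤ b / (b - 1) * b ^ a := by
  have hb' : 0 < b - 1 := sub_pos.mpr hb
  have hbernoulli : 1 + a * (b - 1) ≤ b ^ a := by
    simpa using one_add_mul_le_pow (a := b - 1) (by linarith) a
  rw [div_mul_eq_mul_div, le_div_iff₀ hb']
  nlinarith [mul_le_mul_of_nonneg_left hbernoulli (zero_le_one.trans hb.le),
    mul_nonneg (Nat.cast_nonneg (α := ℝ) a) (sq_nonneg (b - 1))]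

theorem exists_add_one_le_pow_rpow {δ : ℝ} (hδ : 0 < δ) :
    ∃ c : ℝ, 1 ≤ c ∧ ∃ P : ℕ, ∀ p a : ℕ, 2 ≤ p →
      (a : ℝ) + 1 ≤ (if p < P then c else 1) * ((p : ℝ) ^ a) ^ δ := by
  set b : ℝ := 2 ^ δ
  have hb : 1 < b := Real.one_lt_rpow one_lt_two hδ
  obtain ⟨P, hP⟩ := exists_nat_gt ((2 : ℝ) ^ δ⁻¹)
  refine ⟨b / (b - 1), (one_le_div (sub_pos.mpr hb)).mpr (sub_le_self b zero_le_one), P, ?_⟩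
  intro p a hp
  rw [← Real.rpow_pow_comm p.cast_nonneg]
  split_ifs with hpP
  · have hbp : b ≤ (p : ℝ) ^ δ :=
      Real.rpow_le_rpow zero_le_two (by exact_mod_cast hp) hδ.le
    refine (add_one_le_mul_pow hb a).trans ?_
    have := sub_pos.mpr hb
    gcongr
  · have hPp : (2 : ℝ) ^ δ⁻¹ ≤ p := hP.le.trans (by exact_mod_cast not_lt.mp hpP)
    have htwo : (2 : ℝ) ≤ (p : ℝ) ^ δ :=
      (Real.rpow_inv_le_iff_of_pos zero_le_two p.cast_nonneg hδ).mp hPp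
    calc (a : ℝ) + 1 ≤ 2 ^ a := by exact_mod_cast Nat.lt_two_pow_self
      _ ≤ ((p : ℝ) ^ δ) ^ a := by gcongr
      _ = 1 * ((p : ℝ) ^ δ) ^ a := (one_mul _).symm

theorem natCast_rpow_eq_prod_primeFactors {n : ℕ} (hn : n ≠ 0) (δ : ℝ) :
    (n : ℝ) ^ δ = ∏ p ∈ n.primeFactors, ((p : ℝ) ^ n.factorization p) ^ δ := by
  rw [Real.finsetProd_rpow _ _ fun p _ => by positivity]
  congr 1
  exact_mod_cast (Nat.prod_factorization_pow_eq_self hn).symm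

theorem exists_card_divisors_le_mul_rpow {δ : ℝ} (hδ : 0 < δ) :
    ∃ K : ℝ, 0 ≤ K ∧ ∀ n : ℕ, (n.divisors.card : ℝ) ≤ K * (n : ℝ) ^ δ := by
  obtain ⟨c, hc, P, hcP⟩ := exists_add_one_le_pow_rpow hδ
  refine ⟨c ^ P, by positivity, fun n => ?_⟩
  obtain rfl | hn := eq_or_ne n 0
  · simp [hδ.ne']
  have hsmall : ∏ p ∈ n.primeFactors, (if p < P then c else 1) ≤ c ^ P := by
    rw [← Finset.prod_filter, Finset.prod_const]
    refine pow_le_pow_right₀ hc ?_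
    calc (n.primeFactors.filter (· < P)).card ≤ (Finset.range P).card :=
          Finset.card_le_card fun p hp => Finset.mem_range.mpr (Finset.mem_filter.mp hp).2
      _ = P := Finset.card_range P
  calc (n.divisors.card : ℝ) = ∏ p ∈ n.primeFactors, ((n.factorization p : ℝ) + 1) := by
        rw [Nat.card_divisors hn]
        push_cast
        rfl
    _ ≤ ∏ p ∈ n.primeFactors, (if p < P then c else 1) * ((p : ℝ) ^ n.factorization p) ^ δ :=
        Finset.prod_le_prod (fun p _ => by positivity) fun p hp =>
          hcP p _ (Nat.prime_of_mem_primeFactors hp).two_le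
    _ = (∏ p ∈ n.primeFactors, if p < P then c else 1) * (n : ℝ) ^ δ := by
        rw [Finset.prod_mul_distrib, natCast_rpow_eq_prod_primeFactors hn]
    _ ≤ c ^ P * (n : ℝ) ^ δ := by gcongr

end DivisorBound

section Asymptotics

open Filter

theorem eventually_const_mul_rpow_le {p q : ℝ} (hpq : p < q) (c : ℝ) :
    ∀ᶠ n : ℕ in atTop, c * (n : ℝ) ^ p ≤ (n : ℝ) ^ q := by
  have htend : Tendsto (fun n : ℕ => (n : ℝ) ^ (q - p)) atTop atTop :=
    (tendsto_rpow_atTop (sub_pos.mpr hpq)).comp tendsto_natCast_atTop_atTop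
  filter_upwards [htend.eventually_ge_atTop c, eventually_gt_atTop 0] with n hn hn_pos
  calc c * (n : ℝ) ^ p ≤ (n : ℝ) ^ (q - p) * (n : ℝ) ^ p := by gcongr
    _ = (n : ℝ) ^ q := by rw [← Real.rpow_add (by exact_mod_cast hn_pos), sub_add_cancel]

theorem eventually_card_divisors_le {δ : ℝ} (hδ : 0 < δ) (c k : ℕ) :
    ∀ᶠ L : ℕ in atTop, ∀ n ≤ c * L ^ k, (n.divisors.card : ℝ) ≤ (L : ℝ) ^ δ := by
  set η : ℝ := δ / (k + 1)
  have hη : 0 < η := by positivity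
  have hkη : k * η < δ := by
    have : (k + 1) * η = δ := mul_div_cancel₀ δ (by positivity)
    linarith
  obtain ⟨K, hK, hdiv⟩ := exists_card_divisors_le_mul_rpow hη
  filter_upwards [eventually_const_mul_rpow_le hkη (K * (c : ℝ) ^ η)] with L hL n hn
  calc (n.divisors.card : ℝ) ≤ K * (n : ℝ) ^ η := hdiv n
    _ ≤ K * ((c : ℝ) * (L : ℝ) ^ k) ^ η := by
        gcongr
        exact_mod_cast hn
    _ = K * (c : ℝ) ^ η * (L : ℝ) ^ (k * η) := by
        rw [Real.mul_rpow c.cast_nonneg (by positivity), ← Real.rpow_natCast_mul L.cast_nonneg,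
          mul_assoc]
    _ ≤ (L : ℝ) ^ δ := hL

theorem rpow_le_mul_rpow_of_le_mul {c x y p : ℝ} (hx : 0 < x) (hxy : x ≤ y) (hy : y ≤ c * x)
    (hp : p ≤ 1) : y ^ p ≤ c * x ^ p := by
  have hratio : 1 ≤ y / x := (one_le_div hx).mpr hxy
  calc y ^ p = (y / x) ^ p * x ^ p := by
        rw [← Real.mul_rpow (by positivity) hx.le, div_mul_cancel₀ y hx.ne']
    _ ≤ c * x ^ p := by
        gcongr
        calc (y / x) ^ p ≤ (y / x) ^ (1 : ℝ) := Real.rpow_le_rpow_of_exponent_le hratio hp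
          _ = y / x := Real.rpow_one _
          _ ≤ c := (div_le_iff₀ hx).mpr hy

theorem eventually_exists_sidonCubes {ε : ℝ} (hε : 0 < ε) :
    ∀ᶠ L : ℕ in atTop,
      ∃ N ∈ Finset.Ico (8 * L) (9 * L), SidonCubes N ⌊(L : ℝ) ^ ((4 : ℝ) / 7 - ε)⌋₊ := by
  filter_upwards [eventually_card_divisors_le hε 37 4, eventually_gt_atTop 0,
    eventually_const_mul_rpow_le (by linarith : (4 : ℝ) / 7 - ε < 1) 2] with L hdiv hL hsmall
  have hL_one : (1 : ℝ) ≤ L := by exact_mod_cast hL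
  have hh := Nat.floor_le (Real.rpow_nonneg L.cast_nonneg ((4 : ℝ) / 7 - ε))
  have hD := Nat.floor_le (Real.rpow_nonneg L.cast_nonneg ε)
  refine exists_sidonCubes (D := ⌊(L : ℝ) ^ ε⌋₊) hL ?_ (fun n hn => Nat.le_floor (hdiv n hn)) ?_
  · rw [Real.rpow_one] at hsmall
    exact_mod_cast (mul_le_mul_of_nonneg_left hh zero_le_two).trans hsmall
  have hle : (⌊(L : ℝ) ^ ((4 : ℝ) / 7 - ε)⌋₊ : ℝ) ^ 7 * (⌊(L : ℝ) ^ ε⌋₊ : ℝ) ^ 2 ≤ (L : ℝ) ^ 4 :=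
    calc _ ≤ ((L : ℝ) ^ ((4 : ℝ) / 7 - ε)) ^ 7 * ((L : ℝ) ^ ε) ^ 2 := by gcongr
      _ = (L : ℝ) ^ (4 - 5 * ε) := by
          rw [← Real.rpow_mul_natCast L.cast_nonneg, ← Real.rpow_mul_natCast L.cast_nonneg,
            ← Real.rpow_add (by positivity)]
          congr 1
          push_cast
          ring
      _ ≤ (L : ℝ) ^ (4 : ℝ) := Real.rpow_le_rpow_of_exponent_le hL_one (by linarith)
      _ = (L : ℝ) ^ 4 := by exact_mod_cast Real.rpow_natCast (L : ℝ) 4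
  have hle_nat : ⌊(L : ℝ) ^ ((4 : ℝ) / 7 - ε)⌋₊ ^ 7 * ⌊(L : ℝ) ^ ε⌋₊ ^ 2 ≤ L ^ 4 := by
    exact_mod_cast hle
  have : 0 < L ^ 4 := by positivity
  omega

end Asymptotics

/-- For every `ε > 0` there are infinitely many positive integers `N` such that
`{n³ : N ≤ n, (n : ℝ) ≤ N + N^(4/7 - ε)}` is a Sidon set. -/
theorem cubes_sidon_N_four_sevenths (ε : ℝ) (hε : 0 < ε) :
    ∀ N₀ : ℕ, ∃ N : ℕ, N₀ < N ∧ 0 < N ∧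
      ∀ x y z t : ℕ, 0 < x → 0 < y → 0 < z → 0 < t →
        N ≤ x → N ≤ y → N ≤ z → N ≤ t →
        (x : ℝ) ≤ N + (N : ℝ) ^ ((4 : ℝ) / 7 - ε) →
        (y : ℝ) ≤ N + (N : ℝ) ^ ((4 : ℝ) / 7 - ε) →
        (z : ℝ) ≤ N + (N : ℝ) ^ ((4 : ℝ) / 7 - ε) →
        (t : ℝ) ≤ N + (N : ℝ) ^ ((4 : ℝ) / 7 - ε) →
        x ^ 3 + y ^ 3 = z ^ 3 + t ^ 3 →
        ({x, y} : Finset ℕ) = {z, t} := by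
  intro N₀
  have hexp : (4 : ℝ) / 7 - ε < 4 / 7 - ε / 2 := by linarith
  obtain ⟨L, ⟨N, hN, hsidon⟩, hL₀, hpow⟩ :=
    ((eventually_exists_sidonCubes (half_pos hε)).and
      ((Filter.eventually_gt_atTop N₀).and (eventually_const_mul_rpow_le hexp 9))).exists
  rw [Finset.mem_Ico] at hN
  have hwindow : (N : ℝ) ^ ((4 : ℝ) / 7 - ε) ≤ (L : ℝ) ^ ((4 : ℝ) / 7 - ε / 2) :=
    (rpow_le_mul_rpow_of_le_mul (by exact_mod_cast hL₀.pos) (by exact_mod_cast (by omega : L ≤ N))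
      (by exact_mod_cast hN.2.le) (by linarith)).trans hpow
  have hmem {n : ℕ} (hle : N ≤ n) (hn : (n : ℝ) ≤ N + (N : ℝ) ^ ((4 : ℝ) / 7 - ε)) :
      n ∈ Finset.Icc N (N + ⌊(L : ℝ) ^ ((4 : ℝ) / 7 - ε / 2)⌋₊) := by
    refine Finset.mem_Icc.mpr ⟨hle, Nat.sub_le_iff_le_add'.mp (Nat.le_floor ?_)⟩
    rw [Nat.cast_sub hle]
    linarith
  exact ⟨N, by omega, by omega, fun x y z t _ _ _ _ hx hy hz ht hx' hy' hz' ht' =>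
    hsidon x (hmem hx hx') y (hmem hy hy') z (hmem hz hz') t (hmem ht ht')⟩
end

section
/- There is an absolute constant c > 0 such that for every positive integer N the set {n⁴ : n ∈ ℕ, N ≤ n and (n : ℝ) ≤ N + c·N^{3/5}} is a Sidon set; that is, every solution of x⁴ + y⁴ = z⁴ + t⁴ in positive integers with N ≤ x, y, z, t ≤ N + c·N^{3/5} (as reals) satisfies {x, y} = {z, t}. -/
/-!
With `m = (z + t) + (x + y)`, `k = (z + t) - (x + y)`, `D = (x - y)² - (z - t)²` and
`S = (x - y)² + (z - t)²`, the equation `x⁴ + y⁴ = z⁴ + t⁴` becomes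
`m k (m² + k² + 6 S) = (3 (m² + k²) + 2 S) D`. If `k = 0`, then `D = 0` and the two pairs coincide.

If `k > 0` and all variables lie in an interval `[L, L + H]` with `H` much smaller than `L`,
then `m² ≫ S`, and the relation forces `D ≈ m k / 3`. The error is measured by the integer
`R = 3 D - m k`, which is positive and close to `16 k S / (3 m)`. The error in this second
approximation is measured by the integer `W = 16 k S - 3 m R`, which is positive and close to
`3 R² / (8 k)`. Finally `V = 8 k W - 3 R²` is a positive integer with `m V = R (24 k³ + W)`, so that
`m ≤ R (24 k³ + W)`. Since `k ≪ S / m`, `R ≪ S² / m²` and `W ≪ S³ / m³`, this gives `m⁶ ≪ S⁵`,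
hence `L⁶ ≪ H¹⁰`.
-/

section CommRing

variable {α : Type*} [CommRing α]

/-- The equation `x⁴ + y⁴ = z⁴ + t⁴` in the coordinates `m = z + t + (x + y)`,
`k = z + t - (x + y)`, `D = (x - y)² - (z - t)²` and `S = (x - y)² + (z - t)²`. -/
def QuarticRelation (m k D S : α) : Prop :=
  m * k * (m ^ 2 + k ^ 2 + 6 * S) = (3 * (m ^ 2 + k ^ 2) + 2 * S) * D

/-- The numerator `R` of the error in the approximation `D ≈ m k / 3`. -/
def firstDefect (m k D : α) : α :=
  3 * D - m * k

/-- The numerator `W` of the error in the approximation `R ≈ 16 k S / (3 m)` of the first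
defect `R`. -/
def secondDefect (m k D S : α) : α :=
  16 * k * S - 3 * m * firstDefect m k D

/-- The numerator `V` of the error in the approximation `W ≈ 3 R² / (8 k)` of the second
defect `W`, where `R` is the first one. -/
def thirdDefect (m k D S : α) : α :=
  8 * k * secondDefect m k D S - 3 * firstDefect m k D ^ 2

namespace QuarticRelation

lemma of_pow_four_add_pow_four_eq {x y z t : α} (h : x ^ 4 + y ^ 4 = z ^ 4 + t ^ 4) :
    QuarticRelation (z + t + (x + y)) (z + t - (x + y))
      ((x - y) ^ 2 - (z - t) ^ 2) ((x - y) ^ 2 + (z - t) ^ 2) := by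
  unfold QuarticRelation
  linear_combination (-16) * h

variable {m k D S : α}

lemma firstDefect_mul (h : QuarticRelation m k D S) :
    firstDefect m k D * (3 * (m ^ 2 + k ^ 2) + 2 * S) = 16 * (m * k) * S := by
  unfold QuarticRelation at h
  unfold firstDefect
  linear_combination (-3) * h

lemma mul_secondDefect (h : QuarticRelation m k D S) :
    m * secondDefect m k D S = firstDefect m k D * (3 * k ^ 2 + 2 * S) := by
  unfold secondDefect
  linear_combination -h.firstDefect_mul

lemma mul_thirdDefect (h : QuarticRelation m k D S) :
    m * thirdDefect m k D S = firstDefect m k D * (24 * k ^ 3 + secondDefect m k D S) := by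
  have hW : secondDefect m k D S = 16 * k * S - 3 * m * firstDefect m k D := rfl
  unfold thirdDefect
  linear_combination 8 * k * h.mul_secondDefect - firstDefect m k D * hW

end QuarticRelation

end CommRing

section OrderedRing

variable {α : Type*} [CommRing α] [LinearOrder α] [IsStrictOrderedRing α]

namespace QuarticRelation

variable {m k D S : α}

lemma pos (h : QuarticRelation m k D S) (hm : 0 < m) (hk : 0 < k) (hS : 0 ≤ S) : 0 < D := by
  have hpos : 0 < (3 * (m ^ 2 + k ^ 2) + 2 * S) * D := by
    rw [← h]
    positivity
  exact pos_of_mul_pos_right hpos (by positivity)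

lemma firstDefect_pos (h : QuarticRelation m k D S) (hm : 0 < m) (hk : 0 < k) (hS : 0 < S) :
    0 < firstDefect m k D := by
  have hpos : 0 < firstDefect m k D * (3 * (m ^ 2 + k ^ 2) + 2 * S) := by
    rw [h.firstDefect_mul]
    positivity
  exact pos_of_mul_pos_left hpos (by positivity)

lemma secondDefect_pos (h : QuarticRelation m k D S) (hm : 0 < m) (hk : 0 < k) (hS : 0 < S) :
    0 < secondDefect m k D S := by
  have hR := h.firstDefect_pos hm hk hS
  have hpos : 0 < m * secondDefect m k D S := by
    rw [h.mul_secondDefect]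
    positivity
  exact pos_of_mul_pos_right hpos hm.le

lemma thirdDefect_pos (h : QuarticRelation m k D S) (hm : 0 < m) (hk : 0 < k) (hS : 0 < S) :
    0 < thirdDefect m k D S := by
  have hR := h.firstDefect_pos hm hk hS
  have hW := h.secondDefect_pos hm hk hS
  have hpos : 0 < m * thirdDefect m k D S := by
    rw [h.mul_thirdDefect]
    positivity
  exact pos_of_mul_pos_right hpos hm.le

lemma mul_le_three_mul (h : QuarticRelation m k D S) (hm : 0 < m) (hS : 0 ≤ S) (hDS : D ≤ S) :
    m * k ≤ 3 * S := by
  have hA : 0 < m ^ 2 + k ^ 2 + 6 * S := by positivity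
  refine le_of_mul_le_mul_right ?_ hA
  calc m * k * (m ^ 2 + k ^ 2 + 6 * S) = (3 * (m ^ 2 + k ^ 2) + 2 * S) * D := h
    _ ≤ (3 * (m ^ 2 + k ^ 2) + 2 * S) * S := by gcongr
    _ ≤ (3 * (m ^ 2 + k ^ 2) + 18 * S) * S := by gcongr; norm_num
    _ = 3 * S * (m ^ 2 + k ^ 2 + 6 * S) := by ring

lemma sq_mul_firstDefect_le (h : QuarticRelation m k D S) (hm : 0 < m) (hk : 0 < k)
    (hS : 0 < S) (hDS : D ≤ S) : m ^ 2 * firstDefect m k D ≤ 16 * S ^ 2 := by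
  have hR := h.firstDefect_pos hm hk hS
  have hmk := h.mul_le_three_mul hm hS.le hDS
  have hle : 3 * m ^ 2 ≤ 3 * (m ^ 2 + k ^ 2) + 2 * S := by linarith [sq_nonneg k]
  have : 3 * (m ^ 2 * firstDefect m k D) ≤ 3 * (16 * S ^ 2) := by
    calc 3 * (m ^ 2 * firstDefect m k D) = firstDefect m k D * (3 * m ^ 2) := by ring
      _ ≤ firstDefect m k D * (3 * (m ^ 2 + k ^ 2) + 2 * S) := by gcongr
      _ = 16 * (m * k) * S := h.firstDefect_mul
      _ ≤ 16 * (3 * S) * S := by gcongr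
      _ = 3 * (16 * S ^ 2) := by ring
  exact le_of_mul_le_mul_left this three_pos

lemma cube_mul_secondDefect_le (h : QuarticRelation m k D S) (hm : 0 < m) (hk : 0 < k)
    (hkm : k ≤ m) (hS : 0 < S) (hDS : D ≤ S) :
    m ^ 3 * secondDefect m k D S ≤ 176 * S ^ 3 := by
  have hk_sq : k ^ 2 ≤ 3 * S := by
    calc k ^ 2 = k * k := sq k
      _ ≤ m * k := by gcongr
      _ ≤ 3 * S := h.mul_le_three_mul hm hS.le hDS
  have hR_le := h.sq_mul_firstDefect_le hm hk hS hDS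
  calc m ^ 3 * secondDefect m k D S = m ^ 2 * (m * secondDefect m k D S) := by ring
    _ = m ^ 2 * firstDefect m k D * (3 * k ^ 2 + 2 * S) := by rw [h.mul_secondDefect]; ring
    _ ≤ 16 * S ^ 2 * (3 * (3 * S) + 2 * S) := by gcongr
    _ = 176 * S ^ 3 := by ring

end QuarticRelation

lemma eq_and_eq_or_of_add_eq_of_pow_four_add_eq {x y z t : α} (hsum : x + y = z + t)
    (h : x ^ 4 + y ^ 4 = z ^ 4 + t ^ 4) : x = z ∧ y = t ∨ x = t ∧ y = z := by
  have hrel := QuarticRelation.of_pow_four_add_pow_four_eq h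
  rw [QuarticRelation, hsum, sub_self, mul_zero, zero_mul, eq_comm, mul_eq_zero] at hrel
  have hsq : (x - y) ^ 2 = (z - t) ^ 2 := by
    rcases hrel with hzero | hdiff
    · have := sq_nonneg (z + t + (z + t))
      linarith [sq_nonneg (x - y), sq_nonneg (z - t)]
    · exact sub_eq_zero.mp hdiff
  rcases sq_eq_sq_iff_eq_or_eq_neg.mp hsq with hdiff | hdiff
  · left; constructor <;> linarith
  · right; constructor <;> linarith

end OrderedRing

lemma QuarticRelation.pow_six_le {m k D S : ℤ} (h : QuarticRelation m k D S) (hm : 0 < m)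
    (hk : 0 < k) (hkm : k ≤ m) (hS : 0 ≤ S) (hDS : D ≤ S) : m ^ 6 ≤ 13184 * S ^ 5 := by
  have hS' : 0 < S := (h.pos hm hk hS).trans_le hDS
  have hW := h.secondDefect_pos hm hk hS'
  have hmRW : m ≤ firstDefect m k D * (24 * k ^ 3 + secondDefect m k D S) := by
    rw [← h.mul_thirdDefect]
    exact le_mul_of_one_le_right hm.le (h.thirdDefect_pos hm hk hS')
  have hmk := h.mul_le_three_mul hm hS hDS
  have hR_le := h.sq_mul_firstDefect_le hm hk hS' hDS
  have hW_le := h.cube_mul_secondDefect_le hm hk hkm hS' hDS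
  calc m ^ 6 = m ^ 5 * m := by ring
    _ ≤ m ^ 5 * (firstDefect m k D * (24 * k ^ 3 + secondDefect m k D S)) := by gcongr
    _ = m ^ 2 * firstDefect m k D * (24 * (m * k) ^ 3 + m ^ 3 * secondDefect m k D S) := by ring
    _ ≤ 16 * S ^ 2 * (24 * (3 * S) ^ 3 + 176 * S ^ 3) := by gcongr
    _ = 13184 * S ^ 5 := by ring

lemma add_pow_six_le_of_pow_four_add_eq {x y z t : ℤ} (hxy : 0 ≤ x + y) (hzt : 0 ≤ z + t)
    (hne : x + y ≠ z + t) (h : x ^ 4 + y ^ 4 = z ^ 4 + t ^ 4) :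
    (z + t + (x + y)) ^ 6 ≤ 13184 * ((x - y) ^ 2 + (z - t) ^ 2) ^ 5 := by
  wlog hlt : x + y < z + t generalizing x y z t
  · rw [add_comm (z + t), add_comm ((x - y) ^ 2)]
    exact this hzt hxy hne.symm h.symm (hne.lt_or_gt.resolve_left hlt)
  · refine (QuarticRelation.of_pow_four_add_pow_four_eq h).pow_six_le ?_ ?_ ?_ (by positivity) ?_
    · linarith
    · linarith
    · linarith
    · linarith [sq_nonneg (z - t)]

lemma add_eq_add_of_mem_Icc_of_pow_four_add_eq {L H : ℝ} (hL : 0 ≤ L)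
    (hH : 103 * H ^ 10 < L ^ 6) {x y z t : ℤ}
    (hx : (x : ℝ) ∈ Set.Icc L (L + H)) (hy : (y : ℝ) ∈ Set.Icc L (L + H))
    (hz : (z : ℝ) ∈ Set.Icc L (L + H)) (ht : (t : ℝ) ∈ Set.Icc L (L + H))
    (h : x ^ 4 + y ^ 4 = z ^ 4 + t ^ 4) : x + y = z + t := by
  obtain ⟨hLx, hxH⟩ := hx
  obtain ⟨hLy, hyH⟩ := hy
  obtain ⟨hLz, hzH⟩ := hz
  obtain ⟨hLt, htH⟩ := ht
  have hxy : 0 ≤ x + y := by exact_mod_cast (by linarith : (0 : ℝ) ≤ x + y)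
  have hzt : 0 ≤ z + t := by exact_mod_cast (by linarith : (0 : ℝ) ≤ z + t)
  by_contra hne
  have hle : ((z : ℝ) + t + (x + y)) ^ 6 ≤ 13184 * (((x : ℝ) - y) ^ 2 + (z - t) ^ 2) ^ 5 := by
    exact_mod_cast add_pow_six_le_of_pow_four_add_eq hxy hzt hne h
  have hxy_sq : ((x : ℝ) - y) ^ 2 ≤ H ^ 2 := sq_le_sq' (by linarith) (by linarith)
  have hzt_sq : ((z : ℝ) - t) ^ 2 ≤ H ^ 2 := sq_le_sq' (by linarith) (by linarith)
  have : 4096 * L ^ 6 ≤ 4096 * (103 * H ^ 10) := by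
    calc 4096 * L ^ 6 = (4 * L) ^ 6 := by ring
      _ ≤ ((z : ℝ) + t + (x + y)) ^ 6 := by gcongr; linarith
      _ ≤ 13184 * (((x : ℝ) - y) ^ 2 + (z - t) ^ 2) ^ 5 := hle
      _ ≤ 13184 * (H ^ 2 + H ^ 2) ^ 5 := by gcongr
      _ = 4096 * (103 * H ^ 10) := by ring
  linarith

/-- There is an absolute constant `c > 0` such that for every positive integer `N`
the set `{n⁴ : N ≤ n, (n : ℝ) ≤ N + c·N^(3/5)}` is a Sidon set. -/
theorem quartics_sidon_N_three_fifths :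
    ∃ c : ℝ, 0 < c ∧ ∀ N : ℕ, 0 < N →
      ∀ x y z t : ℕ, 0 < x → 0 < y → 0 < z → 0 < t →
        N ≤ x → N ≤ y → N ≤ z → N ≤ t →
        (x : ℝ) ≤ N + c * (N : ℝ) ^ ((3 : ℝ) / 5) →
        (y : ℝ) ≤ N + c * (N : ℝ) ^ ((3 : ℝ) / 5) →
        (z : ℝ) ≤ N + c * (N : ℝ) ^ ((3 : ℝ) / 5) →
        (t : ℝ) ≤ N + c * (N : ℝ) ^ ((3 : ℝ) / 5) →
        x ^ 4 + y ^ 4 = z ^ 4 + t ^ 4 →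
        ({x, y} : Finset ℕ) = {z, t} := by
  refine ⟨1 / 2, by norm_num, fun N hN x y z t _ _ _ _ hx hy hz ht hx' hy' hz' ht' h ↦ ?_⟩
  have hpow : ((N : ℝ) ^ ((3 : ℝ) / 5)) ^ 10 = (N : ℝ) ^ 6 := by
    rw [← Real.rpow_mul_natCast N.cast_nonneg, ← Real.rpow_natCast]
    norm_num
  have hH : 103 * (1 / 2 * (N : ℝ) ^ ((3 : ℝ) / 5)) ^ 10 < (N : ℝ) ^ 6 := by
    have : (0 : ℝ) < (N : ℝ) ^ 6 := by positivity
    rw [mul_pow, hpow]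
    linarith
  have hmem {n : ℕ} (hle : N ≤ n) (hle' : (n : ℝ) ≤ N + 1 / 2 * (N : ℝ) ^ ((3 : ℝ) / 5)) :
      ((n : ℤ) : ℝ) ∈ Set.Icc (N : ℝ) (N + 1 / 2 * (N : ℝ) ^ ((3 : ℝ) / 5)) :=
    ⟨by exact_mod_cast hle, by exact_mod_cast hle'⟩
  have hint : (x : ℤ) ^ 4 + y ^ 4 = z ^ 4 + t ^ 4 := by exact_mod_cast h
  have hsum : (x : ℤ) + y = z + t := add_eq_add_of_mem_Icc_of_pow_four_add_eq N.cast_nonneg hH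
    (hmem hx hx') (hmem hy hy') (hmem hz hz') (hmem ht ht') hint
  rcases eq_and_eq_or_of_add_eq_of_pow_four_add_eq hsum hint with ⟨hxz, hyt⟩ | ⟨hxt, hyz⟩
  · rw [Nat.cast_inj.mp hxz, Nat.cast_inj.mp hyt]
  · rw [Nat.cast_inj.mp hxt, Nat.cast_inj.mp hyz, Finset.pair_comm]
end

section
/- There is an absolute constant c > 0 such that for every positive integer N the set {n⁴ : n ∈ ℕ, N ≤ n and (n : ℝ) ≤ N + c·N^{12/13}} is not a Sidon set; equivalently, the equation x⁴ + y⁴ = z⁴ + t⁴ has a nontrivial solution in positive integers (one with {x, y} ≠ {z, t}) satisfying N ≤ x, y, z, t ≤ N + c·N^{12/13} (as reals). -/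
/-!
In the unknowns `p ± q` and `r ± s` the equation `x⁴ + y⁴ = z⁴ + t⁴` becomes
`pq(p² + q²) = rs(r² + s²)`. There is a form `f` of degree 13 such that, writing `f(a, b) = p - q`
and `f(b, a) = s - r` with `p`, `r` odd in `a` and `q`, `s` odd in `b`, both sides split into the
same factors; hence `f(a, b)⁴ + f(b, -a)⁴ = f(a, -b)⁴ + f(b, a)⁴`. At `(a, b) = (m, 1)` the four
terms are, up to sign, values of monic polynomials of degree 13 in `m`, which lie within
`O(m ^ 12)` of `m ^ 13`. Choosing `m` slightly above `N ^ (1 / 13)` puts all of them between `N`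
and `N + O(N ^ (12 / 13))`.
-/

open Asymptotics Filter Polynomial

section

variable {R : Type*} [CommRing R]

/-- The cubic factor shared by `q` and the norm `r² + s²`, in the variables `x = a²` and `y = b²`;
with its arguments swapped it is the one shared by `r` and `p² + q²`. -/
def cubicForm (x y : R) : R := x ^ 3 - 2 * x ^ 2 * y + x * y ^ 2 + y ^ 3

/-- The common factor of `q` and `r`, in the variables `x = a²` and `y = b²`. -/
def symmCubicForm (x y : R) : R := (x + y) * (x ^ 2 - 3 * x * y + y ^ 2)

/-- The common factor of the norms `p² + q²` and `r² + s²`, in the variables `x = a²` and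
`y = b²`. -/
def symmQuarticForm (x y : R) : R := x ^ 4 - x ^ 3 * y + 5 * x ^ 2 * y ^ 2 - x * y ^ 3 + y ^ 4

/-- The cofactor of `a` in `p`, in the variables `x = a²` and `y = b²`; with its arguments swapped
it is the cofactor of `b` in `s`. -/
def sexticForm (x y : R) : R :=
  x ^ 6 + 2 * x ^ 5 * y - 3 * x ^ 4 * y ^ 2 + 7 * x ^ 3 * y ^ 3 - 12 * x ^ 2 * y ^ 4
    + 5 * x * y ^ 5 + y ^ 6

/-- The form `f` of degree 13 behind the parametric solution
`f(a, b)⁴ + f(b, -a)⁴ = f(a, -b)⁴ + f(b, a)⁴`. It is written as `p - q` with `p` odd in `a` and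
`q` odd in `b`, since this splitting carries the factorisations. -/
def tridecicForm (a b : R) : R :=
  a * sexticForm (a ^ 2) (b ^ 2)
    - b * (symmCubicForm (a ^ 2) (b ^ 2) * cubicForm (a ^ 2) (b ^ 2))

theorem symmCubicForm_comm (x y : R) : symmCubicForm x y = symmCubicForm y x := by
  simp only [symmCubicForm]
  ring

theorem symmQuarticForm_comm (x y : R) : symmQuarticForm x y = symmQuarticForm y x := by
  simp only [symmQuarticForm]
  ring

theorem mul_sexticForm_sq_add_mul_sq (x y : R) :
    x * sexticForm x y ^ 2 + y * (symmCubicForm x y * cubicForm x y) ^ 2 =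
      sexticForm y x * cubicForm y x * symmQuarticForm x y := by
  simp only [sexticForm, symmCubicForm, cubicForm, symmQuarticForm]
  ring

theorem sub_pow_four_add_add_pow_four {p q r s : R}
    (h : p * q * (p ^ 2 + q ^ 2) = r * s * (r ^ 2 + s ^ 2)) :
    (p - q) ^ 4 + (r + s) ^ 4 = (p + q) ^ 4 + (r - s) ^ 4 := by
  linear_combination -8 * h

theorem tridecicForm_pow_four_add_pow_four (a b : R) :
    tridecicForm a b ^ 4 + (-tridecicForm (-b) a) ^ 4 =
      tridecicForm a (-b) ^ 4 + (-tridecicForm b a) ^ 4 := by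
  set p := a * sexticForm (a ^ 2) (b ^ 2) with hp
  set q := b * (symmCubicForm (a ^ 2) (b ^ 2) * cubicForm (a ^ 2) (b ^ 2)) with hq
  set r := a * (symmCubicForm (b ^ 2) (a ^ 2) * cubicForm (b ^ 2) (a ^ 2)) with hr
  set s := b * sexticForm (b ^ 2) (a ^ 2) with hs
  have hx : tridecicForm a b = p - q := rfl
  have hy : -tridecicForm (-b) a = r + s := by
    rw [tridecicForm, even_two.neg_pow, hr, hs]
    ring
  have hz : tridecicForm a (-b) = p + q := by
    rw [tridecicForm, even_two.neg_pow, hp, hq]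
    ring
  have ht : -tridecicForm b a = r - s := neg_sub _ _
  have hpq : p ^ 2 + q ^ 2 = sexticForm (b ^ 2) (a ^ 2) * cubicForm (b ^ 2) (a ^ 2) *
      symmQuarticForm (a ^ 2) (b ^ 2) := by
    rw [← mul_sexticForm_sq_add_mul_sq]
    ring
  have hrs : r ^ 2 + s ^ 2 = sexticForm (a ^ 2) (b ^ 2) * cubicForm (a ^ 2) (b ^ 2) *
      symmQuarticForm (a ^ 2) (b ^ 2) := by
    rw [symmQuarticForm_comm, ← mul_sexticForm_sq_add_mul_sq]
    ring
  have hprod : p * q * (p ^ 2 + q ^ 2) = r * s * (r ^ 2 + s ^ 2) := by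
    rw [hpq, hrs, hp, hq, hr, hs, symmCubicForm_comm (b ^ 2)]
    ring
  rw [hx, hy, hz, ht, sub_pow_four_add_add_pow_four hprod]

theorem isMonicOfDegree_tridecicForm_X_C [Nontrivial R] (b : R) :
    IsMonicOfDegree (tridecicForm X (C b)) 13 := by
  refine IsMonicOfDegree.sub ?_ (Nat.lt_succ_of_le ?_) <;>
    simp only [isMonicOfDegree_iff, sexticForm, symmCubicForm, cubicForm]
  · constructor <;> compute_degree!
  · compute_degree

theorem isMonicOfDegree_neg_tridecicForm_C_X [Nontrivial R] (b : R) :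
    IsMonicOfDegree (-tridecicForm (C b) X) 13 := by
  rw [tridecicForm, neg_sub]
  refine IsMonicOfDegree.sub ?_ (Nat.lt_succ_of_le ?_) <;>
    simp only [isMonicOfDegree_iff, sexticForm, symmCubicForm, cubicForm]
  · constructor <;> compute_degree!
  · compute_degree

end

theorem isBigO_eval_sub_pow {𝕜 : Type*} [NormedField 𝕜] [LinearOrder 𝕜] [IsStrictOrderedRing 𝕜]
    [OrderTopology 𝕜] {p : 𝕜[X]} {d : ℕ} (hp : IsMonicOfDegree p (d + 1)) :
    (fun x ↦ p.eval x - x ^ (d + 1)) =O[atTop] fun x ↦ x ^ d := by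
  have hdeg : (p - X ^ (d + 1)).degree ≤ (X ^ d : 𝕜[X]).degree := by
    rw [degree_X_pow]
    exact degree_le_of_natDegree_le (Nat.lt_succ_iff.1 (hp.natDegree_sub_X_pow d.succ_ne_zero))
  simpa using isBigO_atTop_of_degree_le (p - X ^ (d + 1)) (X ^ d) hdeg

section

variable {α : Type*} [CommRing α] [LinearOrder α] [IsStrictOrderedRing α] {d : ℕ} {C r m v : α}

theorem pow_succ_le_of_abs_sub_pow_le (hC : 0 ≤ C) (hr : 0 ≤ r) (hm : r + C ≤ m)
    (hv : |v - m ^ (d + 1)| ≤ C * m ^ d) : r ^ (d + 1) ≤ v :=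
  calc
    r ^ (d + 1) = r * r ^ d := pow_succ' r d
    _ ≤ (m - C) * m ^ d := by gcongr <;> linarith
    _ ≤ v := by linarith [pow_succ' m d, (abs_le.1 hv).1]

theorem le_pow_succ_add_of_abs_sub_pow_le {K : α} (hC : 0 ≤ C) (hK : 0 ≤ K) (hr : 1 ≤ r)
    (hrm : r ≤ m) (hm : m ≤ r + K) (hv : |v - m ^ (d + 1)| ≤ C * m ^ d) :
    v ≤ r ^ (d + 1) + (K * (d + 1) + C) * (K + 1) ^ d * r ^ d := by
  have hm₀ : 0 ≤ m := by linarith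
  have hpow : m ^ (d + 1) - r ^ (d + 1) ≤ K * (d + 1) * m ^ d :=
    calc
      m ^ (d + 1) - r ^ (d + 1) ≤ |m - r| * (d + 1 : ℕ) * max |m| |r| ^ d :=
        (le_abs_self _).trans (abs_pow_sub_pow_le m r (d + 1))
      _ = (m - r) * (d + 1) * m ^ d := by
        rw [abs_of_nonneg (sub_nonneg.2 hrm), abs_of_nonneg hm₀, abs_of_nonneg (by linarith),
          max_eq_left hrm, Nat.cast_succ]
      _ ≤ K * (d + 1) * m ^ d := by gcongr; linarith
  have hmr : m ≤ (K + 1) * r := by nlinarith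
  calc
    v ≤ r ^ (d + 1) + (K * (d + 1) + C) * m ^ d := by linarith [(abs_le.1 hv).2]
    _ ≤ r ^ (d + 1) + (K * (d + 1) + C) * ((K + 1) * r) ^ d := by gcongr
    _ = r ^ (d + 1) + (K * (d + 1) + C) * (K + 1) ^ d * r ^ d := by rw [mul_pow, mul_assoc]

end

theorem exists_forall_mem_Icc_add_mul_rpow {ι : Type*} [Finite ι] {f : ι → ℕ → ℝ} {d : ℕ}
    (hf : ∀ i, (fun m ↦ f i m - (m : ℝ) ^ (d + 1)) =O[atTop] fun m ↦ (m : ℝ) ^ d)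
    {P : ℕ → Prop} (hP : ∀ᶠ m in atTop, P m) :
    ∃ c > 0, ∀ y : ℝ, 1 ≤ y →
      ∃ m, P m ∧ ∀ i, f i m ∈ Set.Icc y (y + c * y ^ ((d : ℝ) / (d + 1))) := by
  have := Fintype.ofFinite ι
  obtain ⟨C, hC, hfC⟩ := (isBigO_pi.2 hf).exists_pos
  obtain ⟨m₀, hm₀⟩ := eventually_atTop.1 (hfC.bound.and hP)
  obtain ⟨K, hK⟩ := exists_nat_ge (max C m₀)
  obtain ⟨hCK, hmK⟩ := max_le_iff.1 hK
  refine ⟨((K + 1) * (d + 1) + C) * (K + 1 + 1) ^ d, by positivity, fun y hy ↦ ?_⟩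
  have hy₀ : 0 ≤ y := zero_le_one.trans hy
  set r : ℝ := y ^ ((d + 1 : ℕ) : ℝ)⁻¹
  have hr : 1 ≤ r := Real.one_le_rpow hy (by positivity)
  have hry : r ^ (d + 1) = y := Real.rpow_inv_natCast_pow hy₀ d.succ_ne_zero
  have hrd : r ^ d = y ^ ((d : ℝ) / (d + 1)) := by
    rw [← Real.rpow_mul_natCast hy₀, inv_mul_eq_div, Nat.cast_succ]
  set m : ℕ := ⌈r⌉₊ + K with hm
  have hrm : r + K ≤ m := by rw [hm, Nat.cast_add]; gcongr; exact Nat.le_ceil r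
  have hmr : m ≤ r + (K + 1) := by
    rw [hm, Nat.cast_add]; linarith [Nat.ceil_lt_add_one (zero_le_one.trans hr)]
  obtain ⟨hbound, hPm⟩ := hm₀ m ((Nat.cast_le.1 hmK).trans (Nat.le_add_left _ _))
  refine ⟨m, hPm, fun i ↦ ?_⟩
  have hfi : |f i m - (m : ℝ) ^ (d + 1)| ≤ C * (m : ℝ) ^ d := by
    simpa using (norm_le_pi_norm _ i).trans hbound
  rw [← hrd, ← hry]
  exact ⟨pow_succ_le_of_abs_sub_pow_le hC.le (by linarith) (by linarith) hfi,
    le_pow_succ_add_of_abs_sub_pow_le hC.le (by positivity) hr (by linarith) hmr hfi⟩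

theorem exists_forall_natCast_eval_mem_Icc {ι : Type*} [Finite ι] {p : ι → ℤ[X]} {d : ℕ}
    (hp : ∀ i, IsMonicOfDegree (p i) (d + 1)) {P : ℕ → Prop} (hP : ∀ᶠ m in atTop, P m) :
    ∃ c > 0, ∀ N : ℕ, 0 < N → ∃ m, P m ∧ ∀ i, ∃ n : ℕ, (n : ℤ) = (p i).eval (m : ℤ) ∧
      (n : ℝ) ∈ Set.Icc (N : ℝ) (N + c * (N : ℝ) ^ ((d : ℝ) / (d + 1))) := by
  have hO (i) : (fun m : ℕ ↦ (((p i).eval (m : ℤ) : ℤ) : ℝ) - (m : ℝ) ^ (d + 1)) =O[atTop]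
      fun m ↦ (m : ℝ) ^ d := by
    have hmonic : IsMonicOfDegree ((p i).map (Int.castRingHom ℝ)) (d + 1) :=
      ⟨by rw [(hp i).monic.natDegree_map, (hp i).natDegree_eq], (hp i).monic.map _⟩
    simpa [Function.comp_def] using
      (isBigO_eval_sub_pow hmonic).comp_tendsto tendsto_natCast_atTop_atTop
  obtain ⟨c, hc, h⟩ := exists_forall_mem_Icc_add_mul_rpow hO hP
  refine ⟨c, hc, fun N hN ↦ ?_⟩
  obtain ⟨m, hPm, hm⟩ := h N (by exact_mod_cast hN)
  refine ⟨m, hPm, fun i ↦ ?_⟩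
  have hnonneg : 0 ≤ (p i).eval (m : ℤ) := by
    exact_mod_cast N.cast_nonneg.trans (hm i).1
  refine ⟨((p i).eval (m : ℤ)).toNat, Int.toNat_of_nonneg hnonneg, ?_⟩
  rw [← Int.cast_natCast (((p i).eval (m : ℤ)).toNat), Int.toNat_of_nonneg hnonneg]
  exact hm i

theorem eventually_eval_natCast_ne {R : Type*} [CommRing R] [IsDomain R] [CharZero R] {p q : R[X]}
    (hpq : p ≠ q) : ∀ᶠ m : ℕ in atTop, p.eval (m : R) ≠ q.eval (m : R) := by
  have hroots : ∀ᶠ z : R in cofinite, ¬(p - q).IsRoot z :=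
    (finite_setOfPred_isRoot (sub_ne_zero.2 hpq)).compl_mem_cofinite
  rw [← Nat.cofinite_eq_atTop]
  simpa only [IsRoot.def, eval_sub, sub_eq_zero] using
    (Nat.cast_injective (R := R)).tendsto_cofinite.eventually hroots

theorem exists_pow_add_pow_eq_of_isMonicOfDegree {p : Fin 4 → ℤ[X]} {d k : ℕ}
    (hp : ∀ i, IsMonicOfDegree (p i) (d + 1))
    (hpow : p 0 ^ k + p 1 ^ k = p 2 ^ k + p 3 ^ k) (hne : p 0 + p 1 ≠ p 2 + p 3) :
    ∃ c > 0, ∀ N : ℕ, 0 < N → ∃ n : Fin 4 → ℕ,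
      (∀ i, (n i : ℝ) ∈ Set.Icc (N : ℝ) (N + c * (N : ℝ) ^ ((d : ℝ) / (d + 1)))) ∧
      n 0 ^ k + n 1 ^ k = n 2 ^ k + n 3 ^ k ∧ n 0 + n 1 ≠ n 2 + n 3 := by
  obtain ⟨c, hc, h⟩ := exists_forall_natCast_eval_mem_Icc hp (eventually_eval_natCast_ne hne)
  refine ⟨c, hc, fun N hN ↦ ?_⟩
  obtain ⟨m, hm, hvalues⟩ := h N hN
  choose n hn hbounds using hvalues
  have heval := congrArg (eval (m : ℤ)) hpow
  simp only [eval_add, eval_pow, ← hn] at heval hm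
  exact ⟨n, hbounds, mod_cast heval, mod_cast hm⟩

/-- The parametric solution obtained from `tridecicForm` at `(X, 1)`, with signs chosen so that all
four polynomials are monic: they stand for `x`, `y`, `z`, `t` in this order. -/
noncomputable def tridecicSolution : Fin 4 → ℤ[X] :=
  ![tridecicForm X (C 1), -tridecicForm (C (-1)) X, tridecicForm X (C (-1)), -tridecicForm (C 1) X]

theorem isMonicOfDegree_tridecicSolution (i : Fin 4) :
    IsMonicOfDegree (tridecicSolution i) 13 := by
  fin_cases i
  exacts [isMonicOfDegree_tridecicForm_X_C 1, isMonicOfDegree_neg_tridecicForm_C_X (-1),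
    isMonicOfDegree_tridecicForm_X_C (-1), isMonicOfDegree_neg_tridecicForm_C_X 1]

theorem tridecicSolution_pow_four_add_pow_four :
    tridecicSolution 0 ^ 4 + tridecicSolution 1 ^ 4 =
      tridecicSolution 2 ^ 4 + tridecicSolution 3 ^ 4 := by
  simpa [tridecicSolution] using tridecicForm_pow_four_add_pow_four (X : ℤ[X]) 1

theorem tridecicSolution_add_ne_add :
    tridecicSolution 0 + tridecicSolution 1 ≠ tridecicSolution 2 + tridecicSolution 3 := by
  have hxy : (tridecicSolution 0 + tridecicSolution 1).eval 1 = 2 := by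
    change (tridecicForm X (C 1) + -tridecicForm (C (-1)) X).eval 1 = 2
    norm_num [tridecicForm, symmCubicForm, cubicForm, sexticForm]
  have hzt : (tridecicSolution 2 + tridecicSolution 3).eval 1 = -4 := by
    change (tridecicForm X (C (-1)) + -tridecicForm (C 1) X).eval 1 = -4
    norm_num [tridecicForm, symmCubicForm, cubicForm, sexticForm]
  intro h
  rw [h, hzt] at hxy
  norm_num at hxy

/-- There is an absolute constant `c > 0` such that for every positive integer `N`
the equation `x⁴ + y⁴ = z⁴ + t⁴` has a nontrivial solution with
`N ≤ x, y, z, t ≤ N + c·N^(12/13)`. -/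
theorem quartics_not_sidon_N_twelve_thirteenths :
    ∃ c : ℝ, 0 < c ∧ ∀ N : ℕ, 0 < N →
      ∃ x y z t : ℕ, 0 < x ∧ 0 < y ∧ 0 < z ∧ 0 < t ∧
        N ≤ x ∧ N ≤ y ∧ N ≤ z ∧ N ≤ t ∧
        (x : ℝ) ≤ N + c * (N : ℝ) ^ ((12 : ℝ) / 13) ∧
        (y : ℝ) ≤ N + c * (N : ℝ) ^ ((12 : ℝ) / 13) ∧
        (z : ℝ) ≤ N + c * (N : ℝ) ^ ((12 : ℝ) / 13) ∧
        (t : ℝ) ≤ N + c * (N : ℝ) ^ ((12 : ℝ) / 13) ∧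
        x ^ 4 + y ^ 4 = z ^ 4 + t ^ 4 ∧
        ({x, y} : Finset ℕ) ≠ {z, t} := by
  obtain ⟨c, hc, h⟩ := exists_pow_add_pow_eq_of_isMonicOfDegree isMonicOfDegree_tridecicSolution
    tridecicSolution_pow_four_add_pow_four tridecicSolution_add_ne_add
  have hexp : ((12 : ℕ) : ℝ) / ((12 : ℕ) + 1) = 12 / 13 := by norm_num
  rw [hexp] at h
  refine ⟨c, hc, fun N hN ↦ ?_⟩
  obtain ⟨n, hbounds, heq, hne⟩ := h N hN
  have hle (i) : N ≤ n i := Nat.cast_le.1 (hbounds i).1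
  have hpos (i) : 0 < n i := hN.trans_le (hle i)
  refine ⟨n 0, n 1, n 2, n 3, hpos 0, hpos 1, hpos 2, hpos 3, hle 0, hle 1, hle 2, hle 3,
    (hbounds 0).2, (hbounds 1).2, (hbounds 2).2, (hbounds 3).2, heq, fun hpair ↦ hne ?_⟩
  have : n 0 = n 2 ∧ n 1 = n 3 ∨ n 0 = n 3 ∧ n 1 = n 2 := by
    simpa [← Finset.coe_inj, Set.pair_eq_pair_iff] using hpair
  lia
end

section
/- The generalized Pell equation D² − 19·B² = 254 has infinitely many solutions in positive integers D, B; more precisely, for every positive integer B₀ there exist positive integers D, B with B > B₀ and D² − 19·B² = 254. -/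
/-!
If `x ^ 2 - d * y ^ 2 = N` and `a ^ 2 - d * b ^ 2 = 1`, then multiplying `x + y √d` by `a + b √d`
yields another solution with right-hand side `N`, by multiplicativity of the norm. For nonsquare
`d > 0` the powers of the fundamental unit have arbitrarily large second coordinate, so a single
solution with `N ≠ 0` produces arbitrarily large ones. For `d = 19`, `N = 254` such a solution is
`(27, 5)`.
-/

open Pell

section GeneralizedPell

variable {d : ℤ}

theorem pell_sq_sub_mul_sq_mul (a : Solution₁ d) (x y : ℤ) :
    (a.x * x + d * (a.y * y)) ^ 2 - d * (a.x * y + a.y * x) ^ 2 = x ^ 2 - d * y ^ 2 := by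
  linear_combination (x ^ 2 - d * y ^ 2) * a.prop

theorem pell_y_lt_x (hd : 0 < d) {a : Solution₁ d} (hx : 0 < a.x) : a.y < a.x := by
  have y_sq_lt_x_sq : a.y ^ 2 < a.x ^ 2 := by
    rw [a.prop_x]
    nlinarith [sq_nonneg a.y]
  exact lt_of_pow_lt_pow_left₀ 2 hx.le y_sq_lt_x_sq

theorem exists_pell_solution_x_pos_and_lt_y (hd : 0 < d) (hsq : ¬IsSquare d) (B : ℤ) :
    ∃ a : Solution₁ d, 0 < a.x ∧ B < a.y := by
  obtain ⟨ε, hε⟩ := IsFundamental.exists_of_not_isSquare hd hsq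
  obtain ⟨_, ⟨n, rfl⟩, hn⟩ :=
    not_bddAbove_iff.mp hε.y_strictMono.not_bddAbove_range_of_isSuccArchimedean B
  exact ⟨ε ^ n, Solution₁.x_zpow_pos hε.x_pos n, hn⟩

theorem exists_sq_sub_mul_sq_eq_and_lt_of_exists (hd : 0 < d) (hsq : ¬IsSquare d) {N : ℤ}
    (hN : N ≠ 0) (hsol : ∃ x y : ℤ, x ^ 2 - d * y ^ 2 = N) (B : ℤ) :
    ∃ x y : ℤ, 0 < x ∧ B < y ∧ x ^ 2 - d * y ^ 2 = N := by
  obtain ⟨x, y, hxy⟩ := hsol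
  obtain ⟨a, hax, hay⟩ := exists_pell_solution_x_pos_and_lt_y hd hsq (max B 0)
  obtain ⟨hB, hay_pos⟩ := max_lt_iff.mp hay
  have abs_add_abs_pos : 0 < |x| + |y| := by
    by_contra! h
    have hx : x = 0 := abs_eq_zero.mp (by linarith [abs_nonneg x, abs_nonneg y])
    have hy : y = 0 := abs_eq_zero.mp (by linarith [abs_nonneg x, abs_nonneg y])
    simp [← hxy, hx, hy] at hN
  refine ⟨a.x * |x| + d * (a.y * |y|), a.x * |y| + a.y * |x|, ?_, ?_, ?_⟩
  · calc
      0 < |x| + |y| := abs_add_abs_pos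
      _ ≤ a.x * |x| + d * a.y * |y| := add_le_add
        (le_mul_of_one_le_left (abs_nonneg x) hax)
        (le_mul_of_one_le_left (abs_nonneg y) (mul_pos hd hay_pos))
      _ = a.x * |x| + d * (a.y * |y|) := by ring
  · calc
      B < a.y := hB
      _ ≤ a.y * (|x| + |y|) := le_mul_of_one_le_right hay_pos.le abs_add_abs_pos
      _ = a.y * |y| + a.y * |x| := by ring
      _ ≤ a.x * |y| + a.y * |x| := by gcongr; exact (pell_y_lt_x hd hax).le
  · rw [pell_sq_sub_mul_sq_mul, sq_abs, sq_abs, hxy]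

end GeneralizedPell

/-- The generalized Pell equation `D² − 19B² = 254` has infinitely many solutions
in positive integers `D`, `B`. -/
theorem pell_D2_19B2_254_infinitely_many_solutions :
    ∀ B₀ : ℕ, 0 < B₀ → ∃ D B : ℕ, 0 < D ∧ B₀ < B ∧
      (D : ℤ) ^ 2 - 19 * (B : ℤ) ^ 2 = 254 := by
  intro B₀ _
  have prime_nineteen : Prime (19 : ℤ) := by norm_num
  obtain ⟨D, B, hD, hB, h⟩ := exists_sq_sub_mul_sq_eq_and_lt_of_exists (N := 254) (by norm_num)
    prime_nineteen.irreducible.not_isSquare (by norm_num) ⟨27, 5, by norm_num⟩ B₀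
  lift D to ℕ using hD.le
  lift B to ℕ using by lia
  exact ⟨D, B, mod_cast hD, mod_cast hB, h⟩
end

section
/- Let D and B be odd positive integers satisfying D² − 19·B² = 254. Then the positive integers x = (3B² + B + 42)/2, y = (3B² − B + 42)/2, z = (3B² + 36 + D)/2, t = (3B² + 36 − D)/2 are well defined (all four numerators are even and positive) and satisfy x³ + y³ = z³ + t³. -/
/-!
Write the four numbers as `(s ± b) / 2` and `(r ± d) / 2`, so that equality of the two sums of
cubes becomes `s ^ 3 + 3 * s * b ^ 2 = r ^ 3 + 3 * r * d ^ 2`. If `s = r + 3 * m`, the difference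
of the two sides is `3 * r * (3 * m * r + 9 * m ^ 2 + b ^ 2 - d ^ 2) + 9 * m * (b ^ 2 + 3 * m ^ 2)`.
Choosing `r = 3 * (b ^ 2 + 3 * m ^ 2)` makes the last summand `3 * m * r`, and cancelling `3 * r`
leaves the Pell-type equation `d ^ 2 = (9 * m + 1) * b ^ 2 + m * (27 * m ^ 2 + 9 * m + 1)`.
For `m = 2` this is `d ^ 2 = 19 * b ^ 2 + 254`.
-/

theorem add_pow_three_add_sub_pow_three {R : Type*} [CommRing R] (a b : R) :
    (a + b) ^ 3 + (a - b) ^ 3 = 2 * (a ^ 3 + 3 * a * b ^ 2) := by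
  ring

theorem sum_cubes_eq_sum_cubes_of_pell {R : Type*} [CommRing R] {m b d s r : R}
    (hs : s = r + 3 * m) (hr : r = 3 * b ^ 2 + 9 * m ^ 2)
    (hPell : d ^ 2 = (9 * m + 1) * b ^ 2 + m * (27 * m ^ 2 + 9 * m + 1)) :
    (s + b) ^ 3 + (s - b) ^ 3 = (r + d) ^ 3 + (r - d) ^ 3 := by
  have hd : d ^ 2 = 3 * m * r + 9 * m ^ 2 + b ^ 2 + m := by
    rw [hPell, hr]; ring
  have hcentred : s ^ 3 + 3 * s * b ^ 2 = r ^ 3 + 3 * r * d ^ 2 :=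
    calc s ^ 3 + 3 * s * b ^ 2
      _ = r ^ 3 + 3 * r * (3 * m * r + 9 * m ^ 2 + b ^ 2) + 3 * m * (3 * b ^ 2 + 9 * m ^ 2) := by
        rw [hs]; ring
      _ = r ^ 3 + 3 * r * (3 * m * r + 9 * m ^ 2 + b ^ 2 + m) := by rw [← hr]; ring
      _ = r ^ 3 + 3 * r * d ^ 2 := by rw [hd]
  rw [add_pow_three_add_sub_pow_three, add_pow_three_add_sub_pow_three, hcentred]

theorem abs_lt_of_pell {R : Type*} [CommRing R] [LinearOrder R] [IsStrictOrderedRing R]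
    {m b d : R} (hm : 1 ≤ m)
    (hPell : d ^ 2 = (9 * m + 1) * b ^ 2 + m * (27 * m ^ 2 + 9 * m + 1)) :
    |d| < 3 * b ^ 2 + 9 * m ^ 2 := by
  have : 0 < m := one_pos.trans_le hm
  have hm_sq : m ≤ m ^ 2 := le_self_pow₀ hm two_ne_zero
  refine abs_lt_of_sq_lt_sq ?_ (by positivity)
  calc d ^ 2
    _ = 9 * m * b ^ 2 + 1 * b ^ 2 + m * (27 * m ^ 2 + 9 * m + 1) := by rw [hPell]; ring
    _ ≤ 9 * m ^ 2 * b ^ 2 + m ^ 2 * b ^ 2 + m ^ 2 * (27 * m ^ 2 + 9 * m ^ 2 + m ^ 2) := by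
      gcongr <;> exact hm.trans hm_sq
    _ < 9 * m ^ 2 * b ^ 2 + m ^ 2 * b ^ 2 + m ^ 2 * (27 * m ^ 2 + 9 * m ^ 2 + m ^ 2)
        + (9 * (b ^ 2) ^ 2 + 44 * m ^ 2 * b ^ 2 + 44 * m ^ 4) :=
      lt_add_of_pos_right _ (by positivity)
    _ = (3 * b ^ 2 + 9 * m ^ 2) ^ 2 := by ring

theorem even_add_of_pell {m b d : ℕ} (hmb : Even (m * b))
    (hPell : d ^ 2 = (9 * m + 1) * b ^ 2 + m * (27 * m ^ 2 + 9 * m + 1)) :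
    Even (3 * b ^ 2 + 9 * m ^ 2 + d) := by
  have h_three : ¬Even 3 := by decide
  have h_nine : ¬Even 9 := by decide
  have h_twentyseven : ¬Even 27 := by decide
  have hm_or_hb : Even m ∨ Even b := Nat.even_mul.mp hmb
  have hd : Even d ↔ ((Even m → Even b) ↔ Even m) := by
    have hd_sq : Even d ↔ Even (d ^ 2) := (Nat.even_pow' two_ne_zero).symm
    rw [hd_sq, hPell]
    simp only [Nat.even_add, Nat.even_mul, Nat.even_pow, h_nine, h_twentyseven, Nat.not_even_one]
    tauto
  have hsum : Even (3 * b ^ 2 + 9 * m ^ 2 + d) ↔ ((Even b ↔ Even m) ↔ Even d) := by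
    simp [Nat.even_add, Nat.even_mul, Nat.even_pow, h_three, h_nine]
  tauto

theorem exists_pos_two_mul_add_eq {n k : ℕ} (hlt : k < n) (heven : Even (n + k)) :
    ∃ y, 0 < y ∧ 2 * y + k = n := by
  obtain ⟨j, hj⟩ := heven
  exact ⟨j - k, by lia, by lia⟩

theorem cubes_quadruple_from_pell_general {m b d : ℕ} (hm : 0 < m) (hmb : Even (m * b))
    (hPell : d ^ 2 = (9 * m + 1) * b ^ 2 + m * (27 * m ^ 2 + 9 * m + 1)) :
    ∃ x y z t : ℕ, 0 < x ∧ 0 < y ∧ 0 < z ∧ 0 < t ∧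
      2 * x = 3 * b ^ 2 + b + (9 * m ^ 2 + 3 * m) ∧
      2 * y + b = 3 * b ^ 2 + (9 * m ^ 2 + 3 * m) ∧
      2 * z = 3 * b ^ 2 + 9 * m ^ 2 + d ∧
      2 * t + d = 3 * b ^ 2 + 9 * m ^ 2 ∧
      x ^ 3 + y ^ 3 = z ^ 3 + t ^ 3 := by
  have hPell_int : (d : ℤ) ^ 2 = (9 * m + 1) * b ^ 2 + m * (27 * m ^ 2 + 9 * m + 1) :=
    mod_cast hPell
  have hd_lt : d < 3 * b ^ 2 + 9 * m ^ 2 := by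
    have := (le_abs_self _).trans_lt (abs_lt_of_pell (mod_cast hm) hPell_int)
    exact_mod_cast this
  have hb_lt : b < 3 * b ^ 2 + (9 * m ^ 2 + 3 * m) := by
    have hb_le_sq : b ≤ b ^ 2 := Nat.le_self_pow two_ne_zero b
    lia
  have hb_even : Even (3 * b ^ 2 + (9 * m ^ 2 + 3 * m) + b) := by
    have hsplit : 3 * b ^ 2 + (9 * m ^ 2 + 3 * m) + b =
        b * (b + 1) + 2 * (b ^ 2 + 3 * m ^ 2) + 3 * (m * (m + 1)) := by ring
    rw [hsplit]
    exact ((Nat.even_mul_succ_self b).add (even_two_mul _)).add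
      ((Nat.even_mul_succ_self m).mul_left 3)
  obtain ⟨y, hy_pos, hy⟩ := exists_pos_two_mul_add_eq hb_lt hb_even
  obtain ⟨t, ht_pos, ht⟩ := exists_pos_two_mul_add_eq hd_lt (even_add_of_pell hmb hPell)
  refine ⟨y + b, y, t + d, t, by positivity, hy_pos, by positivity, ht_pos,
    by linarith, hy, by linarith, ht, ?_⟩
  have hs : 2 * (y : ℤ) + b = 2 * t + d + 3 * m := by linarith
  have hcubes := sum_cubes_eq_sum_cubes_of_pell hs (mod_cast ht) hPell_int
  zify
  linarith

/-- If `D` and `B` are odd positive integers with `D² − 19B² = 254`, then the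
quadruple `x = (3B²+B+42)/2`, `y = (3B²−B+42)/2`, `z = (3B²+36+D)/2`,
`t = (3B²+36−D)/2` consists of well-defined positive integers (the divisions
by 2 are exact) and satisfies `x³ + y³ = z³ + t³`. -/
theorem cubes_quadruple_from_pell (D B : ℕ) (hD : 0 < D) (hB : 0 < B)
    (hDodd : Odd D) (hBodd : Odd B)
    (hPell : (D : ℤ) ^ 2 - 19 * (B : ℤ) ^ 2 = 254) :
    ∃ x y z t : ℕ, 0 < x ∧ 0 < y ∧ 0 < z ∧ 0 < t ∧
      2 * x = 3 * B ^ 2 + B + 42 ∧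
      2 * y + B = 3 * B ^ 2 + 42 ∧
      2 * z = 3 * B ^ 2 + 36 + D ∧
      2 * t + D = 3 * B ^ 2 + 36 ∧
      x ^ 3 + y ^ 3 = z ^ 3 + t ^ 3 := by
  have hPell_nat : D ^ 2 = 19 * B ^ 2 + 254 := by
    zify
    linarith
  exact cubes_quadruple_from_pell_general two_pos (even_two_mul B) hPell_nat
end

section
/- For all real numbers x ≥ y > 0 one has x + y ≤ (4(x³ + y³))^{1/3} ≤ x + y + (x − y)²/(x + y); equivalently, writing d = (4(x³ + y³))^{1/3} − (x + y), one has 0 ≤ d ≤ (x − y)²/(x + y). -/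
/-!
The excess of `4(x³ + y³)` over `(x + y)³` is exactly `3(x + y)(x - y)²`. It is nonnegative, which
gives the lower bound. Writing it as `3(x + y)² · b` with `b = (x - y)² / (x + y)` makes
`4(x³ + y³)` the first two terms of the binomial expansion of `(x + y + b)³`, and Bernoulli's
inequality gives the upper bound.
-/

theorem four_mul_pow_three_add_pow_three {R : Type*} [CommRing R] (x y : R) :
    4 * (x ^ 3 + y ^ 3) = (x + y) ^ 3 + 3 * (x + y) * (x - y) ^ 2 := by
  ring

theorem add_pow_three_le_four_mul_pow_three_add_pow_three {R : Type*} [CommRing R] [LinearOrder R]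
    [IsOrderedRing R] {x y : R} (h : 0 ≤ x + y) :
    (x + y) ^ 3 ≤ 4 * (x ^ 3 + y ^ 3) := by
  rw [four_mul_pow_three_add_pow_three]
  exact le_add_of_nonneg_right (mul_nonneg (mul_nonneg zero_le_three h) (sq_nonneg _))

theorem four_mul_pow_three_add_pow_three_le_add_div_pow_three {K : Type*} [Field K] [LinearOrder K]
    [IsStrictOrderedRing K] {x y : K} (h : 0 < x + y) :
    4 * (x ^ 3 + y ^ 3) ≤ (x + y + (x - y) ^ 2 / (x + y)) ^ 3 :=
  calc
    4 * (x ^ 3 + y ^ 3) = (x + y) ^ 3 + 3 * (x + y) * (x - y) ^ 2 :=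
      four_mul_pow_three_add_pow_three x y
    _ = (x + y) ^ 3 + (3 : ℕ) * (x + y) ^ (3 - 1) * ((x - y) ^ 2 / (x + y)) := by
      push_cast
      field_simp
    _ ≤ (x + y + (x - y) ^ 2 / (x + y)) ^ 3 :=
      pow_add_mul_le_add_pow h.le (by positivity) 3

theorem cube_root_sum_bounds_general {x y : ℝ} (h : 0 < x + y) :
    x + y ≤ (4 * (x ^ 3 + y ^ 3)) ^ ((1 : ℝ) / 3) ∧
    (4 * (x ^ 3 + y ^ 3)) ^ ((1 : ℝ) / 3) ≤ x + y + (x - y) ^ 2 / (x + y) := by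
  have lower := add_pow_three_le_four_mul_pow_three_add_pow_three h.le
  have upper := four_mul_pow_three_add_pow_three_le_add_div_pow_three h
  have radicand_nonneg : 0 ≤ 4 * (x ^ 3 + y ^ 3) := (pow_nonneg h.le 3).trans lower
  have bound_nonneg : 0 ≤ x + y + (x - y) ^ 2 / (x + y) := by positivity
  rw [one_div, Real.le_rpow_inv_iff_of_pos h.le radicand_nonneg three_pos,
    Real.rpow_inv_le_iff_of_pos radicand_nonneg bound_nonneg three_pos,
    Real.rpow_ofNat, Real.rpow_ofNat]
  exact ⟨lower, upper⟩

/-- For all reals `x ≥ y > 0` one has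
`x + y ≤ (4(x³+y³))^(1/3) ≤ x + y + (x−y)²/(x+y)`. -/
theorem cube_root_sum_bounds (x y : ℝ) (hy : 0 < y) (hxy : y ≤ x) :
    x + y ≤ (4 * (x ^ 3 + y ^ 3)) ^ ((1 : ℝ) / 3) ∧
    (4 * (x ^ 3 + y ^ 3)) ^ ((1 : ℝ) / 3) ≤ x + y + (x - y) ^ 2 / (x + y) :=
  cube_root_sum_bounds_general (add_pos (hy.trans_le hxy) hy)
end
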